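/- arXiv:1811.02031 — 4 statements merged into one kernel-verified Lean document; each statement's English description precedes it below -/
import Mathlib

section
/- Fix an odd prime ℓ and a non-square unit z ∈ ℤ_ℓ^×, and let Λ = diag(ℓ^{k₁}Λ₁, …, ℓ^{k_r}Λ_r) be a standard block form with 0 ≤ k₁ < ⋯ < k_r, block sizes n_i with n₁ + ⋯ + n_r = 4. Let χ = (−1/ℓ) ∈ {±1} be the Legendre symbol of −1 modulo ℓ. Then ∫_{E(Λ)} χ^{v_ℓ(det B)} dμ(B) = χ^{Σᵢ kᵢ nᵢ} · ℓ^{6k_r − 4} · (ℓ−1)(ℓ²−1)(ℓ³−1)(ℓ⁴−1) / ( ℓ^{E} · ∏_{i=1}^r #O(Λ_i, ℤ/ℓ) ), where E(Λ) = {B ∈ Sym₄(ℤ_ℓ) : ∃ D ∈ GL₄(ℤ_ℓ), B = D Λ Dᵀ}, and E = Σ_{1≤j<i≤r} n_i n_j (k_r + 1 + k_j) + Σ_{i=1}^r ( k_i n_i(n_i+1)/2 + k_r n_i(n_i−1)/2 ). (Every B in E(Λ) has det B ≠ 0, and v_ℓ(det B) = Σᵢ kᵢnᵢ on E(Λ).)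 -/
/-!
Write `Λ` as a diagonal form `diag(ℓ^{κ_a} u_a)` with unit coefficients and put `N = k_r + 1`.
Completing squares, with Hensel's lemma supplying square roots of units congruent to `1`, shows that
every symmetric matrix `S` with `S_{ab} ≡ Λ_{ab}` modulo `ℓ^{max(κ_a, κ_b)}` between different
blocks, and modulo `ℓ^{κ_a + 1}` inside a block, is congruent to `Λ` (`exists_congr_of_mem_nbhd`).
Hence `E(Λ)` is a union of residue classes modulo `ℓ^N` (`exists_congr_of_sub_dvd`), and its Haar
measure is the proportion of symmetric matrices over `R = ℤ/ℓ^N` that are congruent to `Λ mod ℓ^N`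
(`measure_symRed_preimage`).

That orbit is counted without determining the stabiliser of `Λ mod ℓ^N`. Let `U` be the box above,
viewed over `R`, and let `H` be the set of `h ∈ GL₄(R)` with `h Λ hᵀ ∈ U`. Every fibre of the orbit
map has the same number of elements, so `#H / #U = #GL₄(R) / #orbit` (`card_preimage_eq`). The
numbers `#U` and `#GL₄(R)` are elementary, and `H` consists of the matrices with
`ℓ^{κ_a - κ_b} ∣ h_{ab}` for `κ_a > κ_b` whose block-diagonal part modulo `ℓ` is an isometry of the
reduced unit forms (`conj_near_iff`). So `#H` is a power of `ℓ` times `∏ #O(Λ_i, ℤ/ℓ)` (`card_stab`,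
`card_levi`).

Since `det(D Λ Dᵀ)` is `ℓ^{Σ kᵢ nᵢ}` times a unit, the integrand is constant on `E(Λ)`. What remains
is the order of `GL₄(𝔽_ℓ)` and an identity between exponents of `ℓ` (`exponent_identity`).
-/

open Matrix MeasureTheory

noncomputable instance (p : ℕ) [Fact p.Prime] :
    MeasurableSpace (Matrix (Fin 4) (Fin 4) ℤ_[p]) := borel _

instance (p : ℕ) [Fact p.Prime] :
    BorelSpace (Matrix (Fin 4) (Fin 4) ℤ_[p]) := ⟨rfl⟩

/-- `Sym₄(ℤ_ℓ)`: the compact additive group of symmetric `4×4` matrices over `ℤ_ℓ`. -/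
abbrev Sym4 (ℓ : ℕ) [Fact ℓ.Prime] := {A : Matrix (Fin 4) (Fin 4) ℤ_[ℓ] // A.IsSymm}

/-- The standard block form `Λ = diag(ℓ^{k₁}Λ₁, …, ℓ^{k_r}Λ_r)`, indexed by `Σ i, Fin (n i)`. -/
noncomputable def stdBlockForm (ℓ : ℕ) [Fact ℓ.Prime] (r : ℕ) (k : Fin r → ℕ)
    (n : Fin r → ℕ) (Λb : ∀ i : Fin r, Matrix (Fin (n i)) (Fin (n i)) ℤ_[ℓ]) :
    Matrix ((i : Fin r) × Fin (n i)) ((i : Fin r) × Fin (n i)) ℤ_[ℓ] :=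
  Matrix.blockDiagonal' fun i => (ℓ : ℤ_[ℓ]) ^ (k i) • Λb i

/-! ### Reductions of `ℤ_ℓ` modulo powers of `ℓ` -/

section Padic
variable {ℓ : ℕ} [Fact ℓ.Prime]

/-- For odd `ℓ`, two units congruent modulo `ℓ` differ by the square of a unit (Hensel). -/
theorem exists_sq_mul_eq (hℓ : ℓ ≠ 2) {u v : ℤ_[ℓ]} (hu : IsUnit u) (h : (ℓ : ℤ_[ℓ]) ∣ v - u) :
    ∃ s : ℤ_[ℓ], IsUnit s ∧ s * s * u = v := by
  obtain ⟨w, hw⟩ := hu.exists_right_inv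
  obtain ⟨x, hx⟩ := h
  have h2 : IsUnit (2 : ℤ_[ℓ]) := by
    have : ¬ ℓ ∣ 2 := fun h => hℓ ((Nat.prime_dvd_prime_iff_eq Fact.out Nat.prime_two).1 h)
    rw [PadicInt.isUnit_iff]
    by_contra hne
    have h3 := (PadicInt.norm_int_lt_one_iff_dvd (p := ℓ) 2).1
      (by exact_mod_cast lt_of_le_of_ne (PadicInt.norm_le_one (2 : ℤ_[ℓ])) hne)
    exact this (by exact_mod_cast h3)
  have hF : ‖(Polynomial.aeval (1 : ℤ_[ℓ])) (Polynomial.X ^ 2 - Polynomial.C (v * w) :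
      Polynomial ℤ_[ℓ])‖ < ‖(Polynomial.aeval (1 : ℤ_[ℓ])) (Polynomial.derivative
      (Polynomial.X ^ 2 - Polynomial.C (v * w) : Polynomial ℤ_[ℓ]))‖ ^ 2 := by
    have e1 : (Polynomial.aeval (1 : ℤ_[ℓ])) (Polynomial.derivative
      (Polynomial.X ^ 2 - Polynomial.C (v * w) : Polynomial ℤ_[ℓ])) = 2 := by simp [one_add_one_eq_two]
    have e2 : (Polynomial.aeval (1 : ℤ_[ℓ])) (Polynomial.X ^ 2 - Polynomial.C (v * w) :
      Polynomial ℤ_[ℓ]) = ℓ * (- x * w) := by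
      simp
      linear_combination -hw - w * hx
    rw [e1, e2, PadicInt.isUnit_iff.1 h2, one_pow]
    exact PadicInt.norm_lt_one_iff_dvd _ |>.2 (Dvd.intro _ rfl)
  obtain ⟨s, hs, -⟩ := hensels_lemma hF
  have hs' : s ^ 2 = v * w := by simpa [sub_eq_zero] using hs
  have key : s * s * u = v := by linear_combination u * hs' + v * hw
  refine ⟨s, ?_, key⟩
  have hv : IsUnit v := by
    by_contra hv
    rw [PadicInt.not_isUnit_iff, PadicInt.norm_lt_one_iff_dvd] at hv
    have : (ℓ : ℤ_[ℓ]) ∣ u := by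
      have := dvd_sub hv (Dvd.intro x hx.symm)
      simpa using this
    rw [← PadicInt.norm_lt_one_iff_dvd, PadicInt.isUnit_iff.1 hu] at this
    exact lt_irrefl _ this
  rw [← key] at hv
  exact isUnit_of_mul_isUnit_left (isUnit_of_mul_isUnit_left hv)

theorem pow_dvd_toZModPow {N j : ℕ} (hj : j ≤ N) (x : ℤ_[ℓ]) :
    (ℓ : ZMod (ℓ ^ N)) ^ j ∣ PadicInt.toZModPow N x ↔ (ℓ : ℤ_[ℓ]) ^ j ∣ x := by
  constructor
  · rintro ⟨y, hy⟩
    obtain ⟨y, rfl⟩ := ZMod.ringHom_surjective (PadicInt.toZModPow (p := ℓ) N) y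
    have : x - ℓ ^ j * y ∈ RingHom.ker (PadicInt.toZModPow (p := ℓ) N) := by
      simp [RingHom.mem_ker, hy]
    rw [PadicInt.ker_toZModPow, Ideal.mem_span_singleton] at this
    have h2 := (pow_dvd_pow (ℓ : ℤ_[ℓ]) hj).trans this
    simpa using dvd_add h2 (Dvd.intro y rfl)
  · intro h
    simpa using map_dvd (PadicInt.toZModPow (p := ℓ) N) h

theorem pow_dvd_toZModPow_sub {N j : ℕ} (hj : j ≤ N) (x y : ℤ_[ℓ]) :
    (ℓ : ZMod (ℓ ^ N)) ^ j ∣ PadicInt.toZModPow N x - PadicInt.toZModPow N y ↔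
      (ℓ : ℤ_[ℓ]) ^ j ∣ x - y := by
  rw [← map_sub, pow_dvd_toZModPow hj]

theorem toZMod_eq_zero_iff (x : ℤ_[ℓ]) : PadicInt.toZMod x = 0 ↔ (ℓ : ℤ_[ℓ]) ∣ x := by
  rw [← RingHom.mem_ker, PadicInt.ker_toZMod, PadicInt.maximalIdeal_eq_span_p,
    Ideal.mem_span_singleton]

/-- Reduction `ℤ/ℓ^N → ℤ/ℓ` for `N ≥ 1`. -/
abbrev redMod (ℓ : ℕ) {N : ℕ} (hN : N ≠ 0) : ZMod (ℓ ^ N) →+* ZMod ℓ :=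
  ZMod.castHom (dvd_pow_self ℓ hN) (ZMod ℓ)

theorem redMod_toZModPow {N : ℕ} (hN : N ≠ 0) (x : ℤ_[ℓ]) :
    redMod ℓ hN (PadicInt.toZModPow N x) = PadicInt.toZMod x := by
  obtain ⟨n, -, hn⟩ := PadicInt.exists_mem_range x
  rw [PadicInt.maximalIdeal_eq_span_p, Ideal.mem_span_singleton] at hn
  obtain ⟨y, hy⟩ := hn
  obtain rfl : x = n + ℓ * y := by rw [← hy]; ring
  simp only [map_add, map_mul, map_natCast, CharP.cast_eq_zero, zero_mul]

theorem isUnit_toZModPow {N : ℕ} (hN : N ≠ 0) (x : ℤ_[ℓ]) :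
    IsUnit (PadicInt.toZModPow N x) ↔ IsUnit x := by
  refine ⟨fun h => ?_, fun h => h.map _⟩
  by_contra hx
  rw [PadicInt.not_isUnit_iff, PadicInt.norm_lt_one_iff_dvd, ← toZMod_eq_zero_iff,
    ← redMod_toZModPow hN] at hx
  exact (h.map (redMod ℓ hN)).ne_zero hx

theorem isUnit_toZMod (x : ℤ_[ℓ]) : IsUnit (PadicInt.toZMod x) ↔ IsUnit x := by
  refine ⟨fun h => ?_, fun h => h.map _⟩
  by_contra hx
  rw [PadicInt.not_isUnit_iff, PadicInt.norm_lt_one_iff_dvd, ← toZMod_eq_zero_iff] at hx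
  exact h.ne_zero hx

theorem redMod_eq_iff {N : ℕ} (hN : N ≠ 0) (x y : ZMod (ℓ ^ N)) :
    redMod ℓ hN x = redMod ℓ hN y ↔ (ℓ : ZMod (ℓ ^ N)) ∣ x - y := by
  obtain ⟨x, rfl⟩ := ZMod.ringHom_surjective (PadicInt.toZModPow (p := ℓ) N) x
  obtain ⟨y, rfl⟩ := ZMod.ringHom_surjective (PadicInt.toZModPow (p := ℓ) N) y
  have := pow_dvd_toZModPow_sub (ℓ := ℓ) (Nat.one_le_iff_ne_zero.2 hN) x y
  rw [pow_one, pow_one] at this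
  rw [redMod_toZModPow, redMod_toZModPow, this, ← toZMod_eq_zero_iff, map_sub, sub_eq_zero]

end Padic

/-! ### A neighbourhood of a diagonal form inside its congruence class -/

section Neighbourhood
variable {ℓ : ℕ} [Fact ℓ.Prime] {ι : Type*} [Fintype ι] [DecidableEq ι]

/-- The diagonal form `diag(ℓ^{κ a} u_a)`. -/
noncomputable def diagForm (ℓ : ℕ) [Fact ℓ.Prime] (κ : ι → ℕ) (u : ι → ℤ_[ℓ]) : Matrix ι ι ℤ_[ℓ] :=
  Matrix.diagonal fun a => (ℓ : ℤ_[ℓ]) ^ κ a * u a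

/-- The exponents `f a b` for which the box of matrices `S` with `S a b ≡ diagForm a b` modulo
`ℓ^(f a b)` is the neighbourhood of `diagForm ℓ κ u` used for counting: one more than `κ a` inside
a block of constant `κ`, and `max (κ a) (κ b)` between different blocks. -/
def nbhdExp (κ : ι → ℕ) (a b : ι) : ℕ := max (κ a) (κ b) + if κ a = κ b then 1 else 0

/-- The identity matrix with column `a` replaced by `v` acts on the left by a combined scaling of
row `a` and addition of multiples of row `a` to the other rows. -/
theorem updateCol_one_mul (a : ι) (v : ι → ℤ_[ℓ]) (M : Matrix ι ι ℤ_[ℓ]) (b c : ι) :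
    ((1 : Matrix ι ι ℤ_[ℓ]).updateCol a v * M) b c =
      v b * M a c + if b = a then 0 else M b c := by
  rw [Matrix.mul_apply, ← Finset.add_sum_erase _ _ (Finset.mem_univ a)]
  congr 1
  · simp
  · rw [Finset.sum_congr rfl (g := fun x => if b = x then M x c else 0)]
    · rw [Finset.sum_ite_eq]
      by_cases h : b = a <;> simp [h]
    · intro x hx
      rw [Matrix.updateCol_ne (Finset.ne_of_mem_erase hx), Matrix.one_apply]
      simp

theorem det_updateCol_one (a : ι) (v : ι → ℤ_[ℓ]) :
    ((1 : Matrix ι ι ℤ_[ℓ]).updateCol a v).det = v a := by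
  rw [← Matrix.cramer_apply, Matrix.cramer_one]; rfl

/-- Every symmetric matrix in the `nbhdExp` box around `diagForm ℓ κ u` is congruent to it.
Induction on the set `T` of indices at which the rows of `S` are not yet those of the diagonal form:
completing the square at one index of `T`, by the elementary matrix with a single nontrivial column,
makes that row diagonal and stays inside the box. -/
theorem exists_congr_of_mem_nbhd (hℓ : ℓ ≠ 2) (κ : ι → ℕ) (u : ι → ℤ_[ℓ]) (hu : ∀ a, IsUnit (u a))
    (T : Finset ι) : ∀ S : Matrix ι ι ℤ_[ℓ], S.IsSymm →
      (∀ a b, (ℓ : ℤ_[ℓ]) ^ nbhdExp κ a b ∣ S a b - diagForm ℓ κ u a b) →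
      (∀ a ∉ T, ∀ b, S a b = diagForm ℓ κ u a b) →
      ∃ D : Matrix ι ι ℤ_[ℓ], IsUnit D.det ∧ S = D * diagForm ℓ κ u * Dᵀ := by
  induction T using Finset.induction_on with
  | empty =>
    intro S _ _ h
    refine ⟨1, by simp, ?_⟩
    ext a b
    simp [h a (by simp) b]
  | insert a T ha ih =>
    intro S hS hnear hT
    have hne : ∀ b, b ≠ a → ∃ y, S b a = (ℓ : ℤ_[ℓ]) ^ nbhdExp κ b a * y := by
      intro b hb
      have := hnear b a
      rwa [diagForm, Matrix.diagonal_apply_ne _ hb, sub_zero] at this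
    obtain ⟨x, hx⟩ := hnear a a
    have hx' : S a a = ℓ ^ κ a * (u a + ℓ * x) := by
      have h1 : nbhdExp κ a a = κ a + 1 := by simp [nbhdExp]
      rw [h1, diagForm, Matrix.diagonal_apply_eq] at hx
      linear_combination hx
    obtain ⟨s, hs, hsu⟩ := exists_sq_mul_eq hℓ (hu a) (v := u a + ℓ * x) ⟨x, by ring⟩
    obtain ⟨s', hs'⟩ := hs.exists_right_inv
    obtain ⟨u', hu'⟩ := (hu a).exists_right_inv
    choose! y hy using hne
    have hfle : ∀ b, κ a ≤ nbhdExp κ b a := fun b => by unfold nbhdExp; omega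
    -- `v` is column `a` of `S` divided by `d * s`, where `S a a = d * s ^ 2`
    let d : ℤ_[ℓ] := ℓ ^ κ a * u a
    let v : ι → ℤ_[ℓ] := fun b => if b = a then s else ℓ ^ (nbhdExp κ b a - κ a) * y b * u' * s'
    have hva : v a = s := by simp [v]
    have hvb : ∀ b, b ≠ a → v b = ℓ ^ (nbhdExp κ b a - κ a) * y b * u' * s' :=
      fun b hb => by simp [v, hb]
    have hvd : ∀ b, v b * d * s = S b a := by
      intro b
      by_cases hb : b = a
      · subst hb; rw [hva, hx', ← hsu]; ring
      · rw [hvb b hb, hy b hb, ← pow_sub_mul_pow _ (hfle b)]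
        simp only [d]
        linear_combination (ℓ ^ (nbhdExp κ b a - κ a) * y b * ℓ ^ κ a : ℤ_[ℓ]) * (hu' + u' * u a * hs')
    obtain ⟨S', hS'def⟩ : ∃ S' : Matrix ι ι ℤ_[ℓ], ∀ b c,
      S' b c = S b c - v b * d * v c + if b = a ∧ c = a then d else 0 := ⟨fun b c => _, fun _ _ => rfl⟩
    have hS'a : ∀ b, S' a b = diagForm ℓ κ u a b := by
      intro b
      by_cases hb : b = a
      · subst hb
        simp only [hS'def, hva, diagForm, Matrix.diagonal_apply_eq, and_self, if_true]
        have := hvd b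
        rw [hva] at this
        rw [← this]; ring
      · have hs1 : S a b = S b a := hS.apply b a
        simp only [hS'def, hva, diagForm, Matrix.diagonal_apply_ne' _ hb, hb, and_false, if_false]
        rw [hs1, ← hvd b]; ring
    have hS' : S'.IsSymm := by
      ext b c
      rw [Matrix.transpose_apply, hS'def, hS'def, hS.apply b c]
      simp only [and_comm (a := c = a)]
      ring
    have hnear' : ∀ b c, (ℓ : ℤ_[ℓ]) ^ nbhdExp κ b c ∣ S' b c - diagForm ℓ κ u b c := by
      intro b c
      by_cases hb : b = a
      · subst hb; rw [hS'a, sub_self]; exact dvd_zero _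
      by_cases hc : c = a
      · subst hc
        have : diagForm ℓ κ u b c = diagForm ℓ κ u c b := by
          simp [diagForm, Matrix.diagonal_apply_ne _ hb, Matrix.diagonal_apply_ne' _ hb]
        rw [hS'.apply c b, hS'a, this, sub_self]; exact dvd_zero _
      · have e : S' b c - diagForm ℓ κ u b c = (S b c - diagForm ℓ κ u b c) - v b * d * v c := by
          simp only [hS'def, hb, false_and, if_false]; ring
        rw [e]
        refine dvd_sub (hnear b c) ?_
        -- the rank one correction lies deep enough in the lattice
        have hexp : nbhdExp κ b c ≤ (nbhdExp κ b a - κ a) + κ a + (nbhdExp κ c a - κ a) := by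
          unfold nbhdExp
          split_ifs <;> omega
        refine (pow_dvd_pow _ hexp).trans ⟨y b * u' * s' * u a * (y c * u' * s'), ?_⟩
        rw [hvb b hb, hvb c hc, pow_add, pow_add]
        simp only [d]
        ring
    have hT' : ∀ b ∉ T, ∀ c, S' b c = diagForm ℓ κ u b c := by
      intro b hb c
      by_cases hba : b = a
      · subst hba; exact hS'a c
      · have hbT : b ∉ insert a T := by simp [hba, hb]
        have hb0 : S b a = 0 := by
          rw [hT b hbT, diagForm, Matrix.diagonal_apply_ne _ hba]
        have hyb : v b * d * v c = 0 := by
          have := hvd b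
          rw [hb0] at this
          have hvd0 : v b * d = 0 := by
            linear_combination s' * this - v b * d * hs'
          rw [hvd0, zero_mul]
        simp only [hS'def, hba, false_and, if_false, hyb, hT b hbT]
        ring
    obtain ⟨D, hD, hDS⟩ := ih S' hS' hnear' hT'
    refine ⟨(1 : Matrix ι ι ℤ_[ℓ]).updateCol a v * D, ?_, ?_⟩
    · rw [Matrix.det_mul, det_updateCol_one, hva]; exact hs.mul hD
    · have : S = (1 : Matrix ι ι ℤ_[ℓ]).updateCol a v * S' *
          ((1 : Matrix ι ι ℤ_[ℓ]).updateCol a v)ᵀ := by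
        have e : (1 : Matrix ι ι ℤ_[ℓ]).updateCol a v * S' *
          ((1 : Matrix ι ι ℤ_[ℓ]).updateCol a v)ᵀ = ((1 : Matrix ι ι ℤ_[ℓ]).updateCol a v *
            ((1 : Matrix ι ι ℤ_[ℓ]).updateCol a v * S')ᵀ)ᵀ := by
          rw [Matrix.transpose_mul, Matrix.transpose_transpose]
        rw [e]
        have hS'c : ∀ b, b ≠ a → S' b a = 0 := by
          intro b hb
          rw [hS'.apply a b, hS'a, diagForm, Matrix.diagonal_apply_ne' _ hb]
        have hS'aa : S' a a = d := by
          rw [hS'a, diagForm, Matrix.diagonal_apply_eq]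
        ext b c
        rw [Matrix.transpose_apply, updateCol_one_mul, Matrix.transpose_apply,
          Matrix.transpose_apply, updateCol_one_mul, updateCol_one_mul]
        by_cases hb : b = a <;> by_cases hc : c = a
        · rw [hb, hc]
          simp only [if_true, hS'aa]
          have := hvd a
          rw [hva] at this ⊢
          linear_combination -this
        · rw [hb]
          have := hvd c
          simp only [if_true, if_neg hc, hS'aa, hS'a c]
          rw [diagForm, Matrix.diagonal_apply_ne' _ hc, hva, hS.apply c a]
          linear_combination -this
        · subst hc
          have := hvd b
          simp only [if_true, if_neg hb, hS'aa, hS'c b hb]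
          rw [hva]
          linear_combination -this
        · simp only [if_neg hb, if_neg hc, hS'aa, hS'c b hb]
          rw [hS'a c, diagForm, Matrix.diagonal_apply_ne' _ hc]
          simp only [hS'def, hb, false_and, if_false]
          ring
      rw [this, hDS, Matrix.transpose_mul]
      simp only [Matrix.mul_assoc]
end Neighbourhood

/-! ### The elements carrying a diagonal form into its neighbourhood -/

section Stabilizer
variable {ℓ : ℕ} [Fact ℓ.Prime] {ι : Type*} [Fintype ι] [DecidableEq ι]

/-- The Levi part modulo `ℓ` of `h`: the entries between different blocks of constant `κ` are
replaced by `0`, and the others are reduced by `ρ`. -/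
def leviPart {A : Type*} (κ : ι → ℕ) (ρ : A → ZMod ℓ) (h : Matrix ι ι A) :
    Matrix ι ι (ZMod ℓ) :=
  fun a b => if κ a = κ b then ρ (h a b) else 0

theorem conj_diagForm_apply (κ : ι → ℕ) (u : ι → ℤ_[ℓ]) (h : Matrix ι ι ℤ_[ℓ]) (a b : ι) :
    (h * diagForm ℓ κ u * hᵀ) a b = ∑ c, h a c * (ℓ ^ κ c * u c) * h b c := by
  rw [diagForm, Matrix.mul_apply]
  simp only [Matrix.mul_diagonal, Matrix.transpose_apply]

/-- When `h` satisfies the parabolic divisibility `ℓ^(κ a - κ b) ∣ h a b`, the box condition on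
`h * diagForm * hᵀ` only sees the Levi part of `h` modulo `ℓ`. -/
theorem conj_sub_dvd_iff (κ : ι → ℕ) (u : ι → ℤ_[ℓ]) (h : Matrix ι ι ℤ_[ℓ])
    (hpar : ∀ a b, (ℓ : ℤ_[ℓ]) ^ (κ a - κ b) ∣ h a b) (a b : ι) :
    (ℓ : ℤ_[ℓ]) ^ nbhdExp κ a b ∣ (h * diagForm ℓ κ u * hᵀ) a b - diagForm ℓ κ u a b ↔
      (leviPart κ PadicInt.toZMod h * Matrix.diagonal (fun c => PadicInt.toZMod (u c)) *
        (leviPart κ PadicInt.toZMod h)ᵀ) a b =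
      Matrix.diagonal (fun c => PadicInt.toZMod (u c)) a b := by
  have hterm : ∀ c, (ℓ : ℤ_[ℓ]) ^ ((κ a - κ c) + κ c + (κ b - κ c)) ∣
      h a c * (ℓ ^ κ c * u c) * h b c := by
    intro c
    rw [pow_add, pow_add]
    exact mul_dvd_mul (mul_dvd_mul (hpar a c) (Dvd.intro _ rfl)) (hpar b c)
  have hR : (leviPart κ PadicInt.toZMod h * Matrix.diagonal (fun c => PadicInt.toZMod (u c)) *
        (leviPart κ PadicInt.toZMod h)ᵀ) a b = ∑ c, if κ a = κ c ∧ κ b = κ c then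
          PadicInt.toZMod (h a c * u c * h b c) else 0 := by
    rw [Matrix.mul_apply]
    refine Finset.sum_congr rfl fun c _ => ?_
    rw [Matrix.mul_diagonal, Matrix.transpose_apply]
    simp only [leviPart]
    split_ifs <;> simp_all
  rw [hR, conj_diagForm_apply]
  by_cases hab : κ a = κ b
  · have hf : nbhdExp κ a b = κ a + 1 := by simp [nbhdExp, hab]
    -- terms with `κ c ≠ κ a` vanish to order `κ a + 1`
    have hx : (ℓ : ℤ_[ℓ]) ^ (κ a + 1) ∣ ∑ c, h a c * (ℓ ^ κ c * u c) * h b c -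
        ℓ ^ κ a * ∑ c, if κ a = κ c ∧ κ b = κ c then h a c * u c * h b c else 0 := by
      rw [Finset.mul_sum, ← Finset.sum_sub_distrib]
      refine Finset.dvd_sum fun c _ => ?_
      by_cases hc : κ a = κ c
      · rw [if_pos ⟨hc, hab ▸ hc⟩, hc]
        exact ⟨0, by ring⟩
      · rw [if_neg (fun h => hc h.1), mul_zero, sub_zero]
        exact (pow_dvd_pow _ (by omega)).trans (hterm c)
    have hd : diagForm ℓ κ u a b = ℓ ^ κ a * Matrix.diagonal u a b := by
      by_cases h : a = b
      · subst h; simp [diagForm]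
      · simp [diagForm, h]
    have hd' : Matrix.diagonal (fun c => PadicInt.toZMod (u c)) a b =
        PadicInt.toZMod (Matrix.diagonal u a b) := by
      by_cases h : a = b
      · subst h; simp
      · simp [h]
    have e1 : ∀ X Y D : ℤ_[ℓ], X - D = (X - Y) + (Y - D) := fun X Y D => by ring
    rw [hf, e1 _ (ℓ ^ κ a * ∑ c, if κ a = κ c ∧ κ b = κ c then h a c * u c * h b c else 0),
      dvd_add_right hx, hd, ← mul_sub, pow_succ,
      mul_dvd_mul_iff_left (pow_ne_zero _ (by exact_mod_cast (Fact.out : ℓ.Prime).ne_zero)),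
      ← toZMod_eq_zero_iff, map_sub, sub_eq_zero, map_sum, hd']
    simp only [apply_ite (PadicInt.toZMod (p := ℓ)), map_zero]
  · have hne : a ≠ b := fun h => hab (h ▸ rfl)
    rw [diagForm, Matrix.diagonal_apply_ne _ hne, Matrix.diagonal_apply_ne _ hne, sub_zero]
    refine iff_of_true (Finset.dvd_sum fun c _ => (pow_dvd_pow _ ?_).trans (hterm c))
      (Finset.sum_eq_zero fun c _ => if_neg fun h => hab (h.1.trans h.2.symm))
    rw [nbhdExp, if_neg hab]
    omega

theorem det_diagForm_ne_zero (κ : ι → ℕ) (u : ι → ℤ_[ℓ]) (hu : ∀ a, IsUnit (u a)) :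
    (diagForm ℓ κ u).det ≠ 0 := by
  rw [diagForm, Matrix.det_diagonal]
  exact Finset.prod_ne_zero_iff.2 fun a _ => mul_ne_zero
    (pow_ne_zero _ (by exact_mod_cast (Fact.out : ℓ.Prime).ne_zero)) (hu a).ne_zero

omit [Fintype ι] in
theorem diagForm_isSymm (κ : ι → ℕ) (u : ι → ℤ_[ℓ]) : (diagForm ℓ κ u)ᵀ = diagForm ℓ κ u :=
  Matrix.diagonal_transpose _

omit [DecidableEq ι] in
theorem conj_isSymm {A : Type*} [CommRing A] {M : Matrix ι ι A} (hM : Mᵀ = M)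
    (D : Matrix ι ι A) : (D * M * Dᵀ).IsSymm := by
  rw [Matrix.IsSymm, Matrix.transpose_mul, Matrix.transpose_mul, hM, Matrix.transpose_transpose,
    Matrix.mul_assoc]

/-- The invertible `h` carrying the form into its box are exactly those in the parabolic order whose
Levi part modulo `ℓ` is an isometry of the reduced form. In the reverse direction invertibility comes
for free: the image of the form lies in the box, so its determinant is that of the form up to the
square of a unit. -/
theorem conj_near_iff (hℓ : ℓ ≠ 2) (κ : ι → ℕ) (u : ι → ℤ_[ℓ]) (hu : ∀ a, IsUnit (u a))
    (h : Matrix ι ι ℤ_[ℓ]) :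
    (IsUnit h.det ∧ ∀ a b, (ℓ : ℤ_[ℓ]) ^ nbhdExp κ a b ∣
      (h * diagForm ℓ κ u * hᵀ) a b - diagForm ℓ κ u a b) ↔
    (∀ a b, (ℓ : ℤ_[ℓ]) ^ (κ a - κ b) ∣ h a b) ∧
      leviPart κ PadicInt.toZMod h * Matrix.diagonal (fun c => PadicInt.toZMod (u c)) *
        (leviPart κ PadicInt.toZMod h)ᵀ = Matrix.diagonal (fun c => PadicInt.toZMod (u c)) := by
  have hℓ0 : (ℓ : ℤ_[ℓ]) ≠ 0 := by exact_mod_cast (Fact.out : ℓ.Prime).ne_zero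
  constructor
  · rintro ⟨hdet, hS⟩
    have hpar : ∀ a b, (ℓ : ℤ_[ℓ]) ^ (κ a - κ b) ∣ h a b := by
      intro a b
      have hrow : ∀ c, (ℓ : ℤ_[ℓ]) ^ κ a ∣ (h * diagForm ℓ κ u * hᵀ) a c := by
        intro c
        have h1 : (ℓ : ℤ_[ℓ]) ^ κ a ∣ diagForm ℓ κ u a c := by
          by_cases hac : a = c
          · subst hac; simp [diagForm]
          · simp [diagForm, hac]
        have h2 := (pow_dvd_pow (ℓ : ℤ_[ℓ])
          (show κ a ≤ nbhdExp κ a c by unfold nbhdExp; omega)).trans (hS a c)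
        simpa using dvd_add h2 h1
      have hdet' : IsUnit hᵀ.det := by rwa [Matrix.det_transpose]
      have e : h * diagForm ℓ κ u = (h * diagForm ℓ κ u * hᵀ) * (hᵀ)⁻¹ := by
        rw [Matrix.mul_assoc, Matrix.mul_nonsing_inv _ hdet', Matrix.mul_one]
      have h3 : (ℓ : ℤ_[ℓ]) ^ κ a ∣ (h * diagForm ℓ κ u) a b := by
        rw [e, Matrix.mul_apply]
        exact Finset.dvd_sum fun c _ => (hrow c).mul_right _
      rw [diagForm, Matrix.mul_diagonal, ← mul_assoc, (hu b).dvd_mul_right] at h3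
      rcases le_total (κ a) (κ b) with hle | hle
      · simp [Nat.sub_eq_zero_of_le hle]
      · rw [← pow_sub_mul_pow _ hle] at h3
        exact (mul_dvd_mul_iff_right (pow_ne_zero _ hℓ0)).1 h3
    exact ⟨hpar, Matrix.ext fun a b => (conj_sub_dvd_iff κ u h hpar a b).1 (hS a b)⟩
  · rintro ⟨hpar, hT⟩
    have hS := fun a b => (conj_sub_dvd_iff κ u h hpar a b).2 (by rw [hT])
    refine ⟨?_, hS⟩
    obtain ⟨D, hD, hDS⟩ := exists_congr_of_mem_nbhd hℓ κ u hu Finset.univ _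
      (conj_isSymm (diagForm_isSymm κ u) h) hS (by simp)
    have := congrArg Matrix.det hDS
    simp only [Matrix.det_mul, Matrix.det_transpose] at this
    have h0 := det_diagForm_ne_zero κ u hu
    have h1 : h.det * h.det = D.det * D.det :=
      mul_right_cancel₀ h0 (by linear_combination this)
    exact isUnit_of_mul_isUnit_left (h1 ▸ hD.mul hD)

/-- The congruence class of the diagonal form is a union of residue classes modulo `ℓ^N`, once `N`
exceeds all exponents. -/
theorem exists_congr_of_sub_dvd (hℓ : ℓ ≠ 2) (κ : ι → ℕ) (u : ι → ℤ_[ℓ])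
    (hu : ∀ a, IsUnit (u a)) {N : ℕ} (hN : ∀ a, κ a < N) (S : Matrix ι ι ℤ_[ℓ]) (hS : S.IsSymm)
    (D : Matrix ι ι ℤ_[ℓ]) (hD : IsUnit D.det)
    (h : ∀ a b, (ℓ : ℤ_[ℓ]) ^ N ∣ S a b - (D * diagForm ℓ κ u * Dᵀ) a b) :
    ∃ D : Matrix ι ι ℤ_[ℓ], IsUnit D.det ∧ S = D * diagForm ℓ κ u * Dᵀ := by
  have hDt : IsUnit Dᵀ.det := by rwa [Matrix.det_transpose]
  have hnear : ∀ a b, (ℓ : ℤ_[ℓ]) ^ nbhdExp κ a b ∣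
      (D⁻¹ * S * D⁻¹ᵀ) a b - diagForm ℓ κ u a b := by
    intro a b
    have e : diagForm ℓ κ u = D⁻¹ * (D * diagForm ℓ κ u * Dᵀ) * D⁻¹ᵀ := by
      rw [Matrix.transpose_nonsing_inv, Matrix.mul_assoc D,
            Matrix.nonsing_inv_mul_cancel_left _ _ hD, Matrix.mul_nonsing_inv_cancel_right _ _ hDt]
    have e2 : (D⁻¹ * S * D⁻¹ᵀ) a b - diagForm ℓ κ u a b =
        (D⁻¹ * (S - D * diagForm ℓ κ u * Dᵀ) * D⁻¹ᵀ) a b := by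
      rw [Matrix.mul_sub, Matrix.sub_mul, Matrix.sub_apply, ← e]
    rw [e2]
    have hle : nbhdExp κ a b ≤ N := by
      have := hN a; have := hN b
      unfold nbhdExp
      split_ifs <;> omega
    refine (pow_dvd_pow _ hle).trans ?_
    rw [Matrix.mul_apply]
    refine Finset.dvd_sum fun c _ => Dvd.dvd.mul_right ?_ _
    rw [Matrix.mul_apply]
    exact Finset.dvd_sum fun c' _ => Dvd.dvd.mul_left (h _ _) _
  obtain ⟨E, hE, hES⟩ := exists_congr_of_mem_nbhd hℓ κ u hu Finset.univ (D⁻¹ * S * D⁻¹ᵀ)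
    (conj_isSymm hS _) hnear (by simp)
  refine ⟨D * E, by rw [Matrix.det_mul]; exact hD.mul hE, ?_⟩
  calc S = D * (D⁻¹ * S * D⁻¹ᵀ) * Dᵀ := by
        rw [Matrix.transpose_nonsing_inv, Matrix.mul_assoc D⁻¹,
          Matrix.mul_nonsing_inv_cancel_left _ _ hD, Matrix.nonsing_inv_mul_cancel_right _ _ hDt]
    _ = _ := by rw [hES, Matrix.transpose_mul]; simp only [Matrix.mul_assoc]

end Stabilizer

/-! ### Counting over `ℤ/ℓ^N` -/

section Counting

theorem card_eq_card_mul_of_fibers {X Y : Type*} [Finite X] [Finite Y] (φ : X → Y) (P : X → Prop)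
    (T : Y → Prop) (K : ℕ) (hPT : ∀ x, P x → T (φ x))
    (hK : ∀ t, T t → Nat.card {x // P x ∧ φ x = t} = K) :
    Nat.card {x // P x} = Nat.card {t // T t} * K := by
  classical
  have := Fintype.ofFinite {t // T t}
  let ψ : {x // P x} → {t // T t} := fun x => ⟨φ x.1, hPT _ x.2⟩
  rw [← Nat.card_congr (Equiv.sigmaFiberEquiv ψ), Nat.card_sigma,
    Finset.sum_congr rfl (g := fun _ => K), Finset.sum_const, Nat.card_eq_fintype_card,
    Finset.card_univ, smul_eq_mul]
  intro t _
  rw [← hK t.1 t.2]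
  refine Nat.card_congr ⟨fun x => ⟨x.1.1, x.1.2, congrArg Subtype.val x.2⟩,
    fun x => ⟨⟨x.1, x.2.1⟩, Subtype.ext x.2.2⟩, fun _ => rfl, fun _ => rfl⟩

/-- Orbit–stabiliser in the form used here: `φ` is an orbit map (condition `hφ`), every nonempty
fibre has as many elements as the stabiliser `{g // φ g = φ 1}`, and `U` is a part of the orbit. -/
theorem card_preimage_eq {G X : Type*} [Group G] [Finite G] [Finite X] (φ : G → X)
    (hφ : ∀ g h k, φ g = φ h → φ (k * g) = φ (k * h)) (U : X → Prop)
    (hU : ∀ x, U x → ∃ g, φ g = x) :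
    Nat.card {g // U (φ g)} = Nat.card {x // U x} * Nat.card {g // φ g = φ 1} := by
  refine card_eq_card_mul_of_fibers φ (fun g => U (φ g)) U _ (fun _ h => h) fun x hx => ?_
  obtain ⟨g, rfl⟩ := hU x hx
  refine Nat.card_congr ⟨fun y => ⟨g⁻¹ * y.1, ?_⟩, fun y => ⟨g * y.1, ?_⟩, fun y => ?_, fun y => ?_⟩
  · simpa using hφ _ _ g⁻¹ y.2.2
  · have := hφ _ _ g y.2
    rw [mul_one] at this
    exact ⟨by rwa [this], this⟩
  · simp
  · simp

variable {ℓ : ℕ} [Fact ℓ.Prime]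

theorem card_pow_dvd {N j : ℕ} (hj : j ≤ N) (c : ZMod (ℓ ^ N)) :
    Nat.card {x : ZMod (ℓ ^ N) // (ℓ : ZMod (ℓ ^ N)) ^ j ∣ x - c} * ℓ ^ j = ℓ ^ N := by
  have h1 : Nat.card {x : ZMod (ℓ ^ N) // (ℓ : ZMod (ℓ ^ N)) ^ j ∣ x - c} =
      Nat.card {x : ZMod (ℓ ^ N) // (ℓ : ZMod (ℓ ^ N)) ^ j ∣ x} :=
    Nat.card_congr ⟨fun x => ⟨x.1 - c, x.2⟩, fun x => ⟨x.1 + c, by simpa using x.2⟩,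
      fun x => by simp, fun x => by simp⟩
  let f : ZMod (ℓ ^ N) →+* ZMod (ℓ ^ j) := ZMod.castHom (pow_dvd_pow ℓ hj) (ZMod (ℓ ^ j))
  have hf : ∀ x, f x = 0 ↔ (ℓ : ZMod (ℓ ^ N)) ^ j ∣ x := by
    intro x
    obtain ⟨x, rfl⟩ := ZMod.ringHom_surjective (PadicInt.toZModPow (p := ℓ) N) x
    rw [pow_dvd_toZModPow hj, ← Ideal.mem_span_singleton, ← PadicInt.ker_toZModPow,
      RingHom.mem_ker, ← PadicInt.zmod_cast_comp_toZModPow j N hj]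
    rfl
  have hfib := card_eq_card_mul_of_fibers f (fun _ => True) (fun _ => True)
    (Nat.card {x : ZMod (ℓ ^ N) // (ℓ : ZMod (ℓ ^ N)) ^ j ∣ x}) (fun _ h => h) (by
      intro t _
      obtain ⟨t, rfl⟩ := ZMod.ringHom_surjective f t
      refine Nat.card_congr ⟨fun x => ⟨x.1 - t, ?_⟩, fun x => ⟨x.1 + t, ?_⟩,
        fun x => by simp, fun x => by simp⟩
      · rw [← hf, map_sub, x.2.2, sub_self]
      · refine ⟨trivial, ?_⟩
        rw [map_add, (hf _).2 x.2, zero_add])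
  rw [Nat.card_congr (Equiv.subtypeUnivEquiv fun _ => trivial),
    Nat.card_congr (Equiv.subtypeUnivEquiv fun _ => trivial), Nat.card_zmod, Nat.card_zmod] at hfib
  rw [h1, mul_comm]
  exact hfib.symm

theorem card_box {I : Type*} [Fintype I] {N : ℕ} (g : I → ℕ) (hg : ∀ i, g i ≤ N)
    (c : I → ZMod (ℓ ^ N)) :
    Nat.card {x : I → ZMod (ℓ ^ N) // ∀ i, (ℓ : ZMod (ℓ ^ N)) ^ g i ∣ x i - c i} *
      ℓ ^ (∑ i, g i) = ℓ ^ (N * Fintype.card I) := by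
  rw [Nat.card_congr (Equiv.subtypePiEquivPi
    (p := fun i (x : ZMod (ℓ ^ N)) => (ℓ : ZMod (ℓ ^ N)) ^ g i ∣ x - c i)), Nat.card_pi, ← Finset.prod_pow_eq_pow_sum,
    ← Finset.prod_mul_distrib, Finset.prod_congr rfl fun i _ => card_pow_dvd (hg i) (c i),
    Finset.prod_const, Finset.card_univ, pow_mul]

theorem card_matrix_box {ι : Type*} [Fintype ι] {N : ℕ} (g : ι → ι → ℕ) (hg : ∀ a b, g a b ≤ N)
    (C : Matrix ι ι (ZMod (ℓ ^ N))) :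
    Nat.card {x : Matrix ι ι (ZMod (ℓ ^ N)) //
      ∀ a b, (ℓ : ZMod (ℓ ^ N)) ^ g a b ∣ x a b - C a b} *
      ℓ ^ (∑ a, ∑ b, g a b) = ℓ ^ (N * (Fintype.card ι * Fintype.card ι)) := by
  have := card_box (I := ι × ι) (fun p => g p.1 p.2) (fun p => hg _ _) (fun p => C p.1 p.2)
  rw [Fintype.sum_prod_type, Fintype.card_prod] at this
  rw [← this]
  congr 1
  exact Nat.card_congr ⟨fun x => ⟨fun p => x.1 p.1 p.2, fun p => x.2 _ _⟩,
    fun x => ⟨fun a b => x.1 (a, b), fun a b => x.2 (a, b)⟩, fun _ => rfl, fun _ => rfl⟩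

/-- A symmetric matrix is determined by its ten entries on and above the diagonal. -/
theorem card_symm_box {N : ℕ} (g : Fin 4 → Fin 4 → ℕ) (hg : ∀ a b, g a b ≤ N)
    (hgs : ∀ a b, g a b = g b a) (C : Matrix (Fin 4) (Fin 4) (ZMod (ℓ ^ N))) (hC : C.IsSymm) :
    Nat.card {x : Matrix (Fin 4) (Fin 4) (ZMod (ℓ ^ N)) // x.IsSymm ∧
      ∀ a b, (ℓ : ZMod (ℓ ^ N)) ^ g a b ∣ x a b - C a b} *
      ℓ ^ (∑ p : {p : Fin 4 × Fin 4 // p.1 ≤ p.2}, g p.1.1 p.1.2) = ℓ ^ (N * 10) := by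
  have := card_box (I := {p : Fin 4 × Fin 4 // p.1 ≤ p.2}) (fun p => g p.1.1 p.1.2)
    (fun p => hg _ _) (fun p => C p.1.1 p.1.2)
  rw [show Fintype.card {p : Fin 4 × Fin 4 // p.1 ≤ p.2} = 10 by decide] at this
  rw [← this]
  congr 1
  refine Nat.card_congr ⟨fun x => ⟨fun p => x.1 p.1.1 p.1.2, fun p => x.2.2 _ _⟩,
    fun x => ⟨fun a b => if h : a ≤ b then x.1 ⟨(a, b), h⟩ else
      x.1 ⟨(b, a), le_of_not_ge h⟩, ?_, ?_⟩, ?_, ?_⟩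
  · ext a b
    change (dite _ _ _) = (dite _ _ _)
    by_cases h : a ≤ b <;> by_cases h' : b ≤ a
    · obtain rfl := le_antisymm h h'; rfl
    · simp [h, h']
    · simp [h, h']
    · exact absurd (le_of_not_ge h) h'
  · intro a b
    by_cases h : a ≤ b
    · simpa [h] using x.2 ⟨(a, b), h⟩
    · simpa [h, hgs a b, hC.apply b a] using x.2 ⟨(b, a), le_of_not_ge h⟩
  · intro x
    ext a b
    by_cases h : a ≤ b
    · simp [h]
    · simp [h, x.2.1.apply a b]
  · intro x
    ext p
    simp [p.2]

end Counting

section FiniteLevel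
variable {ℓ : ℕ} [Fact ℓ.Prime] {ι : Type*} [Fintype ι] [DecidableEq ι] {N : ℕ}

omit [Fintype ι] [DecidableEq ι] in
theorem exists_map_eq (m : Matrix ι ι (ZMod (ℓ ^ N))) :
    ∃ h : Matrix ι ι ℤ_[ℓ], h.map (PadicInt.toZModPow N) = m := by
  choose s hs using ZMod.ringHom_surjective (PadicInt.toZModPow (p := ℓ) N)
  exact ⟨m.map s, by ext a b; simp [hs]⟩

theorem isUnit_det_map (hN : N ≠ 0) (h : Matrix ι ι ℤ_[ℓ]) :
    IsUnit (h.map (PadicInt.toZModPow N)).det ↔ IsUnit h.det := by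
  rw [← isUnit_toZModPow hN, RingHom.map_det]; rfl

theorem isUnit_det_redMod (hN : N ≠ 0) (m : Matrix ι ι (ZMod (ℓ ^ N))) :
    IsUnit (m.map (redMod ℓ hN)).det ↔ IsUnit m.det := by
  obtain ⟨h, rfl⟩ := exists_map_eq m
  rw [isUnit_det_map hN, ← isUnit_toZMod, RingHom.map_det]
  have : (h.map (PadicInt.toZModPow N)).map (redMod ℓ hN) = h.map PadicInt.toZMod := by
    ext a b; exact redMod_toZModPow hN _
  rw [this]; rfl

theorem card_isUnit_det (hN : N ≠ 0) :
    Nat.card {m : Matrix ι ι (ZMod (ℓ ^ N)) // IsUnit m.det} * ℓ ^ (Fintype.card ι * Fintype.card ι) =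
      Nat.card {m : Matrix ι ι (ZMod ℓ) // IsUnit m.det} *
        ℓ ^ (N * (Fintype.card ι * Fintype.card ι)) := by
  have hℓ0 : 0 < ℓ := (Fact.out : ℓ.Prime).pos
  have hbox := card_matrix_box (ℓ := ℓ) (ι := ι) (N := N) (fun _ _ => 1)
    (fun _ _ => Nat.one_le_iff_ne_zero.2 hN)
  simp only [Finset.sum_const, Finset.card_univ, smul_eq_mul, mul_one] at hbox
  rw [card_eq_card_mul_of_fibers (fun m : Matrix ι ι (ZMod (ℓ ^ N)) => m.map (redMod ℓ hN))
    (fun m => IsUnit m.det) (fun t => IsUnit t.det) (Nat.card {x : Matrix ι ι (ZMod (ℓ ^ N)) //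
      ∀ a b, (ℓ : ZMod (ℓ ^ N)) ^ 1 ∣ x a b - (0 : Matrix ι ι (ZMod (ℓ ^ N))) a b})
      (fun m hm => (isUnit_det_redMod hN m).2 hm), mul_assoc, hbox 0]
  intro t ht
  choose s hs using ZMod.ringHom_surjective (redMod ℓ hN)
  have h2 := (hbox (t.map s)).trans (hbox 0).symm
  rw [← Nat.eq_of_mul_eq_mul_right (pow_pos hℓ0 _) h2]
  refine Nat.card_congr (Equiv.subtypeEquivRight fun m => ?_)
  have e : m.map (redMod ℓ hN) = t ↔ ∀ a b, (ℓ : ZMod (ℓ ^ N)) ^ 1 ∣ m a b - (t.map s) a b := by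
    rw [← Matrix.ext_iff]
    refine forall₂_congr fun a b => ?_
    rw [pow_one, ← redMod_eq_iff hN]
    simp [hs]
  rw [← e]
  exact ⟨fun h => h.2, fun h => ⟨(isUnit_det_redMod hN m).1 (h ▸ ht), h⟩⟩

/-- The exponents of divisibility defining the fibres of `leviPart` on the parabolic order:
`ℓ^(κ a - κ b)` between different blocks (truncated subtraction makes this vacuous when
`κ a < κ b`) and `ℓ` inside a block. -/
def stabExp (κ : ι → ℕ) (a b : ι) : ℕ := (κ a - κ b) + if κ a = κ b then 1 else 0

/-- The number of invertible matrices over `ℤ/ℓ^N` carrying the form into its box, in terms of the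
block-diagonal isometries of the reduced form. -/
theorem card_stab (hℓ : ℓ ≠ 2) (κ : ι → ℕ) (u : ι → ℤ_[ℓ]) (hu : ∀ a, IsUnit (u a))
    (hN : ∀ a, κ a < N) (hN0 : N ≠ 0) (L : Matrix ι ι (ZMod (ℓ ^ N)))
    (hL : L = (diagForm ℓ κ u).map (PadicInt.toZModPow N)) :
    Nat.card {m : Matrix ι ι (ZMod (ℓ ^ N)) // IsUnit m.det ∧
      ∀ a b, (ℓ : ZMod (ℓ ^ N)) ^ nbhdExp κ a b ∣ (m * L * mᵀ) a b - L a b} *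
      ℓ ^ (∑ a, ∑ b, stabExp κ a b) =
    Nat.card {t : Matrix ι ι (ZMod ℓ) // (∀ a b, κ a ≠ κ b → t a b = 0) ∧
      t * Matrix.diagonal (fun c => PadicInt.toZMod (u c)) * tᵀ =
        Matrix.diagonal (fun c => PadicInt.toZMod (u c))} *
        ℓ ^ (N * (Fintype.card ι * Fintype.card ι)) := by
  have hℓ0 : 0 < ℓ := (Fact.out : ℓ.Prime).pos
  have hnb : ∀ a b, nbhdExp κ a b ≤ N := by
    intro a b
    have := hN a; have := hN b
    unfold nbhdExp
    split_ifs <;> omega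
  have hst : ∀ a b, stabExp κ a b ≤ N := by
    intro a b
    have := hN a; have := hN b
    unfold stabExp
    split_ifs <;> omega
  have hbox := card_matrix_box (ℓ := ℓ) (ι := ι) (N := N) (stabExp κ) hst
  have hiff : ∀ m : Matrix ι ι (ZMod (ℓ ^ N)), (IsUnit m.det ∧
      ∀ a b, (ℓ : ZMod (ℓ ^ N)) ^ nbhdExp κ a b ∣ (m * L * mᵀ) a b - L a b) ↔
      (∀ a b, (ℓ : ZMod (ℓ ^ N)) ^ (κ a - κ b) ∣ m a b) ∧
      leviPart κ (redMod ℓ hN0) m * Matrix.diagonal (fun c => PadicInt.toZMod (u c)) *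
        (leviPart κ (redMod ℓ hN0) m)ᵀ = Matrix.diagonal (fun c => PadicInt.toZMod (u c)) := by
    intro m
    obtain ⟨h, rfl⟩ := exists_map_eq m
    have e1 : leviPart κ (redMod ℓ hN0) (h.map (PadicInt.toZModPow N)) =
        leviPart κ PadicInt.toZMod h := by
      ext a b
      simp only [leviPart, Matrix.map_apply, redMod_toZModPow]
    have e2 : h.map (PadicInt.toZModPow N) * L * (h.map (PadicInt.toZModPow N))ᵀ =
        (h * diagForm ℓ κ u * hᵀ).map (PadicInt.toZModPow N) := by
      rw [hL, Matrix.map_mul, Matrix.map_mul, Matrix.transpose_map]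
    rw [e1, e2, isUnit_det_map hN0, hL]
    simp only [Matrix.map_apply]
    simp_rw [pow_dvd_toZModPow_sub (hnb _ _)]
    rw [conj_near_iff hℓ κ u hu]
    simp_rw [pow_dvd_toZModPow (show κ _ - κ _ ≤ N from (Nat.sub_le _ _).trans (hN _).le)]
  rw [Nat.card_congr (Equiv.subtypeEquivRight hiff),
    card_eq_card_mul_of_fibers (leviPart κ (redMod ℓ hN0)) _
    (fun t : Matrix ι ι (ZMod ℓ) => (∀ a b, κ a ≠ κ b → t a b = 0) ∧
      t * Matrix.diagonal (fun c => PadicInt.toZMod (u c)) * tᵀ =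
        Matrix.diagonal (fun c => PadicInt.toZMod (u c)))
    (Nat.card {x : Matrix ι ι (ZMod (ℓ ^ N)) //
      ∀ a b, (ℓ : ZMod (ℓ ^ N)) ^ stabExp κ a b ∣ x a b - (0 : Matrix ι ι (ZMod (ℓ ^ N))) a b}),
    mul_assoc, hbox 0]
  · intro m hm
    exact ⟨fun a b hab => if_neg hab, hm.2⟩
  · intro t ht
    choose s hs using ZMod.ringHom_surjective (redMod ℓ hN0)
    let C : Matrix ι ι (ZMod (ℓ ^ N)) := fun a b => if κ a = κ b then s (t a b) else 0
    have h2 := (hbox C).trans (hbox 0).symm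
    rw [← Nat.eq_of_mul_eq_mul_right (pow_pos hℓ0 _) h2]
    refine Nat.card_congr (Equiv.subtypeEquivRight fun m => ?_)
    have e : ((∀ a b, (ℓ : ZMod (ℓ ^ N)) ^ (κ a - κ b) ∣ m a b) ∧
        leviPart κ (redMod ℓ hN0) m = t) ↔
        ∀ a b, (ℓ : ZMod (ℓ ^ N)) ^ stabExp κ a b ∣ m a b - C a b := by
      rw [← Matrix.ext_iff, ← forall_and]
      refine forall_congr' fun a => ?_
      rw [← forall_and]
      refine forall_congr' fun b => ?_
      by_cases hab : κ a = κ b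
      · simp only [stabExp, leviPart, C, hab, if_true, Nat.sub_self, pow_zero, isUnit_one,
          IsUnit.dvd, true_and, zero_add, pow_one]
        rw [← redMod_eq_iff hN0, hs]
      · simp [stabExp, leviPart, C, hab, ht.1 a b hab]
    rw [← e]
    exact ⟨fun h => ⟨h.1.1, h.2⟩, fun h => ⟨⟨h.1, h.2 ▸ ht.2⟩, h.2⟩⟩

end FiniteLevel

/-! ### The size of the congruence class modulo `ℓ^N` -/

section Orbit
variable {ℓ : ℕ} [Fact ℓ.Prime]

/-- Units of a matrix ring, described by their underlying matrices. -/
theorem card_GL_subtype {ι A : Type*} [Fintype ι] [DecidableEq ι] [CommRing A]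
    (P : Matrix ι ι A → Prop) :
    Nat.card {g : GL ι A // P g.1} = Nat.card {m : Matrix ι ι A // IsUnit m.det ∧ P m} := by
  refine Nat.card_congr (Equiv.ofBijective
    (fun g => ⟨g.1.1, (Matrix.isUnit_iff_isUnit_det _).1 g.1.isUnit, g.2⟩) ⟨?_, ?_⟩)
  · intro g h hgh
    exact Subtype.ext (Units.ext (congrArg Subtype.val hgh))
  · rintro ⟨m, hm, hP⟩
    obtain ⟨g, rfl⟩ := (Matrix.isUnit_iff_isUnit_det _).2 hm
    exact ⟨⟨g, hP⟩, rfl⟩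

theorem nbhdExp_le {κ : Fin 4 → ℕ} {N : ℕ} (hN : ∀ a, κ a < N) (a b) : nbhdExp κ a b ≤ N := by
  have := hN a; have := hN b
  unfold nbhdExp
  split_ifs <;> omega

/-- The number of forms over `ℤ/ℓ^N` congruent to a given diagonal form, relative to the number of
all symmetric matrices. -/
theorem card_orbit (hℓ : ℓ ≠ 2) (κ : Fin 4 → ℕ) (u : Fin 4 → ℤ_[ℓ]) (hu : ∀ a, IsUnit (u a))
    {N : ℕ} (hN : ∀ a, κ a < N) (L : Matrix (Fin 4) (Fin 4) (ZMod (ℓ ^ N)))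
    (hL : L = (diagForm ℓ κ u).map (PadicInt.toZModPow N)) :
    Nat.card {x : Matrix (Fin 4) (Fin 4) (ZMod (ℓ ^ N)) // ∃ m, IsUnit m.det ∧ m * L * mᵀ = x} *
      Nat.card {t : Matrix (Fin 4) (Fin 4) (ZMod ℓ) // (∀ a b, κ a ≠ κ b → t a b = 0) ∧
        t * Matrix.diagonal (fun c => PadicInt.toZMod (u c)) * tᵀ =
          Matrix.diagonal (fun c => PadicInt.toZMod (u c))} *
      ℓ ^ (16 + ∑ p : {p : Fin 4 × Fin 4 // p.1 ≤ p.2}, nbhdExp κ p.1.1 p.1.2) =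
    Nat.card {m : Matrix (Fin 4) (Fin 4) (ZMod ℓ) // IsUnit m.det} * ℓ ^ (N * 10) *
      ℓ ^ (∑ a, ∑ b, stabExp κ a b) := by
  have hℓ0 : 0 < ℓ := (Fact.out : ℓ.Prime).pos
  have hN0 : N ≠ 0 := (Nat.zero_lt_of_lt (hN 0)).ne'
  have hLs : Lᵀ = L := by
    rw [hL, ← Matrix.transpose_map, diagForm_isSymm]
  let φ : GL (Fin 4) (ZMod (ℓ ^ N)) → Matrix (Fin 4) (Fin 4) (ZMod (ℓ ^ N)) :=
    fun g => g.1 * L * g.1ᵀ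
  have hφ : ∀ g h k, φ g = φ h → φ (k * g) = φ (k * h) := by
    intro g h k hgh
    have : ∀ g, φ (k * g) = k.1 * φ g * k.1ᵀ := by
      intro g
      simp only [φ, Units.val_mul, Matrix.transpose_mul, Matrix.mul_assoc]
    rw [this, this, hgh]
  have hφ1 : φ 1 = L := by simp [φ]
  -- the part `U` of the orbit lying in the box is counted twice: directly, and through the
  -- elements of the group carrying `L` into it
  let U : Matrix (Fin 4) (Fin 4) (ZMod (ℓ ^ N)) → Prop := fun x => x.IsSymm ∧
    ∀ a b, (ℓ : ZMod (ℓ ^ N)) ^ nbhdExp κ a b ∣ x a b - L a b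
  have hUrange : ∀ x, U x → ∃ g, φ g = x := by
    rintro x ⟨hxs, hx⟩
    choose s hs using ZMod.ringHom_surjective (PadicInt.toZModPow (p := ℓ) N)
    obtain ⟨D, hD, hDe⟩ := exists_congr_of_mem_nbhd hℓ κ u hu Finset.univ (x.map s)
      (by rw [Matrix.IsSymm, ← Matrix.transpose_map, hxs]) (by
        intro a b
        rw [← pow_dvd_toZModPow_sub (nbhdExp_le hN a b), Matrix.map_apply, hs]
        simpa [hL] using hx a b) (by simp)
    obtain ⟨g, hg⟩ := (Matrix.isUnit_iff_isUnit_det _).2 ((isUnit_det_map hN0 D).2 hD)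
    refine ⟨g, ?_⟩
    have hx2 : x = (x.map s).map (PadicInt.toZModPow N) := by
      ext a b; simp [hs]
    simp only [φ]
    rw [hx2, hDe, hg, hL, Matrix.map_mul, Matrix.map_mul, Matrix.transpose_map]
  have h1 := card_preimage_eq φ hφ U hUrange
  have h2 := card_preimage_eq φ hφ (fun x => ∃ g, φ g = x) (fun _ h => h)
  have h3 : Nat.card {g // ∃ g', φ g' = φ g} =
      Nat.card {m : Matrix (Fin 4) (Fin 4) (ZMod (ℓ ^ N)) // IsUnit m.det} := by
    have := card_GL_subtype (ι := Fin 4) (A := ZMod (ℓ ^ N)) (fun _ => True)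
    simp only [and_true] at this
    rw [← this]
    exact Nat.card_congr (Equiv.subtypeEquivRight fun g => ⟨fun _ => trivial, fun _ => ⟨g, rfl⟩⟩)
  have h4 : Nat.card {x // ∃ g, φ g = x} = Nat.card {x : Matrix (Fin 4) (Fin 4) (ZMod (ℓ ^ N)) //
      ∃ m, IsUnit m.det ∧ m * L * mᵀ = x} := by
    refine Nat.card_congr (Equiv.subtypeEquivRight fun x => ⟨?_, ?_⟩)
    · rintro ⟨g, rfl⟩
      exact ⟨g.1, (Matrix.isUnit_iff_isUnit_det _).1 g.isUnit, rfl⟩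
    · rintro ⟨m, hm, rfl⟩
      obtain ⟨g, rfl⟩ := (Matrix.isUnit_iff_isUnit_det _).2 hm
      exact ⟨g, rfl⟩
  have h5 : Nat.card {g // U (φ g)} = Nat.card {m : Matrix (Fin 4) (Fin 4) (ZMod (ℓ ^ N)) //
      IsUnit m.det ∧
        ∀ a b, (ℓ : ZMod (ℓ ^ N)) ^ nbhdExp κ a b ∣ (m * L * mᵀ) a b - L a b} := by
    rw [← card_GL_subtype (fun m : Matrix (Fin 4) (Fin 4) (ZMod (ℓ ^ N)) => ∀ a b, (ℓ : ZMod (ℓ ^ N)) ^ nbhdExp κ a b ∣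
      (m * L * mᵀ) a b - L a b)]
    refine Nat.card_congr (Equiv.subtypeEquivRight fun g => ?_)
    exact and_iff_right (conj_isSymm hLs _)
  have hst := card_stab hℓ κ u hu hN hN0 L hL
  have hGL := card_isUnit_det (ℓ := ℓ) (ι := Fin 4) hN0
  have hU := card_symm_box (ℓ := ℓ) (N := N) (nbhdExp κ) (nbhdExp_le hN)
    (fun a b => by simp [nbhdExp, max_comm, eq_comm]) L hLs
  rw [h3, h4] at h2
  rw [h5] at h1
  rw [h1] at hst
  rw [h2] at hGL
  have hHpos : 0 < Nat.card {g // φ g = φ 1} := by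
    have : Nonempty {g // φ g = φ 1} := ⟨⟨1, rfl⟩⟩
    exact Nat.card_pos
  simp only [Fintype.card_fin, show 4 * 4 = 16 from rfl] at hst hGL
  have key : ∀ O T H G v s S c d e : ℕ, 0 < H → 0 < d → v * H * s = T * d → O * H * c = G * d →
      v * S = e → O * T * (c * S) = G * e * s := by
    intro O T H G v s S c d e hH hd h1 h2 h3
    refine Nat.eq_of_mul_eq_mul_right (Nat.mul_pos hH hd) ?_
    rw [← h3]
    linear_combination (T * S * d) * h2 - (S * d) * G * h1
  rw [pow_add]
  exact key _ _ _ _ _ _ _ _ _ _ hHpos (pow_pos hℓ0 (N * 16)) hst hGL hU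

end Orbit

/-! ### Isometries of an orthogonal sum of blocks -/

section Levi
variable {ℓ : ℕ} [Fact ℓ.Prime]

theorem isUnit_det_of_conj {ι A : Type*} [Fintype ι] [DecidableEq ι] [CommRing A]
    {w : ι → A} (hw : ∀ a, IsUnit (w a)) {m : Matrix ι ι A}
    (h : m * Matrix.diagonal w * mᵀ = Matrix.diagonal w) : IsUnit m.det := by
  have h1 := congrArg Matrix.det h
  rw [Matrix.det_mul, Matrix.det_mul, Matrix.det_diagonal] at h1
  have h2 : IsUnit (∏ a, w a) := by
    rw [IsUnit.prod_univ_iff]; exact hw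
  rw [← h1, mul_assoc] at h2
  exact isUnit_of_mul_isUnit_left h2

/-- A block-diagonal isometry of an orthogonal sum is a family of isometries of the summands. The two
sides use the opposite conventions `t * D * tᵀ` and `gᵀ * D * g`, exchanged by transposition. -/
theorem card_levi {A : Type*} [CommRing A] [Finite A] {r : ℕ} {n : Fin r → ℕ} {k : Fin r → ℕ}
    (hk : Function.Injective k) (w : ∀ i, Fin (n i) → A) (hw : ∀ i j, IsUnit (w i j))
    (e : ((i : Fin r) × Fin (n i)) ≃ Fin 4) :
    Nat.card {t : Matrix (Fin 4) (Fin 4) A //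
      (∀ a b, k (e.symm a).1 ≠ k (e.symm b).1 → t a b = 0) ∧
      t * Matrix.diagonal (fun a => w (e.symm a).1 (e.symm a).2) * tᵀ =
        Matrix.diagonal (fun a => w (e.symm a).1 (e.symm a).2)} =
    ∏ i, Nat.card {g : Matrix (Fin (n i)) (Fin (n i)) A // IsUnit g.det ∧
      gᵀ * Matrix.diagonal (w i) * g = Matrix.diagonal (w i)} := by
  rw [← Nat.card_pi]
  have hdiag : Matrix.diagonal (fun a => w (e.symm a).1 (e.symm a).2) =
      Matrix.reindex e e (Matrix.blockDiagonal' fun i => Matrix.diagonal (w i)) := by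
    rw [Matrix.blockDiagonal'_diagonal, Matrix.reindex_apply,
      Matrix.submatrix_diagonal _ _ e.symm.injective]
    rfl
  have hblock : ∀ M : ∀ i, Matrix (Fin (n i)) (Fin (n i)) A,
      Matrix.reindex e e (Matrix.blockDiagonal' M) *
        Matrix.reindex e e (Matrix.blockDiagonal' fun i => Matrix.diagonal (w i)) *
        (Matrix.reindex e e (Matrix.blockDiagonal' M))ᵀ =
      Matrix.reindex e e (Matrix.blockDiagonal' fun i => M i * Matrix.diagonal (w i) * (M i)ᵀ) := by
    intro M
    rw [Matrix.blockDiagonal'_mul, Matrix.blockDiagonal'_mul, ← Matrix.blockDiagonal'_transpose]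
    simp only [Matrix.reindex_apply, Matrix.transpose_submatrix, Matrix.submatrix_mul_equiv]
  symm
  refine Nat.card_congr (Equiv.ofBijective
    (fun M => ⟨Matrix.reindex e e (Matrix.blockDiagonal' fun i => (M i).1ᵀ), ?_, ?_⟩) ⟨?_, ?_⟩)
  · intro a b hab
    rw [Matrix.reindex_apply, Matrix.submatrix_apply]
    exact Matrix.blockDiagonal'_apply_ne _ _ _ fun h => hab (congrArg k h)
  · rw [hdiag, hblock]
    congr 2
    funext i
    rw [Matrix.transpose_transpose, (M i).2.2]
  · intro M M' h
    have h1 := Matrix.blockDiagonal'_injective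
      ((Matrix.reindex e e).injective (congrArg Subtype.val h))
    funext i
    exact Subtype.ext (Matrix.transpose_injective (congrFun h1 i))
  · rintro ⟨t, ht0, ht⟩
    let M : ∀ i, Matrix (Fin (n i)) (Fin (n i)) A :=
      Matrix.blockDiag' (Matrix.reindex e.symm e.symm t)
    have hM : t = Matrix.reindex e e (Matrix.blockDiagonal' M) := by
      ext a b
      obtain ⟨⟨i, x⟩, rfl⟩ := e.surjective a
      obtain ⟨⟨j, y⟩, rfl⟩ := e.surjective b
      rw [Matrix.reindex_apply, Matrix.submatrix_apply, e.symm_apply_apply, e.symm_apply_apply]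
      by_cases hij : i = j
      · subst hij
        rw [Matrix.blockDiagonal'_apply_eq]
        rfl
      · rw [Matrix.blockDiagonal'_apply_ne _ _ _ hij]
        exact ht0 _ _ (by simpa using fun h => hij (hk h))
    rw [hdiag, hM, hblock] at ht
    have h1 := Matrix.blockDiagonal'_injective ((Matrix.reindex e e).injective ht)
    refine ⟨fun i => ⟨(M i)ᵀ, ?_, ?_⟩, ?_⟩
    · rw [Matrix.det_transpose]
      exact isUnit_det_of_conj (hw i) (congrFun h1 i)
    · rw [Matrix.transpose_transpose]
      exact congrFun h1 i
    · refine Subtype.ext ?_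
      simp only [Matrix.transpose_transpose]
      exact hM.symm

end Levi

/-! ### Haar measure of conditions modulo `ℓ^N` -/

section Haar
variable {ℓ : ℕ} [Fact ℓ.Prime]

/-- Reduction modulo `ℓ^N` of a symmetric matrix. -/
noncomputable def symRed (ℓ : ℕ) [Fact ℓ.Prime] (N : ℕ) (B : Sym4 ℓ) :
    Matrix (Fin 4) (Fin 4) (ZMod (ℓ ^ N)) := B.1.map (PadicInt.toZModPow N)

theorem toZModPow_eq_iff (N : ℕ) (x y : ℤ_[ℓ]) :
    PadicInt.toZModPow N x = PadicInt.toZModPow N y ↔ ‖x - y‖ ≤ (ℓ : ℝ) ^ (-N : ℤ) := by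
  rw [PadicInt.norm_le_pow_iff_mem_span_pow, ← PadicInt.ker_toZModPow, RingHom.mem_ker, map_sub,
    sub_eq_zero]

theorem measurableSet_symRed_fiber (N : ℕ) (c : Matrix (Fin 4) (Fin 4) (ZMod (ℓ ^ N))) :
    MeasurableSet {B : Sym4 ℓ | symRed ℓ N B = c} := by
  obtain ⟨C, rfl⟩ := exists_map_eq c
  have : {B : Sym4 ℓ | symRed ℓ N B = C.map (PadicInt.toZModPow N)} =
      ⋂ a, ⋂ b, {B : Sym4 ℓ | ‖B.1 a b - C a b‖ ≤ (ℓ : ℝ) ^ (-N : ℤ)} := by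
    ext B
    simp only [Set.mem_ofPred_eq, Set.mem_iInter, ← toZModPow_eq_iff, symRed, ← Matrix.ext_iff,
      Matrix.map_apply]
  rw [this]
  refine (isClosed_iInter fun a => isClosed_iInter fun b => isClosed_le ?_
    continuous_const).measurableSet
  have : Continuous fun B : Sym4 ℓ => B.1 a b := continuous_subtype_val.matrix_elem a b
  exact (this.sub continuous_const).norm

theorem measure_symRed_fiber (N : ℕ) (μ : Measure (Sym4 ℓ))
    (hinv : ∀ B : Sym4 ℓ, μ.map (fun A : Sym4 ℓ => (⟨A.1 + B.1, A.2.add B.2⟩ : Sym4 ℓ)) = μ)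
    (B : Sym4 ℓ) : μ.real {A | symRed ℓ N A = symRed ℓ N B} = μ.real {A | symRed ℓ N A = 0} := by
  have hm : Measurable (fun A : Sym4 ℓ => (⟨A.1 + B.1, A.2.add B.2⟩ : Sym4 ℓ)) :=
    (Continuous.subtype_mk (continuous_subtype_val.add continuous_const) _).measurable
  conv_lhs => rw [← hinv B]
  rw [measureReal_def, Measure.map_apply hm (measurableSet_symRed_fiber N _), measureReal_def]
  congr 2
  ext A
  simp only [Set.mem_preimage, Set.mem_ofPred_eq, symRed]
  rw [Matrix.map_add _ (map_add _), add_eq_right]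

theorem exists_symRed_eq (N : ℕ) (c : Matrix (Fin 4) (Fin 4) (ZMod (ℓ ^ N))) (hc : c.IsSymm) :
    ∃ B : Sym4 ℓ, symRed ℓ N B = c := by
  choose s hs using ZMod.ringHom_surjective (PadicInt.toZModPow (p := ℓ) N)
  refine ⟨⟨c.map s, by rw [Matrix.IsSymm, ← Matrix.transpose_map, hc]⟩, ?_⟩
  ext a b
  simp [symRed, hs]

/-- Under a translation-invariant probability measure, a condition modulo `ℓ^N` has measure the
proportion of symmetric matrices over `ℤ/ℓ^N` satisfying it. -/
theorem measure_symRed_preimage (N : ℕ) (μ : Measure (Sym4 ℓ)) [IsProbabilityMeasure μ]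
    (hinv : ∀ B : Sym4 ℓ, μ.map (fun A : Sym4 ℓ => (⟨A.1 + B.1, A.2.add B.2⟩ : Sym4 ℓ)) = μ)
    (P : Matrix (Fin 4) (Fin 4) (ZMod (ℓ ^ N)) → Prop) (hP : ∀ c, P c → c.IsSymm) :
    MeasurableSet {B | P (symRed ℓ N B)} ∧
    μ.real {B | P (symRed ℓ N B)} * ℓ ^ (N * 10) = Nat.card {c // P c} := by
  classical
  have main : ∀ P : Matrix (Fin 4) (Fin 4) (ZMod (ℓ ^ N)) → Prop, (∀ c, P c → c.IsSymm) →
      MeasurableSet {B | P (symRed ℓ N B)} ∧ μ.real {B | P (symRed ℓ N B)} =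
        Nat.card {c // P c} * μ.real {A | symRed ℓ N A = 0} := by
    intro P hP
    have hfin : {c | P c}.Finite := Set.toFinite _
    have hU : {B | P (symRed ℓ N B)} = ⋃ c ∈ hfin.toFinset, {B | symRed ℓ N B = c} := by
      ext B; simp
    rw [hU]
    refine ⟨Finset.measurableSet_biUnion _ fun c _ => measurableSet_symRed_fiber N c, ?_⟩
    rw [measureReal_biUnion_finset ?_ fun c _ => measurableSet_symRed_fiber N c,
      Finset.sum_congr rfl (g := fun _ => μ.real {A | symRed ℓ N A = 0}), Finset.sum_const,
      nsmul_eq_mul]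
    · congr 2
      rw [← Set.ncard_eq_toFinset_card]; rfl
    · intro c hc
      obtain ⟨B, rfl⟩ := exists_symRed_eq N c (hP c (by simpa using hc))
      exact measure_symRed_fiber N μ hinv B
    · intro c _ c' _ hcc'
      exact Set.disjoint_left.2 fun B hB hB' => hcc' (hB.symm.trans hB')
  obtain ⟨-, hall⟩ := main (fun c => c.IsSymm) (fun _ h => h)
  have huniv : {B : Sym4 ℓ | (symRed ℓ N B).IsSymm} = Set.univ := by
    refine Set.eq_univ_of_forall fun B => ?_
    rw [Set.mem_ofPred_eq, Matrix.IsSymm, symRed, ← Matrix.transpose_map, B.2]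
  have hcard : Nat.card {c : Matrix (Fin 4) (Fin 4) (ZMod (ℓ ^ N)) // c.IsSymm} = ℓ ^ (N * 10) := by
    have := card_symm_box (ℓ := ℓ) (N := N) (fun _ _ => 0) (fun _ _ => Nat.zero_le _)
      (fun _ _ => rfl) 0 (by simp [Matrix.IsSymm])
    simpa using this
  rw [huniv, hcard, probReal_univ] at hall
  obtain ⟨hm, hμ⟩ := main P hP
  refine ⟨hm, ?_⟩
  rw [hμ, mul_assoc, mul_comm (μ.real _)]
  push_cast at hall
  rw [← hall, mul_one]

end Haar

/-! ### Order of `GL₄(𝔽_ℓ)` and comparison of the exponents -/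

section Exponents
variable {ℓ : ℕ} [Fact ℓ.Prime]

theorem card_GL_four :
    (Nat.card {m : Matrix (Fin 4) (Fin 4) (ZMod ℓ) // IsUnit m.det} : ℝ) =
      (ℓ : ℝ) ^ 6 * (((ℓ : ℝ) - 1) * ((ℓ : ℝ) ^ 2 - 1) * ((ℓ : ℝ) ^ 3 - 1) * ((ℓ : ℝ) ^ 4 - 1)) := by
  have h1 := card_GL_subtype (ι := Fin 4) (A := ZMod ℓ) (fun _ => True)
  simp only [and_true] at h1
  rw [← h1, Nat.card_congr (Equiv.subtypeUnivEquiv fun _ => trivial), Matrix.card_GL_field,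
    ZMod.card, Fin.prod_univ_four]
  have hℓ1 : 1 ≤ ℓ := (Fact.out : ℓ.Prime).one_le
  have h : ∀ i : ℕ, i ≤ 4 → ((ℓ ^ 4 - ℓ ^ i : ℕ) : ℝ) = (ℓ : ℝ) ^ 4 - (ℓ : ℝ) ^ i := by
    intro i hi
    rw [Nat.cast_sub (Nat.pow_le_pow_right hℓ1 hi)]
    push_cast; rfl
  rw [Nat.cast_mul, Nat.cast_mul, Nat.cast_mul, h _ (by decide), h _ (by decide), h _ (by decide),
    h _ (by decide)]
  norm_num
  ring

theorem two_mul_sum_upper (g : Fin 4 → Fin 4 → ℕ) (hg : ∀ a b, g a b = g b a) :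
    2 * ∑ p : {p : Fin 4 × Fin 4 // p.1 ≤ p.2}, g p.1.1 p.1.2 =
      (∑ a, ∑ b, g a b) + ∑ a, g a a := by
  have h1 : ∑ p : {p : Fin 4 × Fin 4 // p.1 ≤ p.2}, g p.1.1 p.1.2 =
      ∑ a, ∑ b, if a ≤ b then g a b else 0 := by
    rw [← Fintype.sum_prod_type' (fun a b => if a ≤ b then g a b else 0), ← Finset.sum_filter]
    exact (Finset.sum_subtype (Finset.univ.filter fun p : Fin 4 × Fin 4 => p.1 ≤ p.2)
      (by simp) (fun p => g p.1 p.2)).symm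
  rw [h1]
  simp only [Fin.sum_univ_four]
  simp [hg 1 0, hg 2 0, hg 3 0, hg 2 1, hg 3 1, hg 3 2]
  ring

/-- The combinatorial identity matching the exponent of `ℓ` given by the count with the exponent in
the formula; it is doubled, and both sides are rewritten as sums over pairs of blocks. -/
theorem exponent_identity {r : ℕ} {k n : Fin r → ℕ} (hk : StrictMono k) (hsum : ∑ i, n i = 4)
    (e : ((i : Fin r) × Fin (n i)) ≃ Fin 4) (kr Eexp : ℕ)
    (hEexp : Eexp = (∑ i : Fin r, ∑ j : Fin r, if j < i then n i * n j * (kr + 1 + k j) else 0) +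
      ∑ i : Fin r, (k i * (n i * (n i + 1) / 2) + kr * (n i * (n i - 1) / 2))) :
    (∑ a, ∑ b, stabExp (fun a => k (e.symm a).1) a b) + Eexp = 6 * kr + 6 +
      ∑ p : {p : Fin 4 × Fin 4 // p.1 ≤ p.2}, nbhdExp (fun a => k (e.symm a).1) p.1.1 p.1.2 := by
  have hsig : ∀ f : Fin r → ℕ, ∑ a, f (e.symm a).1 = ∑ i, n i * f i := by
    intro f
    rw [e.symm.sum_comp (fun s => f s.1), Fintype.sum_sigma]
    simp
  have hsig2 : ∀ f : Fin r → Fin r → ℕ, ∑ a, ∑ b, f (e.symm a).1 (e.symm b).1 =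
      ∑ i, ∑ j, n i * n j * f i j := by
    intro f
    simp only [hsig (f _), mul_assoc, ← Finset.mul_sum]
    exact hsig (fun i => ∑ j, n j * f i j)
  have hdiag : ∀ f : Fin r → ℕ, ∑ i, f i = ∑ i, ∑ j, if i = j then f i else 0 := by
    intro f; simp
  have hstab := hsig2 (fun i j => (k i - k j) + if k i = k j then 1 else 0)
  have hstab' : (∑ i, ∑ j, n i * n j * ((k i - k j) + if k i = k j then 1 else 0)) =
      ∑ i, ∑ j, n i * n j * ((k j - k i) + if k i = k j then 1 else 0) := by
    rw [Finset.sum_comm]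
    refine Finset.sum_congr rfl fun i _ => Finset.sum_congr rfl fun j _ => ?_
    simp only [eq_comm, mul_comm]
  have hlow : (∑ i : Fin r, ∑ j : Fin r, if j < i then n i * n j * (kr + 1 + k j) else 0) =
      ∑ i : Fin r, ∑ j : Fin r, if i < j then n i * n j * (kr + 1 + k i) else 0 := by
    rw [Finset.sum_comm]
    refine Finset.sum_congr rfl fun i _ => Finset.sum_congr rfl fun j _ => ?_
    rw [mul_comm (n j)]
  have hup := two_mul_sum_upper (nbhdExp (fun a => k (e.symm a).1))
    (fun a b => by simp [nbhdExp, max_comm, eq_comm])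
  have hup1 := hsig2 (fun i j => max (k i) (k j) + if k i = k j then 1 else 0)
  have hup2 := hsig (fun i => k i + 1)
  have htot : 16 * (kr + 1) = ∑ i, ∑ j, n i * n j * (kr + 1) := by
    simp only [← Finset.sum_mul, ← Finset.mul_sum, hsum]
    rfl
  have htot1 : 4 * (kr + 1) = ∑ i, n i * (kr + 1) := by
    rw [← Finset.sum_mul, hsum]
  have hhalf : 2 * ∑ i : Fin r, (k i * (n i * (n i + 1) / 2) + kr * (n i * (n i - 1) / 2)) =
      ∑ i, (k i * (n i * (n i + 1)) + kr * (n i * (n i - 1))) := by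
    rw [Finset.mul_sum]
    refine Finset.sum_congr rfl fun i _ => ?_
    have h1 := Nat.two_mul_div_two_of_even (Nat.even_mul_succ_self (n i))
    have h2 := Nat.two_mul_div_two_of_even (Nat.even_mul_pred_self (n i))
    linear_combination k i * h1 + kr * h2
  -- after symmetrising in `(i, j)` the identity holds term by term
  have hpt : (∑ i, ∑ j, n i * n j * ((k i - k j) + if k i = k j then 1 else 0)) +
      (∑ i, ∑ j, n i * n j * ((k j - k i) + if k i = k j then 1 else 0)) +
      (∑ i : Fin r, ∑ j : Fin r, if j < i then n i * n j * (kr + 1 + k j) else 0) +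
      (∑ i : Fin r, ∑ j : Fin r, if i < j then n i * n j * (kr + 1 + k i) else 0) +
      (∑ i, (k i * (n i * (n i + 1)) + kr * (n i * (n i - 1)))) + (∑ i, n i * (kr + 1)) =
      (∑ i, ∑ j, n i * n j * (kr + 1)) +
      (∑ i, ∑ j, n i * n j * (max (k i) (k j) + if k i = k j then 1 else 0)) +
      ∑ i, n i * (k i + 1) := by
    rw [hdiag (fun i => k i * (n i * (n i + 1)) + kr * (n i * (n i - 1))),
      hdiag (fun i => n i * (kr + 1)), hdiag (fun i => n i * (k i + 1))]
    simp only [← Finset.sum_add_distrib]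
    refine Finset.sum_congr rfl fun i _ => Finset.sum_congr rfl fun j _ => ?_
    rcases lt_trichotomy i j with h | rfl | h
    · have hlt := hk h
      obtain ⟨d, hd⟩ := Nat.exists_eq_add_of_lt hlt
      simp only [h, h.ne, h.not_gt, hlt.ne, if_true, if_false, max_eq_right hlt.le,
        Nat.sub_eq_zero_of_le hlt.le, show k j - k i = d + 1 by omega]
      rw [hd]; ring
    · simp only [lt_irrefl, if_true, if_false, max_self, Nat.sub_self]
      rcases Nat.eq_zero_or_pos (n i) with h0 | h0
      · simp [h0]
      · obtain ⟨m, hm⟩ := Nat.exists_eq_add_of_lt h0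
        simp only [hm, Nat.add_sub_cancel]
        ring
    · have hlt := hk h
      obtain ⟨d, hd⟩ := Nat.exists_eq_add_of_lt hlt
      simp only [h, h.ne', h.not_gt, hlt.ne', if_true, if_false, max_eq_left hlt.le,
        Nat.sub_eq_zero_of_le hlt.le, show k i - k j = d + 1 by omega]
      rw [hd]; ring
  simp only [stabExp, nbhdExp, if_true, max_self] at hup ⊢
  rw [hstab]
  rw [hup1, hup2] at hup
  omega

end Exponents

/-! ### The measure of `E(Λ)` -/

theorem stmt_9 (ℓ : ℕ) [Fact ℓ.Prime] (hℓ : ℓ ≠ 2)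
    (z : ℤ_[ℓ]) (hz : IsUnit z) (hznsq : ¬ ∃ y : ℤ_[ℓ], y * y = z)
    (r : ℕ) (hr : 0 < r) (k : Fin r → ℕ) (hk : StrictMono k)
    (n : Fin r → ℕ) (hn : ∀ i, 0 < n i) (hsum : ∑ i, n i = 4)
    (Λb : ∀ i : Fin r, Matrix (Fin (n i)) (Fin (n i)) ℤ_[ℓ])
    (hΛb : ∀ i, Λb i = 1 ∨
      Λb i = Matrix.diagonal (fun j : Fin (n i) => if (j : ℕ) = n i - 1 then z else 1))
    -- `k_r` (the largest exponent)
    (kr : ℕ) (hkr : kr = k ⟨r - 1, Nat.sub_lt hr Nat.one_pos⟩)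
    -- `Λ` regarded as a `4×4` matrix via an identification of the index set with `Fin 4`
    (e : ((i : Fin r) × Fin (n i)) ≃ Fin 4)
    (Λ : Matrix (Fin 4) (Fin 4) ℤ_[ℓ])
    (hΛ : Λ = Matrix.reindex e e (stdBlockForm ℓ r k n Λb))
    -- the congruence class `E(Λ) ⊆ Sym₄(ℤ_ℓ)`
    (EΛ : Set (Sym4 ℓ))
    (hEΛ : EΛ = {B : Sym4 ℓ | ∃ D : Matrix (Fin 4) (Fin 4) ℤ_[ℓ],
      IsUnit D.det ∧ (B : Matrix (Fin 4) (Fin 4) ℤ_[ℓ]) = D * Λ * Dᵀ})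
    -- the exponent `E` in the denominator
    (Eexp : ℕ)
    (hEexp : Eexp = (∑ i : Fin r, ∑ j : Fin r, if j < i then n i * n j * (kr + 1 + k j) else 0) +
      ∑ i : Fin r, (k i * (n i * (n i + 1) / 2) + kr * (n i * (n i - 1) / 2)))
    -- the Haar probability measure `μ` on `Sym₄(ℤ_ℓ)` (characterized as a
    -- translation-invariant Borel probability measure)
    (μ : Measure (Sym4 ℓ)) (hprob : IsProbabilityMeasure μ)
    (hinv : ∀ B : Sym4 ℓ, μ.map (fun A : Sym4 ℓ => (⟨A.1 + B.1, A.2.add B.2⟩ : Sym4 ℓ)) = μ) :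
    -- every `B ∈ E(Λ)` has nonzero determinant, of valuation `∑ᵢ kᵢ nᵢ`
    (∀ B ∈ EΛ, (B : Matrix (Fin 4) (Fin 4) ℤ_[ℓ]).det ≠ 0 ∧
      ((B : Matrix (Fin 4) (Fin 4) ℤ_[ℓ]).det).valuation = (∑ i : Fin r, k i * n i : ℕ)) ∧
    -- `∫_{E(Λ)} χ^{v_ℓ(det B)} dμ(B)` equals the stated rational expression
    ∫ B in EΛ, ((legendreSym ℓ (-1) : ℝ) ^ ((B : Matrix (Fin 4) (Fin 4) ℤ_[ℓ]).det).valuation) ∂μ =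
      (legendreSym ℓ (-1) : ℝ) ^ (∑ i : Fin r, k i * n i) *
        ((ℓ : ℝ) ^ (6 * (kr : ℤ) - 4) *
          (((ℓ : ℝ) - 1) * ((ℓ : ℝ) ^ 2 - 1) * ((ℓ : ℝ) ^ 3 - 1) * ((ℓ : ℝ) ^ 4 - 1)) /
          ((ℓ : ℝ) ^ Eexp *
            ∏ i : Fin r,
              (Nat.card {g : Matrix (Fin (n i)) (Fin (n i)) (ZMod ℓ) //
                IsUnit g.det ∧
                gᵀ * (Λb i).map (PadicInt.toZMod) * g = (Λb i).map (PadicInt.toZMod)} : ℝ))) := by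
  have hℓ0 : (ℓ : ℝ) ≠ 0 := by exact_mod_cast (Fact.out : ℓ.Prime).ne_zero
  obtain ⟨w, hw, hΛw⟩ : ∃ w : ∀ i, Fin (n i) → ℤ_[ℓ], (∀ i j, IsUnit (w i j)) ∧
      ∀ i, Λb i = Matrix.diagonal (w i) := by
    have : ∀ i, ∃ w : Fin (n i) → ℤ_[ℓ], (∀ j, IsUnit (w j)) ∧ Λb i = Matrix.diagonal w := by
      intro i
      rcases hΛb i with h | h
      · exact ⟨fun _ => 1, fun _ => isUnit_one, by rw [h, Matrix.diagonal_one]⟩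
      · refine ⟨_, fun j => ?_, h⟩
        split_ifs
        exacts [hz, isUnit_one]
    choose w hw using this
    exact ⟨w, fun i => (hw i).1, fun i => (hw i).2⟩
  let κ : Fin 4 → ℕ := fun a => k (e.symm a).1
  let u : Fin 4 → ℤ_[ℓ] := fun a => w (e.symm a).1 (e.symm a).2
  have hu : ∀ a, IsUnit (u a) := fun a => hw _ _
  have hΛd : Λ = diagForm ℓ κ u := by
    have h1 : stdBlockForm ℓ r k n Λb =
        Matrix.diagonal fun s => (ℓ : ℤ_[ℓ]) ^ k s.1 * w s.1 s.2 := by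
      rw [stdBlockForm, ← Matrix.blockDiagonal'_diagonal (fun i j => (ℓ : ℤ_[ℓ]) ^ k i * w i j)]
      congr 1
      funext i
      rw [hΛw i, ← Matrix.diagonal_smul]
      rfl
    rw [hΛ, h1, Matrix.reindex_apply, Matrix.submatrix_diagonal _ _ e.symm.injective]
    rfl
  have hN : ∀ a, κ a < kr + 1 := by
    intro a
    rw [Nat.lt_succ_iff, hkr]
    exact hk.monotone (Fin.le_def.2 (Nat.le_sub_one_of_lt (e.symm a).1.2))
  have hN0 : kr + 1 ≠ 0 := kr.succ_ne_zero
  have hval : ∀ B ∈ EΛ, (B : Matrix (Fin 4) (Fin 4) ℤ_[ℓ]).det ≠ 0 ∧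
      ((B : Matrix (Fin 4) (Fin 4) ℤ_[ℓ]).det).valuation = (∑ i : Fin r, k i * n i : ℕ) := by
    intro B hB
    rw [hEΛ] at hB
    obtain ⟨D, hD, hB⟩ := hB
    have hdet : (B : Matrix (Fin 4) (Fin 4) ℤ_[ℓ]).det =
        (ℓ : ℤ_[ℓ]) ^ (∑ i, k i * n i) * (D.det * D.det * ∏ a, u a) := by
      rw [hB, Matrix.det_mul, Matrix.det_mul, Matrix.det_transpose, hΛd, diagForm,
        Matrix.det_diagonal, Finset.prod_mul_distrib, Finset.prod_pow_eq_pow_sum]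
      have : ∑ a, κ a = ∑ i, k i * n i := by
        rw [e.symm.sum_comp (fun s => k s.1), Fintype.sum_sigma]
        simp [mul_comm]
      rw [this]; ring
    have hunit : IsUnit (D.det * D.det * ∏ a, u a) :=
      (hD.mul hD).mul (IsUnit.prod_univ_iff.2 hu)
    have hne := hunit.ne_zero
    rw [hdet]
    refine ⟨mul_ne_zero (pow_ne_zero _ (NeZero.ne _)) hne, ?_⟩
    rw [PadicInt.valuation_p_pow_mul _ _ hne]
    have h0 : (D.det * D.det * ∏ a, u a).valuation = 0 := by
      have h2 := PadicInt.norm_eq_zpow_neg_valuation hne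
      rw [PadicInt.isUnit_iff.1 hunit] at h2
      by_contra h3
      have h4 : (1 : ℝ) < ℓ := by exact_mod_cast (Fact.out : ℓ.Prime).one_lt
      have h5 := (zpow_lt_one_iff_right₀ h4).2
        (show -((D.det * D.det * ∏ a, u a).valuation : ℤ) < 0 by omega)
      rw [← h2] at h5
      exact lt_irrefl _ h5
    rw [h0, add_zero]
  refine ⟨hval, ?_⟩
  -- `E(Λ)` is a union of residue classes modulo `ℓ^(k_r + 1)`
  let L := (diagForm ℓ κ u).map (PadicInt.toZModPow (p := ℓ) (kr + 1))
  have hLs : Lᵀ = L := by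
    simp only [L]
    rw [← Matrix.transpose_map, diagForm_isSymm]
  have hE : EΛ = {B | ∃ m, IsUnit m.det ∧ m * L * mᵀ = symRed ℓ (kr + 1) B} := by
    rw [hEΛ, hΛd]
    ext B
    constructor
    · rintro ⟨D, hD, hB⟩
      refine ⟨D.map (PadicInt.toZModPow (kr + 1)), (isUnit_det_map hN0 D).2 hD, ?_⟩
      rw [symRed, hB, Matrix.map_mul, Matrix.map_mul, Matrix.transpose_map]
    · rintro ⟨m, hm, hB⟩
      obtain ⟨D, rfl⟩ := exists_map_eq m
      refine exists_congr_of_sub_dvd hℓ κ u hu hN B.1 B.2 D ((isUnit_det_map hN0 D).1 hm) ?_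
      intro a b
      rw [← pow_dvd_toZModPow_sub le_rfl]
      have h2 : (D * diagForm ℓ κ u * Dᵀ).map (PadicInt.toZModPow (kr + 1)) =
          symRed ℓ (kr + 1) B := by
        rw [← hB, Matrix.map_mul, Matrix.map_mul, Matrix.transpose_map]
      have h3 := congrFun (congrFun h2 a) b
      rw [Matrix.map_apply, symRed, Matrix.map_apply] at h3
      rw [h3, sub_self]
      exact dvd_zero _
  obtain ⟨hmeas, hvol⟩ := measure_symRed_preimage (kr + 1) μ hinv
    (fun x => ∃ m, IsUnit m.det ∧ m * L * mᵀ = x) (by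
      rintro c ⟨m, -, rfl⟩
      exact conj_isSymm hLs m)
  rw [← hE] at hmeas hvol
  rw [setIntegral_congr_fun hmeas (g := fun _ => (legendreSym ℓ (-1) : ℝ) ^ (∑ i, k i * n i))
    (fun B hB => by simp only [(hval B hB).2]), setIntegral_const, smul_eq_mul, mul_comm]
  congr 1
  have horb := card_orbit hℓ κ u hu hN L rfl
  have hlevi := card_levi hk.injective (fun i j => PadicInt.toZMod (w i j))
    (fun i j => (hw i j).map _) e
  have hO : ∀ i, (Λb i).map PadicInt.toZMod =
      Matrix.diagonal (fun j => PadicInt.toZMod (w i j)) := by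
    intro i
    rw [hΛw i, Matrix.diagonal_map (map_zero _)]
  simp only [hO]
  rw [hlevi] at horb
  have hexp := exponent_identity hk hsum e kr Eexp hEexp
  have hOpos : (∏ i, (Nat.card {g : Matrix (Fin (n i)) (Fin (n i)) (ZMod ℓ) // IsUnit g.det ∧
      gᵀ * Matrix.diagonal (fun j => PadicInt.toZMod (w i j)) * g =
        Matrix.diagonal (fun j => PadicInt.toZMod (w i j))} : ℝ)) ≠ 0 := by
    refine Finset.prod_ne_zero_iff.2 fun i _ => Nat.cast_ne_zero.2 ?_
    have : Nonempty {g : Matrix (Fin (n i)) (Fin (n i)) (ZMod ℓ) // IsUnit g.det ∧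
        gᵀ * Matrix.diagonal (fun j => PadicInt.toZMod (w i j)) * g =
          Matrix.diagonal (fun j => PadicInt.toZMod (w i j))} := ⟨⟨1, by simp⟩⟩
    exact Nat.card_pos.ne'
  have horb' := congrArg (Nat.cast : ℕ → ℝ) horb
  push_cast at horb'
  rw [card_GL_four, ← hvol] at horb'
  rw [eq_div_iff (mul_ne_zero (pow_ne_zero _ hℓ0) hOpos)]
  have hz6 : (ℓ : ℝ) ^ (6 * (kr : ℤ) - 4) * (ℓ : ℝ) ^ 4 = (ℓ : ℝ) ^ (6 * kr) := by
    rw [← zpow_natCast, ← zpow_natCast, ← zpow_add₀ hℓ0]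
    congr 1
    push_cast
    ring
  have hexp' : (ℓ : ℝ) ^ (∑ a, ∑ b, stabExp κ a b) * (ℓ : ℝ) ^ Eexp = (ℓ : ℝ) ^ (6 * kr) *
      (ℓ : ℝ) ^ 6 * (ℓ : ℝ) ^ (∑ p : {p : Fin 4 × Fin 4 // p.1 ≤ p.2}, nbhdExp κ p.1.1 p.1.2) := by
    rw [← pow_add, ← pow_add, ← pow_add, hexp]
  rw [pow_add] at horb'
  have key : ∀ V T G Z s S d F K : ℝ, S ≠ 0 → d ≠ 0 → s ≠ 0 →
      V * d * T * ((ℓ : ℝ) ^ 16 * S) = (ℓ : ℝ) ^ 6 * G * d * s → Z * (ℓ : ℝ) ^ 4 = K →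
      s * F = K * (ℓ : ℝ) ^ 6 * S → V * (F * T) = Z * G := by
    intro V T G Z s S d F K hS hd hs h1 h2 h3
    refine mul_right_cancel₀ (mul_ne_zero (mul_ne_zero (mul_ne_zero (pow_ne_zero 16 hℓ0) hS) hd) hs)
      ?_
    linear_combination (F * s) * h1 - (G * (ℓ : ℝ) ^ 12 * S * d * s) * h2 +
      (ℓ : ℝ) ^ 6 * G * d * s * h3
  exact key _ _ _ _ _ _ _ _ _ (pow_ne_zero _ hℓ0) (pow_ne_zero _ hℓ0) (pow_ne_zero _ hℓ0)
    horb' hz6 hexp'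
end

section
/- Let ℓ be an odd prime and χ = (−1/ℓ) ∈ {±1} the Legendre symbol of −1 modulo ℓ. Define f : Sym₄(ℤ_ℓ) → ℝ by f(B) = χ^{v_ℓ(det B)} if det B ≠ 0 and f(B) = 0 if det B = 0. Then f is integrable with respect to the Haar probability measure μ on Sym₄(ℤ_ℓ) and ∫_{Sym₄(ℤ_ℓ)} f dμ = ((χ·ℓ⁵ − 1)(ℓ − 1)) / ((ℓ⁵ − 1)(χ·ℓ − 1)). (Equivalently, the integral equals 1 when ℓ ≡ 1 mod 4 and (ℓ⁵+1)(ℓ−1)/((ℓ⁵−1)(ℓ+1)) when ℓ ≡ 3 mod 4.) -/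
/-!
For `t = ±1` the mean of `t ^ v(det)` over symmetric matrices over `ℤ_p` is computed by a pivoting
recursion. The intermediate objects are Haar random symmetric matrices of size `n` in which `k`
rows (and columns) are known to be divisible by `p`. Inspect the diagonal entry of a row not yet
known to be divisible by `p`: with probability `1 - 1/p` it is a unit, and a block of size `1` is
split off. Otherwise inspect the remaining entries of that row one by one. At the first unit a block
of size `2` is split off, invertible because one of its diagonal entries is divisible by `p`; if no
unit occurs, one more row is divisible by `p`. When all rows are divisible by `p`, dividing the
matrix by `p` multiplies the integrand by `t ^ n` and returns to the unrestricted case. This gives an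
affine equation for the mean, with a unique solution.

The probabilistic input is light. An unrestricted entry is equidistributed modulo `p`
(`IsHaar.measure_dvd`), and the Schur complement of an invertible block is again Haar distributed,
since translating the complementary block commutes with taking the Schur complement
(`integral_eq_of_pivot`). These combine to the conditioning step `Val.split`; `Val.scale` is the
division by `p`. That the mean does not depend on the choice of the invariant measure
(`IsHaar.integral_eq`) lets `SizeVal.close` close the equation. The recursion is solved up to size
`4` in `sizeVal_four`, with explicit values for `t = 1` and `t = -1`. All sizes are kept inside
`4 × 4` matrices by extending a block with the identity.
-/

open Matrix MeasureTheory

-- The function `B ↦ χ^{v_ℓ(det B)}` (and `0` when `det B = 0`), where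
-- `χ = (−1/ℓ)` is the Legendre symbol of `−1` mod `ℓ`.
open Classical in
noncomputable def chiValDet (ℓ : ℕ) [Fact ℓ.Prime] (B : Sym4 ℓ) : ℝ :=
  if (B : Matrix (Fin 4) (Fin 4) ℤ_[ℓ]).det ≠ 0 then
    (legendreSym ℓ (-1) : ℝ) ^ ((B : Matrix (Fin 4) (Fin 4) ℤ_[ℓ]).det).valuation
  else 0

noncomputable section

namespace SymDet

open ProbabilityTheory

variable {p : ℕ} [hp : Fact p.Prime]

local notation "𝕄" => Matrix (Fin 4) (Fin 4) ℤ_[p]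

instance : CompactSpace 𝕄 := inferInstanceAs (CompactSpace (Fin 4 → Fin 4 → ℤ_[p]))

instance : SecondCountableTopology 𝕄 :=
  inferInstanceAs (SecondCountableTopology (Fin 4 → Fin 4 → ℤ_[p]))

/-! ### The integrand -/

open Classical in
/-- `d ↦ t ^ v(d)` on `ℤ_p`, extended by `0` at `d = 0`. -/
def tval (t : ℝ) (d : ℤ_[p]) : ℝ := if d ≠ 0 then t ^ d.valuation else 0

lemma abs_tval_le {t : ℝ} (ht : |t| = 1) (d : ℤ_[p]) : ‖tval t d‖ ≤ 1 := by
  unfold tval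
  split_ifs
  · rw [Real.norm_eq_abs, abs_pow, ht, one_pow]
  · simp

lemma tval_unit_mul (t : ℝ) {u : ℤ_[p]} (hu : IsUnit u) (d : ℤ_[p]) :
    tval t (u * d) = tval t d := by
  unfold tval
  by_cases hd : d = 0
  · simp [hd]
  · have hu0 : u ≠ 0 := hu.ne_zero
    have hv : u.valuation = 0 := by
      have h1 := PadicInt.isUnit_iff.1 hu
      rw [PadicInt.norm_eq_zpow_neg_valuation hu0] at h1
      have hp1 : (1 : ℝ) < p := by exact_mod_cast hp.out.one_lt
      have := (zpow_eq_one_iff_right₀ (by positivity) hp1.ne').1 h1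
      omega
    rw [if_pos (mul_ne_zero hu0 hd), if_pos hd, PadicInt.valuation_mul hu0 hd, hv, zero_add]

lemma p_ne_zero : (p : ℤ_[p]) ≠ 0 := by exact_mod_cast hp.out.ne_zero

lemma tval_p_pow_mul (t : ℝ) (n : ℕ) (d : ℤ_[p]) :
    tval t ((p : ℤ_[p]) ^ n * d) = t ^ n * tval t d := by
  unfold tval
  by_cases hd : d = 0
  · simp [hd]
  · have h0 : (p : ℤ_[p]) ^ n ≠ 0 := pow_ne_zero _ p_ne_zero
    rw [if_pos (mul_ne_zero h0 hd), if_pos hd, PadicInt.valuation_mul h0 hd,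
      PadicInt.valuation_pow, PadicInt.valuation_p, pow_add, mul_one]

lemma measurable_tval_det (t : ℝ) : Measurable fun A : 𝕄 => tval t A.det := by
  classical
  have hdet : Continuous fun A : 𝕄 => A.det := continuous_id.matrix_det
  -- The integrand factors through the countable-valued invariant `0 ↦ 0`, `d ↦ v(d) + 1`.
  let N : 𝕄 → ℕ := fun A => if A.det = 0 then 0 else A.det.valuation + 1
  let g : ℕ → ℝ := fun n => if n = 0 then 0 else t ^ (n - 1)
  have hN : Measurable N := by
    refine measurable_to_countable' fun n => ?_
    rcases n with _ | n
    · have : N ⁻¹' {0} = {A : 𝕄 | A.det = 0} := by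
        ext A; simp [N]
      rw [this]
      exact (isClosed_eq hdet continuous_const).measurableSet
    · have : N ⁻¹' {n + 1} = {A : 𝕄 | ‖A.det‖ = (p : ℝ) ^ (-(n : ℤ))} := by
        have hp1 : (1 : ℝ) < p := by exact_mod_cast hp.out.one_lt
        ext A
        by_cases h : A.det = 0
        · have : (0 : ℝ) ≠ (p : ℝ) ^ (-(n : ℤ)) := by positivity
          simp [N, h] at this ⊢
          exact this
        · simp only [N, h, Set.mem_preimage, Set.mem_singleton_iff, if_false, Set.mem_ofPred_eq,
            PadicInt.norm_eq_zpow_neg_valuation h]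
          rw [(zpow_right_injective₀ (by positivity) hp1.ne').eq_iff]
          omega
      rw [this]
      exact (isClosed_eq hdet.norm continuous_const).measurableSet
  have : (fun A : 𝕄 => tval t A.det) = g ∘ N := by
    funext A
    by_cases h : A.det = 0 <;> simp [tval, g, N, h]
  rw [this]
  exact (measurable_of_countable g).comp hN

lemma integrable_tval {α : Type*} [MeasurableSpace α] (μ : Measure α) [IsFiniteMeasure μ]
    {t : ℝ} (ht : |t| = 1) {φ : α → 𝕄} (hφ : AEMeasurable φ μ) :
    Integrable (fun x => tval t (φ x).det) μ :=
  Integrable.of_bound ((measurable_tval_det t).comp_aemeasurable hφ).aestronglyMeasurable 1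
    (Filter.Eventually.of_forall fun _ => abs_tval_le ht _)

/-! ### Haar measures on congruence patterns -/

/-- The group of symmetric matrices supported on `T × T` whose entries at the positions
`P ∩ (T × T)` are divisible by `p`. -/
def dirs (p : ℕ) [Fact p.Prime] (T : Finset (Fin 4)) (P : Fin 4 → Fin 4 → Prop) :
    Set (Matrix (Fin 4) (Fin 4) ℤ_[p]) :=
  {D | D.IsSymm ∧ (∀ i j, i ∉ T → D i j = 0) ∧
    ∀ i ∈ T, ∀ j ∈ T, P i j → (p : ℤ_[p]) ∣ D i j}

/-- The coset of `dirs p T P` consisting of matrices which agree with the identity outside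
`T × T`. Such a matrix has the determinant of its `T × T` block, so it stands for a symmetric
matrix of size `|T|`; keeping all sizes in one type avoids reindexing. -/
def supp (p : ℕ) [Fact p.Prime] (T : Finset (Fin 4)) (P : Fin 4 → Fin 4 → Prop) :
    Set (Matrix (Fin 4) (Fin 4) ℤ_[p]) :=
  {A | A.IsSymm ∧ (∀ i j, i ∉ T → A i j = (1 : Matrix (Fin 4) (Fin 4) ℤ_[p]) i j) ∧
    ∀ i ∈ T, ∀ j ∈ T, P i j → (p : ℤ_[p]) ∣ A i j}

/-- `μ` is the Haar probability measure of the coset `supp p T P`, characterised as a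
probability measure carried by it and invariant under translation by `dirs p T P`. -/
structure IsHaar (T : Finset (Fin 4)) (P : Fin 4 → Fin 4 → Prop) (μ : Measure 𝕄) : Prop where
  prob : IsProbabilityMeasure μ
  ae_supp : ∀ᵐ A ∂μ, A ∈ supp p T P
  inv : ∀ D ∈ dirs p T P, μ.map (· + D) = μ

/-- `w` is the mean value of `t ^ v(det)` over the coset `supp p T P`. Quantifying over every
Haar measure of the coset makes an existence proof unnecessary. -/
def Val (p : ℕ) [Fact p.Prime] (t : ℝ) (T : Finset (Fin 4)) (P : Fin 4 → Fin 4 → Prop)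
    (w : ℝ) : Prop :=
  ∀ μ : Measure (Matrix (Fin 4) (Fin 4) ℤ_[p]), IsHaar T P μ → ∫ A, tval t A.det ∂μ = w

lemma isOpen_dvd : IsOpen {x : ℤ_[p] | (p : ℤ_[p]) ∣ x} := by
  have : {x : ℤ_[p] | (p : ℤ_[p]) ∣ x} = {x | ‖x‖ < 1} := by
    ext x; exact (PadicInt.norm_lt_one_iff_dvd x).symm
  rw [this]
  exact isOpen_lt continuous_norm continuous_const

lemma continuous_entry (i j : Fin 4) : Continuous fun A : 𝕄 => A i j :=
  continuous_id.matrix_elem i j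

lemma measurableSet_dvd (i j : Fin 4) (c : ℤ_[p]) :
    MeasurableSet {A : 𝕄 | (p : ℤ_[p]) ∣ A i j - c} :=
  (isOpen_dvd.preimage ((continuous_entry i j).sub continuous_const)).measurableSet

lemma measurableSet_supp (T : Finset (Fin 4)) (P : Fin 4 → Fin 4 → Prop) :
    MeasurableSet (supp p T P) := by
  have h3 : ∀ i j, MeasurableSet {A : 𝕄 | (p : ℤ_[p]) ∣ A i j} := fun i j => by
    simpa using measurableSet_dvd (p := p) i j 0
  refine MeasurableSet.inter ?_ (MeasurableSet.inter ?_ ?_)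
  · exact (isClosed_eq continuous_id.matrix_transpose continuous_id).measurableSet
  · refine MeasurableSet.congr (s := ⋂ i, ⋂ j, ⋂ (_ : i ∉ T),
      {A : 𝕄 | A i j = (1 : 𝕄) i j}) ?_ (by ext; simp; rfl)
    exact .iInter fun i => .iInter fun j => .iInter fun _ =>
      (isClosed_eq (continuous_entry i j) continuous_const).measurableSet
  · refine MeasurableSet.congr (s := ⋂ i, ⋂ (_ : i ∈ T), ⋂ j, ⋂ (_ : j ∈ T), ⋂ (_ : P i j),
      {A : 𝕄 | (p : ℤ_[p]) ∣ A i j}) ?_ (by ext; simp; rfl)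
    exact .iInter fun i => .iInter fun _ => .iInter fun j => .iInter fun _ => .iInter fun _ =>
      h3 i j

lemma measurable_add_right (D : 𝕄) : Measurable fun A : 𝕄 => A + D :=
  (continuous_id.add continuous_const).measurable

lemma Val.congr {t : ℝ} {T : Finset (Fin 4)} {P P' : Fin 4 → Fin 4 → Prop} {w : ℝ}
    (h : Val p t T P w) (hP : ∀ k ∈ T, ∀ l ∈ T, P k l ↔ P' k l) : Val p t T P' w := by
  intro μ hμ
  refine h μ ⟨hμ.prob, ?_, ?_⟩
  · filter_upwards [hμ.ae_supp] with A hA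
    exact ⟨hA.1, hA.2.1, fun i hi j hj hij => hA.2.2 i hi j hj ((hP i hi j hj).1 hij)⟩
  · intro D hD
    exact hμ.inv D
      ⟨hD.1, hD.2.1, fun i hi j hj hij => hD.2.2 i hi j hj ((hP i hi j hj).2 hij)⟩

/-- Any two Haar measures give the same mean: by Fubini, both equal the mean over the
convolution of the two. -/
lemma IsHaar.integral_eq {t : ℝ} (ht : |t| = 1) {T : Finset (Fin 4)}
    {P : Fin 4 → Fin 4 → Prop} {μ ν : Measure 𝕄} (hμ : IsHaar T P μ) (hν : IsHaar T P ν) :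
    ∫ A, tval t A.det ∂μ = ∫ A, tval t A.det ∂ν := by
  have := hμ.prob
  have := hν.prob
  -- the base point of the coset
  let o : 𝕄 := Matrix.of fun i j => if i ∈ T then 0 else (1 : 𝕄) i j
  have ho : ∀ A ∈ supp p T P, A - o ∈ dirs p T P := by
    rintro A ⟨h1, h2, h3⟩
    have hsymm : o.IsSymm := by
      ext i j
      simp only [o, Matrix.transpose_apply, Matrix.of_apply, Matrix.one_apply]
      by_cases hij : i = j
      · subst hij; rfl
      · simp [hij, Ne.symm hij]
    refine ⟨?_, ?_, ?_⟩
    · exact h1.sub hsymm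
    · intro i j hi
      simp [o, hi, h2 i j hi]
    · intro i hi j hj hij
      simpa [o, hi] using h3 i hi j hj hij
  have key : ∀ {μ ν : Measure 𝕄}, IsHaar T P μ → IsHaar T P ν →
      ∫ y, ∫ x, tval t (x + y - o).det ∂μ ∂ν = ∫ A, tval t A.det ∂μ := by
    intro μ ν hμ hν
    have := hν.prob
    have : ∀ᵐ y ∂ν, ∫ x, tval t (x + y - o).det ∂μ = ∫ A, tval t A.det ∂μ := by
      filter_upwards [hν.ae_supp] with y hy
      conv_rhs => rw [← hμ.inv _ (ho y hy)]
      rw [integral_map (measurable_add_right _).aemeasurable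
        (measurable_tval_det t).aestronglyMeasurable]
      simp only [add_sub_assoc]
    rw [integral_congr_ae this]
    simp
  rw [← key hμ hν, ← key hν hμ, integral_integral_swap]
  · simp only [add_comm]
  · exact integrable_tval _ ht (φ := fun q : 𝕄 × 𝕄 => q.2 + q.1 - o)
      (Continuous.measurable (by fun_prop)).aemeasurable

/-! ### Pivoting -/

/-- The principal block of `A` on the index set `Q`. -/
def piv (Q : Finset (Fin 4)) (A : 𝕄) : Matrix {x // x ∈ Q} {x // x ∈ Q} ℤ_[p] :=
  A.toBlock (· ∈ Q) (· ∈ Q)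

/-- The correction term `C K⁻¹ B` of the Schur complement with respect to the block `K = piv Q A`. -/
def corr (Q : Finset (Fin 4)) (A : 𝕄) : 𝕄 :=
  A.submatrix id ((↑) : {x // x ∈ Q} → Fin 4) * (piv Q A)⁻¹ *
    A.submatrix ((↑) : {x // x ∈ Q} → Fin 4) id

/-- The Schur complement of the block `piv Q A`, extended by the identity on `Q`. -/
def schur (Q : Finset (Fin 4)) (A : 𝕄) : 𝕄 :=
  Matrix.of fun k l => if k ∈ Q ∨ l ∈ Q then (1 : 𝕄) k l else A k l - corr Q A k l

lemma det_toBlock_mem (Q : Finset (Fin 4)) (M : 𝕄) :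
    M.det = (Matrix.fromBlocks (M.toBlock (· ∈ Q) (· ∈ Q)) (M.toBlock (· ∈ Q) fun j => ¬ j ∈ Q)
      (M.toBlock (fun j => ¬ j ∈ Q) (· ∈ Q))
      (M.toBlock (fun j => ¬ j ∈ Q) fun j => ¬ j ∈ Q)).det := by
  convert Matrix.det_toBlock M (· ∈ Q)

lemma det_eq_schur (Q : Finset (Fin 4)) (A : 𝕄) (hA : IsUnit (piv Q A).det) :
    A.det = (piv Q A).det * (schur Q A).det := by
  have hinv : Invertible (piv Q A) := Matrix.invertibleOfIsUnitDet _ hA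
  rw [det_toBlock_mem Q A, det_toBlock_mem Q (schur Q A)]
  have e1 : (schur Q A).toBlock (· ∈ Q) (· ∈ Q) = 1 := by
    ext ⟨k, hk⟩ ⟨l, hl⟩
    simp [schur, Matrix.toBlock_apply, hk, Matrix.one_apply]
  have e2 : (schur Q A).toBlock (fun j => ¬ j ∈ Q) (· ∈ Q) = 0 := by
    ext ⟨k, hk⟩ ⟨l, hl⟩
    have : k ≠ l := fun h => hk (h ▸ hl)
    simp [schur, Matrix.toBlock_apply, hl, Matrix.one_apply, this]
  have e3 : (schur Q A).toBlock (fun j => ¬ j ∈ Q) (fun j => ¬ j ∈ Q) =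
      A.toBlock (fun j => ¬ j ∈ Q) (fun j => ¬ j ∈ Q) -
        A.toBlock (fun j => ¬ j ∈ Q) (· ∈ Q) * ⅟(piv Q A) *
          A.toBlock (· ∈ Q) (fun j => ¬ j ∈ Q) := by
    ext ⟨k, hk⟩ ⟨l, hl⟩
    simp only [schur, Matrix.toBlock_apply, Matrix.of_apply, hk, hl, or_self, if_false,
      Matrix.sub_apply, corr, Matrix.invOf_eq_nonsing_inv]
    rfl
  rw [e1, e2, e3, Matrix.det_fromBlocks_zero₂₁, Matrix.det_one, one_mul]
  exact Matrix.det_fromBlocks₁₁ (piv Q A) _ _ _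

lemma corr_isSymm {Q : Finset (Fin 4)} {A : 𝕄} (hA : A.IsSymm) : (corr Q A).IsSymm := by
  have hK : (piv Q A).transpose = piv Q A := by
    ext a b
    exact hA.apply _ _
  unfold Matrix.IsSymm corr
  rw [Matrix.transpose_mul, Matrix.transpose_mul, Matrix.transpose_nonsing_inv, hK,
    Matrix.transpose_submatrix, Matrix.transpose_submatrix, hA.eq, Matrix.mul_assoc]

lemma schur_isSymm {Q : Finset (Fin 4)} {A : 𝕄} (hA : A.IsSymm) : (schur Q A).IsSymm := by
  ext k l
  have h1 : (1 : 𝕄) l k = (1 : 𝕄) k l := (Matrix.isSymm_one (n := Fin 4)).apply _ _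
  simp only [schur, Matrix.transpose_apply, Matrix.of_apply, hA.apply k l,
    (corr_isSymm (Q := Q) hA).apply k l, h1, or_comm]

lemma schur_add {Q T : Finset (Fin 4)} {P : Fin 4 → Fin 4 → Prop} (A : 𝕄) {D : 𝕄}
    (hD : D ∈ dirs p (T \ Q) P) : schur Q (A + D) = schur Q A + D := by
  have hr : ∀ a ∈ Q, ∀ l, D a l = 0 := fun a ha l => hD.2.1 a l (by simp [ha])
  have hc : ∀ a ∈ Q, ∀ l, D l a = 0 := fun a ha l => by rw [← hD.1.apply, hr a ha l]
  have hcorr : corr Q (A + D) = corr Q A := by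
    unfold corr piv
    congr 1
    · congr 1
      · ext k a; simp [hc a a.2]
      · congr 1; ext a b; simp [Matrix.toBlock_apply, hc b b.2]
    · ext a k; simp [hr a a.2]
  ext k l
  simp only [schur, hcorr, Matrix.add_apply, Matrix.of_apply]
  by_cases hk : k ∈ Q
  · simp [hk, hr k hk]
  · by_cases hl : l ∈ Q
    · simp [hl, hc l hl]
    · simp only [hk, hl, or_self, if_false]; ring

lemma schur_mem_supp {Q T : Finset (Fin 4)} {P : Fin 4 → Fin 4 → Prop} (hQT : Q ⊆ T)
    (hP : ∀ k ∈ T \ Q, ∀ l ∈ T \ Q, P k l → (∀ a ∈ Q, P k a) ∨ ∀ a ∈ Q, P a l)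
    {A : 𝕄} (hA : A ∈ supp p T P) : schur Q A ∈ supp p (T \ Q) P := by
  obtain ⟨h1, h2, h3⟩ := hA
  refine ⟨schur_isSymm h1, ?_, ?_⟩
  · intro k l hk
    simp only [schur, Matrix.of_apply]
    split_ifs with h
    · rfl
    · push Not at h
      have hkT : k ∉ T := fun h' => hk (by simp [h', h.1])
      have : corr Q A k l = 0 := by
        unfold corr
        rw [Matrix.mul_assoc, Matrix.mul_apply]
        refine Finset.sum_eq_zero fun a _ => ?_
        have : k ≠ a := fun h' => hkT (h' ▸ hQT a.2)
        simp [h2 k a hkT, this]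
      rw [this, h2 k l hkT, sub_zero]
  · intro k hk l hl hkl
    have hk' := Finset.mem_sdiff.1 hk
    have hl' := Finset.mem_sdiff.1 hl
    simp only [schur, Matrix.of_apply, hk'.2, hl'.2, or_self, if_false]
    refine dvd_sub (h3 k hk'.1 l hl'.1 hkl) ?_
    unfold corr
    rcases hP k hk l hl hkl with h | h
    · rw [Matrix.mul_assoc, Matrix.mul_apply]
      exact Finset.dvd_sum fun a _ =>
        Dvd.dvd.mul_right (h3 k hk'.1 a (hQT a.2) (h a a.2)) _
    · rw [Matrix.mul_apply]
      exact Finset.dvd_sum fun a _ =>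
        Dvd.dvd.mul_left (h3 a (hQT a.2) l hl'.1 (h a a.2)) _

lemma continuous_det_piv (Q : Finset (Fin 4)) : Continuous fun A : 𝕄 => (piv Q A).det :=
  (continuous_id.matrix_submatrix _ _).matrix_det

lemma isOpen_unit_piv (Q : Finset (Fin 4)) : IsOpen {A : 𝕄 | IsUnit (piv Q A).det} :=
  Units.isOpen.preimage (continuous_det_piv Q)

lemma continuousOn_schur (Q : Finset (Fin 4)) :
    ContinuousOn (schur Q) {A : 𝕄 | IsUnit (piv Q A).det} := by
  have hpiv : Continuous fun A : 𝕄 => piv Q A := continuous_id.matrix_submatrix _ _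
  have hinv : ContinuousOn (fun A : 𝕄 => (piv Q A)⁻¹) {A : 𝕄 | IsUnit (piv Q A).det} := by
    simp only [Matrix.inv_def]
    intro A hA
    obtain ⟨u, hu⟩ : IsUnit (piv Q A).det := hA
    have h := NormedRing.inverse_continuousAt u
    rw [hu] at h
    have h' : ContinuousAt (fun A : 𝕄 => Ring.inverse (piv Q A).det) A :=
      ContinuousAt.comp (f := fun A : 𝕄 => (piv Q A).det) (x := A) h
        (continuous_det_piv Q).continuousAt
    exact (h'.smul hpiv.matrix_adjugate.continuousAt).continuousWithinAt
  have hcorr : ContinuousOn (fun A : 𝕄 => corr Q A) {A : 𝕄 | IsUnit (piv Q A).det} := by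
    rw [continuousOn_iff_continuous_domRestrict] at hinv ⊢
    exact (((continuous_id.matrix_submatrix _ _).comp continuous_subtype_val).matrix_mul
      hinv).matrix_mul ((continuous_id.matrix_submatrix _ _).comp continuous_subtype_val)
  refine continuousOn_pi.2 fun k => continuousOn_pi.2 fun l => ?_
  simp only [schur, Matrix.of_apply]
  split_ifs
  · exact continuousOn_const
  · exact (continuous_entry k l).continuousOn.sub
      ((continuous_entry k l).comp_continuousOn hcorr)

/-- If the block on `Q` is almost surely invertible and `μ` is invariant under translation of the
complementary block, then the Schur complement is Haar distributed. No independence or Fubini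
argument is needed, since translation by `D` commutes with taking the Schur complement. -/
lemma integral_eq_of_pivot {t : ℝ} {T Q : Finset (Fin 4)} {P : Fin 4 → Fin 4 → Prop} {w : ℝ}
    {μ : Measure 𝕄} (hprob : IsProbabilityMeasure μ) (hsupp : ∀ᵐ A ∂μ, A ∈ supp p T P)
    (hinv : ∀ D ∈ dirs p (T \ Q) P, μ.map (· + D) = μ) (hQT : Q ⊆ T)
    (hP : ∀ k ∈ T \ Q, ∀ l ∈ T \ Q, P k l → (∀ a ∈ Q, P k a) ∨ ∀ a ∈ Q, P a l)
    (hunit : ∀ᵐ A ∂μ, IsUnit (piv Q A).det) (hw : Val p t (T \ Q) P w) :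
    ∫ A, tval t A.det ∂μ = w := by
  have hφ : AEMeasurable (schur Q) μ := by
    have h := (continuousOn_schur (p := p) Q).aemeasurable (μ := μ)
      (isOpen_unit_piv Q).measurableSet
    rwa [Measure.restrict_eq_self_of_ae_mem (s := {A : 𝕄 | IsUnit (piv Q A).det}) hunit] at h
  have hHaar : IsHaar (T \ Q) P (μ.map (schur Q)) := by
    refine ⟨Measure.isProbabilityMeasure_map hφ, ?_, ?_⟩
    · refine (ae_map_iff (p := fun A => A ∈ supp p (T \ Q) P) hφ (measurableSet_supp _ _)).2 ?_
      filter_upwards [hsupp] with A hA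
      exact schur_mem_supp hQT hP hA
    · intro D hD
      have hφ' : AEMeasurable (schur Q) (μ.map (· + D)) := by rwa [hinv D hD]
      rw [AEMeasurable.map_map_of_aemeasurable (measurable_add_right D).aemeasurable hφ]
      conv_rhs => rw [← hinv D hD]
      rw [AEMeasurable.map_map_of_aemeasurable hφ' (measurable_add_right D).aemeasurable]
      congr 1
      funext A
      exact (schur_add A hD).symm
  rw [← hw _ hHaar, integral_map hφ (measurable_tval_det t).aestronglyMeasurable]
  refine integral_congr_ae ?_
  filter_upwards [hunit] with A hA
  rw [det_eq_schur Q A hA, tval_unit_mul t hA]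

/-! ### Conditioning on one entry -/

/-- The matrix with entry `c` at the positions `(i, j)` and `(j, i)` and `0` elsewhere. -/
def bump (i j : Fin 4) (c : ℤ_[p]) : 𝕄 :=
  Matrix.of fun k l => if (k = i ∧ l = j) ∨ (k = j ∧ l = i) then c else 0

lemma bump_mem_dirs {T : Finset (Fin 4)} {P : Fin 4 → Fin 4 → Prop} {i j : Fin 4} (hi : i ∈ T)
    (hj : j ∈ T) (hij : ¬ P i j) (hji : ¬ P j i) (c : ℤ_[p]) : bump i j c ∈ dirs p T P := by
  refine ⟨?_, ?_, ?_⟩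
  · ext k l
    simp only [bump, Matrix.transpose_apply, Matrix.of_apply]
    congr 1
    simp only [eq_iff_iff]
    tauto
  · intro k l hk
    simp only [bump, Matrix.of_apply]
    rw [if_neg]
    rintro (⟨rfl, -⟩ | ⟨rfl, -⟩)
    · exact hk hi
    · exact hk hj
  · intro k _ l _ hkl
    simp only [bump, Matrix.of_apply]
    rw [if_neg]
    · exact dvd_zero _
    · rintro (⟨rfl, rfl⟩ | ⟨rfl, rfl⟩)
      · exact hij hkl
      · exact hji hkl

/-- An entry not constrained by the pattern is equidistributed modulo `p`. -/
lemma IsHaar.measure_dvd {T : Finset (Fin 4)} {P : Fin 4 → Fin 4 → Prop} {μ : Measure 𝕄}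
    (hμ : IsHaar T P μ) {i j : Fin 4} (hi : i ∈ T) (hj : j ∈ T) (hij : ¬ P i j) (hji : ¬ P j i) :
    μ.real {A : 𝕄 | (p : ℤ_[p]) ∣ A i j} = (p : ℝ)⁻¹ := by
  have := hμ.prob
  let s : ℕ → Set 𝕄 := fun c => {A | (p : ℤ_[p]) ∣ A i j - (c : ℤ_[p])}
  have hs : ∀ c, MeasurableSet (s c) := fun c => measurableSet_dvd i j c
  have hs0 : s 0 = {A : 𝕄 | (p : ℤ_[p]) ∣ A i j} := by ext; simp [s]
  have heq : ∀ c, μ (s c) = μ (s 0) := by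
    intro c
    conv_lhs => rw [← hμ.inv _ (bump_mem_dirs hi hj hij hji (c : ℤ_[p]))]
    rw [Measure.map_apply (measurable_add_right _) (hs c)]
    congr 1
    ext A
    simp [s, bump]
  have hdisj : ((Finset.range p : Finset ℕ) : Set ℕ).PairwiseDisjoint s := by
    intro c hc d hd hcd
    rw [Function.onFun, Set.disjoint_left]
    intro A hA hA'
    apply hcd
    have h1 : (p : ℤ_[p]) ∣ ((c : ℤ) - (d : ℤ) : ℤ) := by
      have := dvd_sub hA' hA
      push_cast
      simpa using this
    have h2 := (PadicInt.pow_p_dvd_int_iff (p := p) 1 _).1 (by rw [pow_one]; exact h1)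
    have hc' := Finset.mem_range.1 (Finset.mem_coe.1 hc)
    have hd' := Finset.mem_range.1 (Finset.mem_coe.1 hd)
    obtain ⟨m, hm⟩ := h2
    have hm0 : m = 0 := by
      have hp0 : (0 : ℤ) < p := by exact_mod_cast hp.out.pos
      rw [pow_one] at hm
      by_contra h0
      rcases lt_or_gt_of_ne h0 with h | h
      · have : (p : ℤ) * m ≤ p * (-1) := mul_le_mul_of_nonneg_left (by omega) hp0.le
        omega
      · have : (p : ℤ) * 1 ≤ p * m := mul_le_mul_of_nonneg_left (by omega) hp0.le
        omega
    rw [hm0] at hm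
    omega
  have hcover : (⋃ c ∈ Finset.range p, s c) = Set.univ := by
    refine Set.eq_univ_of_forall fun A => ?_
    obtain ⟨n, hn, h⟩ := PadicInt.exists_mem_range (A i j)
    rw [PadicInt.maximalIdeal_eq_span_p, Ideal.mem_span_singleton] at h
    exact Set.mem_biUnion (Finset.mem_coe.2 (Finset.mem_range.2 hn)) h
  have hsum := measure_biUnion_finset (μ := μ) hdisj fun c _ => hs c
  rw [hcover, measure_univ, Finset.sum_congr rfl fun c _ => heq c, Finset.sum_const,
    Finset.card_range, nsmul_eq_mul, hs0] at hsum
  have h := congrArg ENNReal.toReal hsum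
  rw [ENNReal.toReal_mul, ENNReal.toReal_natCast, ENNReal.toReal_one] at h
  exact eq_inv_of_mul_eq_one_right h.symm

lemma cond_map_add {μ : Measure 𝕄} {E : Set 𝕄} (hE : MeasurableSet E) {D : 𝕄}
    (hD : μ.map (· + D) = μ) (hED : ∀ A, A + D ∈ E ↔ A ∈ E) :
    (μ[|E]).map (· + D) = μ[|E] := by
  have hpre : (fun A : 𝕄 => A + D) ⁻¹' E = E := by ext A; exact hED A
  unfold ProbabilityTheory.cond
  rw [Measure.map_smul]
  congr 1
  conv_rhs => rw [← hD, Measure.restrict_map (measurable_add_right D) hE, hpre]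

lemma integral_cond {μ : Measure 𝕄} [IsFiniteMeasure μ] {E : Set 𝕄} (hE : μ E ≠ 0)
    (f : 𝕄 → ℝ) : ∫ A in E, f A ∂μ = μ.real E * ∫ A, f A ∂(μ[|E]) := by
  unfold ProbabilityTheory.cond
  rw [integral_smul_measure, smul_eq_mul, ENNReal.toReal_inv, ← mul_assoc, Measure.real,
    mul_inv_cancel₀, one_mul]
  exact ENNReal.toReal_ne_zero.2 ⟨hE, measure_ne_top _ _⟩

/-- Conditioning on the entry `(i, j)`: with probability `1/p` it is divisible by `p`, which
enlarges the pattern to `P'`; otherwise the block on `Q ∋ i, j` is invertible and can be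
split off. -/
lemma Val.split {t : ℝ} (ht : |t| = 1) {T Q : Finset (Fin 4)} {P P' : Fin 4 → Fin 4 → Prop}
    {i j : Fin 4} {w₁ w₂ : ℝ} (hi : i ∈ Q) (hj : j ∈ Q) (hQT : Q ⊆ T)
    (hij : ¬ P i j) (hji : ¬ P j i)
    (hP' : ∀ k l, P' k l ↔ P k l ∨ (k = i ∧ l = j) ∨ (k = j ∧ l = i))
    (hP : ∀ k ∈ T \ Q, ∀ l ∈ T \ Q, P k l → (∀ a ∈ Q, P k a) ∨ ∀ a ∈ Q, P a l)
    (hunit : ∀ A ∈ supp p T P, ¬ (p : ℤ_[p]) ∣ A i j → IsUnit (piv Q A).det)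
    (h₁ : Val p t T P' w₁) (h₂ : Val p t (T \ Q) P w₂) :
    Val p t T P ((1 - (p : ℝ)⁻¹) * w₂ + (p : ℝ)⁻¹ * w₁) := by
  intro μ hμ
  have := hμ.prob
  have hp1 : (1 : ℝ) < p := by exact_mod_cast hp.out.one_lt
  let E : Set 𝕄 := {A : 𝕄 | (p : ℤ_[p]) ∣ A i j}
  have hE : MeasurableSet E := by
    have h := measurableSet_dvd (p := p) i j 0
    simp only [sub_zero] at h
    exact h
  have hμE : μ.real E = (p : ℝ)⁻¹ := hμ.measure_dvd (hQT hi) (hQT hj) hij hji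
  have hμEc : μ.real Eᶜ = 1 - (p : ℝ)⁻¹ := by rw [probReal_compl_eq_one_sub hE, hμE]
  have hE0 : μ E ≠ 0 := by
    intro h
    rw [Measure.real, h, ENNReal.toReal_zero] at hμE
    have : (0 : ℝ) < (p : ℝ)⁻¹ := by positivity
    exact this.ne hμE
  have hEc0 : μ Eᶜ ≠ 0 := by
    intro h
    rw [Measure.real, h, ENNReal.toReal_zero] at hμEc
    have : (p : ℝ)⁻¹ < 1 := inv_lt_one_of_one_lt₀ hp1
    linarith
  have hac : ∀ s, ∀ᵐ A ∂(μ[|s]), A ∈ supp p T P :=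
    fun s => cond_absolutelyContinuous.ae_le hμ.ae_supp
  rw [← integral_add_compl hE (integrable_tval μ ht (φ := fun A => A) aemeasurable_id), integral_cond hE0,
    integral_cond hEc0, hμE, hμEc, add_comm]
  congr 2
  · refine integral_eq_of_pivot (cond_isProbabilityMeasure hEc0) (hac _) ?_ hQT hP ?_ h₂
    · intro D hD
      refine cond_map_add hE.compl (hμ.inv D ⟨hD.1, ?_, ?_⟩) ?_
      · exact fun k l hk => hD.2.1 k l fun h => hk (Finset.mem_sdiff.1 h).1
      · intro k hk l hl hkl
        by_cases hkQ : k ∈ Q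
        · rw [hD.2.1 k l (by simp [hkQ])]; exact dvd_zero _
        by_cases hlQ : l ∈ Q
        · rw [← hD.1.apply, hD.2.1 l k (by simp [hlQ])]; exact dvd_zero _
        exact hD.2.2 k (by simp [hk, hkQ]) l (by simp [hl, hlQ]) hkl
      · intro A
        have : D i j = 0 := hD.2.1 i j (by simp [hi])
        simp [E, this]
    · filter_upwards [hac Eᶜ, ae_cond_mem hE.compl] with A hA hA'
      exact hunit A hA hA'
  · refine h₁ _ ⟨cond_isProbabilityMeasure hE0, ?_, ?_⟩
    · filter_upwards [hac E, ae_cond_mem hE] with A hA hA'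
      refine ⟨hA.1, hA.2.1, fun k hk l hl hkl => ?_⟩
      rcases (hP' k l).1 hkl with h | ⟨rfl, rfl⟩ | ⟨rfl, rfl⟩
      · exact hA.2.2 k hk l hl h
      · exact hA'
      · rw [← hA.1.apply]; exact hA'
    · intro D hD
      refine cond_map_add hE (hμ.inv D ⟨hD.1, hD.2.1, fun k hk l hl hkl =>
        hD.2.2 k hk l hl ((hP' k l).2 (Or.inl hkl))⟩) ?_
      intro A
      have hDij : (p : ℤ_[p]) ∣ D i j :=
        hD.2.2 i (hQT hi) j (hQT hj) ((hP' i j).2 (Or.inr (Or.inl ⟨rfl, rfl⟩)))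
      change (p : ℤ_[p]) ∣ A i j + D i j ↔ (p : ℤ_[p]) ∣ A i j
      exact dvd_add_left hDij

/-! ### Scaling -/

/-- Multiplication of the `T × T` block by `p`. -/
def scale (T : Finset (Fin 4)) (A : 𝕄) : 𝕄 :=
  Matrix.of fun k l => if k ∈ T ∧ l ∈ T then (p : ℤ_[p]) * A k l else A k l

lemma measurableEmbedding_scale (T : Finset (Fin 4)) :
    MeasurableEmbedding (scale (p := p) T) := by
  refine (Continuous.isClosedEmbedding ?_ ?_).measurableEmbedding
  · refine continuous_pi fun k => continuous_pi fun l => ?_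
    simp only [scale, Matrix.of_apply]
    split_ifs
    · exact continuous_const.mul (continuous_entry k l)
    · exact continuous_entry k l
  · intro A B h
    ext k l
    have h' := congrFun (congrFun h k) l
    simp only [scale, Matrix.of_apply] at h'
    split_ifs at h'
    · rw [mul_left_cancel₀ p_ne_zero h']
    · rw [h']

lemma det_scale {T : Finset (Fin 4)} {P : Fin 4 → Fin 4 → Prop} {A : 𝕄}
    (hA : A ∈ supp p T P) : (scale T A).det = (p : ℤ_[p]) ^ T.card * A.det := by
  have : scale T A = Matrix.diagonal (fun k => if k ∈ T then (p : ℤ_[p]) else 1) * A := by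
    ext k l
    rw [Matrix.diagonal_mul]
    simp only [scale, Matrix.of_apply]
    by_cases hk : k ∈ T
    · by_cases hl : l ∈ T
      · simp [hk, hl]
      · have : l ≠ k := fun h => hl (h ▸ hk)
        have : A k l = 0 := by rw [← hA.1.apply, hA.2.1 l k hl, Matrix.one_apply_ne this]
        simp [hl, this]
    · simp [hk]
  rw [this, Matrix.det_mul, Matrix.det_diagonal]
  congr 1
  rw [Finset.prod_ite, Finset.prod_const_one, mul_one, Finset.prod_const]
  congr 2
  ext
  simp

/-- If the pattern is all of `T × T`, then dividing by `p` removes it. -/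
lemma Val.scale {t : ℝ} {T : Finset (Fin 4)} {P P' : Fin 4 → Fin 4 → Prop}
    {w : ℝ} (hP : ∀ k ∈ T, ∀ l ∈ T, P k l) (hP' : ∀ k ∈ T, ∀ l ∈ T, ¬ P' k l)
    (h : Val p t T P' w) : Val p t T P (t ^ T.card * w) := by
  intro μ hμ
  have := hμ.prob
  have hm := measurableEmbedding_scale (p := p) T
  let ν := μ.comap (SymDet.scale T)
  have hmap : ν.map (SymDet.scale T) = μ := by
    rw [hm.map_comap]
    refine Measure.restrict_eq_self_of_ae_mem ?_
    filter_upwards [hμ.ae_supp] with A hA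
    have hd : ∀ k l, ∃ x : ℤ_[p], k ∈ T → l ∈ T → A k l = p * x := by
      intro k l
      by_cases hk : k ∈ T
      · by_cases hl : l ∈ T
        · obtain ⟨x, hx⟩ := hA.2.2 k hk l hl (hP k hk l hl)
          exact ⟨x, fun _ _ => hx⟩
        · exact ⟨0, fun _ h => absurd h hl⟩
      · exact ⟨0, fun h => absurd h hk⟩
    choose x hx using hd
    refine ⟨Matrix.of fun k l => if k ∈ T ∧ l ∈ T then x k l else A k l, ?_⟩
    ext k l
    simp only [SymDet.scale, Matrix.of_apply]
    split_ifs with hkl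
    · rw [hx k l hkl.1 hkl.2]
    · rfl
  have hprob : IsProbabilityMeasure ν := by
    constructor
    have h1 : μ Set.univ = 1 := measure_univ
    rwa [← hmap, Measure.map_apply hm.measurable MeasurableSet.univ, Set.preimage_univ] at h1
  have hsupp : ∀ᵐ A ∂ν, A ∈ supp p T P' := by
    have h1 : ∀ᵐ A ∂(ν.map (SymDet.scale T)), A ∈ supp p T P := by
      rw [hmap]; exact hμ.ae_supp
    filter_upwards [ae_of_ae_map hm.measurable.aemeasurable h1] with A hA
    refine ⟨?_, ?_, fun k hk l hl hkl => absurd hkl (hP' k hk l hl)⟩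
    · ext k l
      have h2 := hA.1.apply k l
      simp only [SymDet.scale, Matrix.of_apply, and_comm (a := l ∈ T)] at h2
      split_ifs at h2
      · exact mul_left_cancel₀ p_ne_zero h2
      · exact h2
    · intro k l hk
      have h2 := hA.2.1 k l hk
      simpa [SymDet.scale, hk] using h2
  have hν : IsHaar T P' ν := by
    refine ⟨hprob, hsupp, fun D hD => ?_⟩
    have hpD : (p : ℤ_[p]) • D ∈ dirs p T P := by
      refine ⟨hD.1.smul _, fun k l hk => ?_, fun k _ l _ _ => ?_⟩
      · simp [hD.2.1 k l hk]
      · simp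
    have hcomm : SymDet.scale T ∘ (· + D) = (· + (p : ℤ_[p]) • D) ∘ SymDet.scale T := by
      funext A
      ext k l
      simp only [SymDet.scale, Function.comp_apply, Matrix.of_apply, Matrix.add_apply,
        Matrix.smul_apply, smul_eq_mul]
      split_ifs with hkl
      · ring
      · have : D k l = 0 := by
          by_cases hk : k ∈ T
          · rw [← hD.1.apply, hD.2.1 l k fun hl => hkl ⟨hk, hl⟩]
          · exact hD.2.1 k l hk
        rw [this, mul_zero]
    have h1 : (ν.map (· + D)).map (SymDet.scale T) = ν.map (SymDet.scale T) := by
      rw [Measure.map_map hm.measurable (measurable_add_right D), hcomm,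
        ← Measure.map_map (measurable_add_right _) hm.measurable, hmap, hμ.inv _ hpD]
    rw [← hm.comap_map (ν.map (· + D)), h1, hm.comap_map]
  have hval := h ν hν
  rw [← hmap, hm.integral_map, ← hval, ← integral_const_mul]
  refine integral_congr_ae ?_
  filter_upwards [hsupp] with A hA
  rw [det_scale hA, tval_p_pow_mul]

/-! ### The recursion -/

/-- The pattern consisting of the rows and columns indexed by `S`. -/
def rows (S : Finset (Fin 4)) : Fin 4 → Fin 4 → Prop := fun k l => k ∈ S ∨ l ∈ S

/-- The pattern `rows S` together with the entries of row (and column) `i` indexed by `R`. -/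
def rowsPart (S : Finset (Fin 4)) (i : Fin 4) (R : Finset (Fin 4)) : Fin 4 → Fin 4 → Prop :=
  fun k l => rows S k l ∨ (k = i ∧ l ∈ R) ∨ (k ∈ R ∧ l = i)

lemma isUnit_of_not_dvd {x : ℤ_[p]} (h : ¬ (p : ℤ_[p]) ∣ x) : IsUnit x := by
  rw [PadicInt.isUnit_iff]
  rw [← PadicInt.norm_lt_one_iff_dvd] at h
  exact le_antisymm (PadicInt.norm_le_one x) (not_lt.1 h)

lemma isUnit_det_piv_singleton {A : 𝕄} {i : Fin 4} (h : ¬ (p : ℤ_[p]) ∣ A i i) :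
    IsUnit (piv {i} A).det := by
  have : (piv {i} A).det = A i i := by
    have : Unique {x // x ∈ ({i} : Finset (Fin 4))} :=
      ⟨⟨⟨i, by simp⟩⟩, fun x => Subtype.ext (Finset.mem_singleton.1 x.2)⟩
    rw [Matrix.det_unique]
    have h2 : ((default : {x // x ∈ ({i} : Finset (Fin 4))}) : Fin 4) = i :=
      Finset.mem_singleton.1 (default : {x // x ∈ ({i} : Finset (Fin 4))}).2
    simp [piv, Matrix.toBlock_apply, h2]
  rw [this]
  exact isUnit_of_not_dvd h

/-- A symmetric `2 × 2` block with one diagonal entry divisible by `p` and a unit off the diagonal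
is invertible, whatever the other diagonal entry is. -/
lemma isUnit_det_piv_pair {A : 𝕄} (hA : A.IsSymm) {i j : Fin 4} (hij : j ≠ i)
    (hi : (p : ℤ_[p]) ∣ A i i) (h : ¬ (p : ℤ_[p]) ∣ A i j) :
    IsUnit (piv {i, j} A).det := by
  let f : Fin 2 → {x // x ∈ ({i, j} : Finset (Fin 4))} :=
    ![⟨i, by simp⟩, ⟨j, by simp⟩]
  have hf : Function.Bijective f := by
    constructor
    · intro a b hab
      fin_cases a <;> fin_cases b <;> simp_all [f, Ne.symm hij]
    · rintro ⟨x, hx⟩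
      rcases Finset.mem_insert.1 hx with rfl | hx
      · exact ⟨0, rfl⟩
      · have := Finset.mem_singleton.1 hx
        subst this
        exact ⟨1, rfl⟩
  have hdet : (piv {i, j} A).det = A i i * A j j - A i j * A i j := by
    rw [← Matrix.det_submatrix_equiv_self (Equiv.ofBijective f hf), Matrix.det_fin_two]
    simp [piv, Matrix.toBlock_apply, f, hA.apply i j]
  rw [hdet]
  apply isUnit_of_not_dvd
  intro hd
  have h2 : (p : ℤ_[p]) ∣ A i j * A i j := (dvd_sub_right (hi.mul_right _)).1 hd
  rcases PadicInt.prime_p.dvd_or_dvd h2 with h3 | h3 <;> exact h h3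

/-- Running along row `i`, whose diagonal entry is divisible by `p`, until an off-diagonal unit
is met. Here `m` counts the entries of the row still to be inspected. -/
lemma Val.row {t : ℝ} (ht : |t| = 1) {T S : Finset (Fin 4)} {i : Fin 4} (hi : i ∈ T \ S)
    {w₁ w₂ : ℝ} (h₁ : Val p t T (rows (insert i S)) w₁)
    (h₂ : ∀ j ∈ T \ S, j ≠ i → Val p t (T \ {i, j}) (rows S) w₂) (m : ℕ) :
    ∀ R ⊆ T \ S, i ∈ R → ((T \ S) \ R).card = m →
      Val p t T (rowsPart S i R) ((1 - (p : ℝ)⁻¹ ^ m) * w₂ + (p : ℝ)⁻¹ ^ m * w₁) := by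
  have hiT := (Finset.mem_sdiff.1 hi).1
  have hiS := (Finset.mem_sdiff.1 hi).2
  induction m with
  | zero =>
    intro R hR hiR hm
    have hRe : R = T \ S :=
      Finset.Subset.antisymm hR (Finset.sdiff_eq_empty_iff_subset.1 (Finset.card_eq_zero.1 hm))
    rw [pow_zero, sub_self, zero_mul, zero_add, one_mul]
    refine h₁.congr fun k hk l hl => ?_
    simp only [rowsPart, rows, hRe, Finset.mem_insert, Finset.mem_sdiff]
    tauto
  | succ m ih =>
    intro R hR hiR hm
    obtain ⟨j, hj⟩ := Finset.card_pos.1 (by omega : 0 < ((T \ S) \ R).card)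
    obtain ⟨hjTS, hjR⟩ := Finset.mem_sdiff.1 hj
    obtain ⟨hjT, hjS⟩ := Finset.mem_sdiff.1 hjTS
    have hji : j ≠ i := fun h => hjR (h ▸ hiR)
    have hcard : ((T \ S) \ insert j R).card = m := by
      rw [Finset.sdiff_insert, Finset.card_erase_of_mem hj, hm, Nat.add_sub_cancel]
    have hrec := ih (insert j R) (Finset.insert_subset hjTS hR) (Finset.mem_insert_of_mem hiR)
      hcard
    have hpiv : Val p t (T \ {i, j}) (rowsPart S i R) w₂ := by
      refine (h₂ j hjTS hji).congr fun k hk l hl => ?_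
      have hki : k ≠ i := by rintro rfl; simp at hk
      have hli : l ≠ i := by rintro rfl; simp at hl
      simp [rowsPart, hki, hli]
    have hs := Val.split (i := i) (j := j) (Q := {i, j}) ht (by simp) (by simp)
      (by simp [Finset.insert_subset_iff, hiT, hjT]) (P := rowsPart S i R)
      (by simp [rowsPart, rows, hiS, hjS, hjR, hji]) (by simp [rowsPart, rows, hiS, hjS, hjR, hji])
      (P' := rowsPart S i (insert j R))
      (by intro k l; simp only [rowsPart, Finset.mem_insert]; tauto)
      (by
        intro k hk l hl hkl
        have hki : k ≠ i := by rintro rfl; simp at hk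
        have hli : l ≠ i := by rintro rfl; simp at hl
        simp only [rowsPart, rows, hki, hli, false_and, and_false, or_false] at hkl
        rcases hkl with h | h
        · exact Or.inl fun a _ => Or.inl (Or.inl h)
        · exact Or.inr fun a _ => Or.inl (Or.inr h))
      (by
        intro A hA hAij
        exact isUnit_det_piv_pair hA.1 hji
          (hA.2.2 i hiT i hiT (Or.inr (Or.inl ⟨rfl, hiR⟩))) hAij)
      hrec hpiv
    convert hs using 1
    ring

/-- The mean over `T` with `k` rows divisible by `p` is `w`, for any choice of the `k` rows. -/
def RowVal (p : ℕ) [Fact p.Prime] (t : ℝ) (T : Finset (Fin 4)) (k : ℕ) (w : ℝ) : Prop :=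
  ∀ S ⊆ T, S.card = k → Val p t T (rows S) w

/-- The mean over symmetric matrices of size `n` with `k` rows divisible by `p` is `w`. -/
def SizeVal (p : ℕ) [Fact p.Prime] (t : ℝ) (n k : ℕ) (w : ℝ) : Prop :=
  ∀ T : Finset (Fin 4), T.card = n → RowVal p t T k w

/-- The value of the recursion, in terms of `u = 1/p`, the number `m` of off-diagonal entries
inspected, the means `w₀`, `w₂` after splitting off a block of size `1`, `2`, and the mean `w₁` when
the whole row is divisible by `p`. -/
def stepVal (u : ℝ) (m : ℕ) (w₀ w₂ w₁ : ℝ) : ℝ :=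
  (1 - u) * w₀ + u * ((1 - u ^ m) * w₂ + u ^ m * w₁)

/-- The recursion: inspect a row not yet known to be divisible by `p`. -/
lemma RowVal.step {t : ℝ} (ht : |t| = 1) {T : Finset (Fin 4)} {k m : ℕ}
    (hT : T.card = k + 1 + m) {w₀ w₁ w₂ : ℝ} (h₀ : SizeVal p t (k + m) k w₀)
    (h₂ : ∀ m', m = m' + 1 → SizeVal p t (k + m') k w₂) (h₁ : RowVal p t T (k + 1) w₁) :
    RowVal p t T k (stepVal (p : ℝ)⁻¹ m w₀ w₂ w₁) := by
  intro S hST hS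
  have hTS : (T \ S).card = 1 + m := by rw [Finset.card_sdiff_of_subset hST]; omega
  obtain ⟨i, hi⟩ := Finset.card_pos.1 (by omega : 0 < (T \ S).card)
  obtain ⟨hiT, hiS⟩ := Finset.mem_sdiff.1 hi
  have hrow := Val.row ht hi
    (h₁ (insert i S) (Finset.insert_subset hiT hST) (by rw [Finset.card_insert_of_notMem hiS, hS]))
    (w₂ := w₂) (fun j hj hji => by
      obtain ⟨hjT, hjS⟩ := Finset.mem_sdiff.1 hj
      have hm : 0 < m := by
        have : ({i, j} : Finset (Fin 4)).card ≤ (T \ S).card :=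
          Finset.card_le_card (by simp [Finset.insert_subset_iff, hiT, hiS, hjT, hjS])
        rw [Finset.card_pair hji.symm] at this
        omega
      refine h₂ (m - 1) (by omega) (T \ {i, j}) ?_ S ?_ hS
      · rw [Finset.card_sdiff_of_subset (by simp [Finset.insert_subset_iff, hiT, hjT]),
          Finset.card_pair hji.symm]
        omega
      · intro x hx
        have h1 : x ≠ i := fun h => hiS (h ▸ hx)
        have h2 : x ≠ j := fun h => hjS (h ▸ hx)
        simp [hST hx, h1, h2])
    m {i} (by simp [hiT, hiS]) (by simp)
    (by
      rw [Finset.card_sdiff_of_subset (by simp [hiT, hiS]), Finset.card_singleton]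
      omega)
  refine Val.split (i := i) (j := i) (Q := {i}) ht (by simp) (by simp) (by simp [hiT])
    (by simp [rows, hiS]) (by simp [rows, hiS]) ?_ ?_ ?_ hrow ?_
  · intro k l
    simp only [rowsPart, Finset.mem_singleton]
  · intro k _ l _ hkl
    rcases hkl with h | h
    · exact Or.inl fun a _ => Or.inl h
    · exact Or.inr fun a _ => Or.inr h
  · intro A _ hA
    exact isUnit_det_piv_singleton hA
  · refine h₀ (T \ {i}) ?_ S ?_ hS
    · rw [Finset.card_sdiff_of_subset (by simp [hiT]), Finset.card_singleton]
      omega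
    · intro x hx
      have h1 : x ≠ i := fun h => hiS (h ▸ hx)
      simp [hST hx, h1]

/-- A mean over unrestricted matrices determines the mean over matrices divisible by `p`. -/
lemma RowVal.full {t : ℝ} {T : Finset (Fin 4)} {w : ℝ} (h : RowVal p t T 0 w) :
    RowVal p t T T.card (t ^ T.card * w) := by
  intro S hS hc
  have hST : S = T := Finset.eq_of_subset_of_card_le hS hc.ge
  subst hST
  exact Val.scale (fun k hk l _ => Or.inl hk) (fun k _ l _ h => by simp [rows] at h)
    (h ∅ (Finset.empty_subset _) rfl)

/-- The recursion expresses the mean over unrestricted matrices of size `n` affinely in terms of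
itself; solving this equation determines it. -/
lemma SizeVal.close {t : ℝ} (ht : |t| = 1) {n : ℕ} {w : ℝ} (c : ℝ → ℝ)
    (hT : ∀ T : Finset (Fin 4), T.card = n → ∀ x, RowVal p t T n (t ^ n * x) →
      RowVal p t T 0 (c x))
    (hc : ∀ x, c x = x → x = w) : SizeVal p t n 0 w := by
  intro T hTn S hS hS0 μ hμ
  obtain rfl := Finset.card_eq_zero.1 hS0
  have hx : RowVal p t T 0 (∫ A, tval t A.det ∂μ) := by
    intro S' _ hS' ν hν
    obtain rfl := Finset.card_eq_zero.1 hS'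
    exact hν.integral_eq ht hμ
  have hfull := hx.full
  rw [hTn] at hfull
  have h := hT T hTn _ hfull ∅ hS rfl μ hμ
  exact hc _ h.symm

lemma SizeVal.full {t : ℝ} {n : ℕ} {w : ℝ} (h : SizeVal p t n 0 w) :
    SizeVal p t n n (t ^ n * w) := by
  intro T hT
  have := (h T hT).full
  rwa [hT] at this

lemma sizeVal_zero (t : ℝ) : SizeVal p t 0 0 1 := by
  intro T hT S _ _ μ hμ
  have := hμ.prob
  obtain rfl := Finset.card_eq_zero.1 hT
  have : ∀ᵐ A ∂μ, tval t A.det = 1 := by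
    filter_upwards [hμ.ae_supp] with A hA
    have : A = 1 := by
      ext i j
      exact hA.2.1 i j (Finset.notMem_empty i)
    simp [this, tval]
  rw [integral_congr_ae this]
  simp

/-- The step of the recursion, uniformly in the index set. -/
lemma SizeVal.step {t : ℝ} (ht : |t| = 1) {k m : ℕ} {w₀ w₁ w₂ : ℝ}
    (h₀ : SizeVal p t (k + m) k w₀)
    (h₂ : ∀ m', m = m' + 1 → SizeVal p t (k + m') k w₂) (h₁ : SizeVal p t (k + 1 + m) (k + 1) w₁) :
    SizeVal p t (k + 1 + m) k (stepVal (p : ℝ)⁻¹ m w₀ w₂ w₁) :=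
  fun T hT => RowVal.step ht hT h₀ h₂ (h₁ T hT)

/-- The linear part of the fixed-point equation has absolute value less than `1`, so the
equation has at most one solution. -/
lemma eq_of_contraction {u t : ℝ} (hu0 : 0 ≤ u) (hu1 : u < 1) (ht : |t| = 1) (n N : ℕ)
    {x y : ℝ} (h : x - y = t ^ n * u ^ (N + 1) * (x - y)) : x = y := by
  by_contra hne
  have h1 : t ^ n * u ^ (N + 1) = 1 :=
    mul_right_cancel₀ (sub_ne_zero.2 hne) (by rw [← h, one_mul])
  have h2 := congrArg abs h1
  rw [abs_mul, abs_pow, ht, one_pow, one_mul, abs_one, abs_of_nonneg (by positivity)] at h2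
  exact (pow_lt_one₀ hu0 hu1 (Nat.succ_ne_zero N)).ne h2

/-- The recursion solved up to size `4`: any solution `a`, `b`, `c`, `d` of its fixed-point
equations gives the means for sizes `1` to `4`. Subscripts count the rows divisible by `p`. -/
lemma sizeVal_four {t : ℝ} (ht : |t| = 1) {u : ℝ} (hu : u = (p : ℝ)⁻¹)
    {a b b₁ c c₁ c₂ d d₁ d₂ d₃ : ℝ}
    (ha : stepVal u 0 1 0 (t ^ 1 * a) = a)
    (hb₁ : stepVal u 0 (t ^ 1 * a) 0 (t ^ 2 * b) = b₁)
    (hb : stepVal u 1 a 1 b₁ = b)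
    (hc₂ : stepVal u 0 (t ^ 2 * b) 0 (t ^ 3 * c) = c₂)
    (hc₁ : stepVal u 1 b₁ (t ^ 1 * a) c₂ = c₁)
    (hc : stepVal u 2 b a c₁ = c)
    (hd₃ : stepVal u 0 (t ^ 3 * c) 0 (t ^ 4 * d) = d₃)
    (hd₂ : stepVal u 1 c₂ (t ^ 2 * b) d₃ = d₂)
    (hd₁ : stepVal u 2 c₁ b₁ d₂ = d₁)
    (hd : stepVal u 3 c b d₁ = d) : SizeVal p t 4 0 d := by
  have hp1 : (1 : ℝ) < p := by exact_mod_cast hp.out.one_lt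
  have hu0 : 0 ≤ u := by rw [hu]; positivity
  have hu1 : u < 1 := by rw [hu]; exact inv_lt_one_of_one_lt₀ hp1
  have s00 : SizeVal p t 0 0 1 := sizeVal_zero t
  have no : ∀ {q : ℕ → Prop} (m' : ℕ), 0 = m' + 1 → q m' := fun m' h => by omega
  subst hu
  have s10 : SizeVal p t 1 0 a := by
    refine SizeVal.close ht (fun x => stepVal (p : ℝ)⁻¹ 0 1 0 (t ^ 1 * x)) ?_ ?_
    · intro T hT x hx
      exact RowVal.step ht (k := 0) (m := 0) hT s00 no hx
    · intro x hx
      refine eq_of_contraction hu0 hu1 ht 1 0 ?_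
      conv_lhs => rw [← hx, ← ha]
      simp only [stepVal]; ring
  have s11 := s10.full
  have s20 : SizeVal p t 2 0 b := by
    refine SizeVal.close ht (fun x => stepVal (p : ℝ)⁻¹ 1 a 1
      (stepVal (p : ℝ)⁻¹ 0 (t ^ 1 * a) 0 (t ^ 2 * x))) ?_ ?_
    · intro T hT x hx
      refine RowVal.step ht (k := 0) (m := 1) hT s10 ?_ ?_
      · rintro m' hm; obtain rfl : m' = 0 := by omega
        exact s00
      · exact RowVal.step ht (k := 1) (m := 0) hT s11 no hx
    · intro x hx
      refine eq_of_contraction hu0 hu1 ht 2 2 ?_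
      conv_lhs => rw [← hx, ← hb, ← hb₁]
      simp only [stepVal]; ring
  have s22 := s20.full
  have s21 : SizeVal p t 2 1 b₁ := hb₁ ▸ SizeVal.step ht (k := 1) (m := 0) s11 no s22
  have s30 : SizeVal p t 3 0 c := by
    refine SizeVal.close ht (fun x => stepVal (p : ℝ)⁻¹ 2 b a (stepVal (p : ℝ)⁻¹ 1 b₁ (t ^ 1 * a)
      (stepVal (p : ℝ)⁻¹ 0 (t ^ 2 * b) 0 (t ^ 3 * x)))) ?_ ?_
    · intro T hT x hx
      refine RowVal.step ht (k := 0) (m := 2) hT s20 ?_ ?_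
      · rintro m' hm; obtain rfl : m' = 1 := by omega
        exact s10
      refine RowVal.step ht (k := 1) (m := 1) hT s21 ?_ ?_
      · rintro m' hm; obtain rfl : m' = 0 := by omega
        exact s11
      exact RowVal.step ht (k := 2) (m := 0) hT s22 no hx
    · intro x hx
      refine eq_of_contraction hu0 hu1 ht 3 5 ?_
      conv_lhs => rw [← hx, ← hc, ← hc₁, ← hc₂]
      simp only [stepVal]; ring
  have s33 := s30.full
  have s32 : SizeVal p t 3 2 c₂ := hc₂ ▸ SizeVal.step ht (k := 2) (m := 0) s22 no s33
  have s31 : SizeVal p t 3 1 c₁ := by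
    refine hc₁ ▸ SizeVal.step ht (k := 1) (m := 1) s21 ?_ s32
    rintro m' hm; obtain rfl : m' = 0 := by omega
    exact s11
  refine SizeVal.close ht (fun x => stepVal (p : ℝ)⁻¹ 3 c b (stepVal (p : ℝ)⁻¹ 2 c₁ b₁
    (stepVal (p : ℝ)⁻¹ 1 c₂ (t ^ 2 * b) (stepVal (p : ℝ)⁻¹ 0 (t ^ 3 * c) 0 (t ^ 4 * x))))) ?_ ?_
  · intro T hT x hx
    refine RowVal.step ht (k := 0) (m := 3) hT s30 ?_ ?_
    · rintro m' hm; obtain rfl : m' = 2 := by omega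
      exact s20
    refine RowVal.step ht (k := 1) (m := 2) hT s31 ?_ ?_
    · rintro m' hm; obtain rfl : m' = 1 := by omega
      exact s21
    refine RowVal.step ht (k := 2) (m := 1) hT s32 ?_ ?_
    · rintro m' hm; obtain rfl : m' = 0 := by omega
      exact s22
    exact RowVal.step ht (k := 3) (m := 0) hT s33 no hx
  · intro x hx
    refine eq_of_contraction hu0 hu1 ht 4 9 ?_
    conv_lhs => rw [← hx, ← hd, ← hd₁, ← hd₂, ← hd₃]
    simp only [stepVal]; ring

lemma sizeVal_four_one : SizeVal p 1 4 0 1 := by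
  refine sizeVal_four (a := 1) (b := 1) (b₁ := 1) (c := 1) (c₁ := 1) (c₂ := 1)
    (d₁ := 1) (d₂ := 1) (d₃ := 1) abs_one rfl ?_ ?_ ?_ ?_ ?_ ?_ ?_ ?_ ?_ ?_ <;>
  · simp only [stepVal]; ring

/-- For `t = -1` the means for sizes `1`, `2`, `3` are `(p - 1) / (p + 1)`,
`(p² - p + 1) / (p² + p + 1)` and again `(p - 1) / (p + 1)`. -/
lemma sizeVal_four_neg_one :
    SizeVal p (-1) 4 0 (((p : ℝ) ^ 5 + 1) * (p - 1) / (((p : ℝ) ^ 5 - 1) * (p + 1))) := by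
  have hp1 : (1 : ℝ) < p := by exact_mod_cast hp.out.one_lt
  have h5 : (p : ℝ) ^ 5 - 1 ≠ 0 := (sub_pos.2 (one_lt_pow₀ hp1 (by norm_num))).ne'
  have h1 : (p : ℝ) + 1 ≠ 0 := by positivity
  have h2 : (p : ℝ) ^ 2 + p + 1 ≠ 0 := by positivity
  have h0 : (p : ℝ) ≠ 0 := by positivity
  refine sizeVal_four (a := (p - 1) / (p + 1)) (b := (p ^ 2 - p + 1) / (p ^ 2 + p + 1))
    (c := (p - 1) / (p + 1)) (by norm_num) rfl ?_ rfl ?_ rfl rfl ?_ rfl rfl rfl ?_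
  all_goals simp only [stepVal]; field_simp; ring

end SymDet

end

theorem stmt_10 (ℓ : ℕ) [Fact ℓ.Prime] (hℓ : ℓ ≠ 2)
    -- the Haar probability measure `μ` on `Sym₄(ℤ_ℓ)` (characterized as a
    -- translation-invariant Borel probability measure)
    (μ : Measure (Sym4 ℓ)) (hprob : IsProbabilityMeasure μ)
    (hinv : ∀ B : Sym4 ℓ, μ.map (fun A : Sym4 ℓ => (⟨A.1 + B.1, A.2.add B.2⟩ : Sym4 ℓ)) = μ) :
    Integrable (chiValDet ℓ) μ ∧
    ∫ B, chiValDet ℓ B ∂μ =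
      (((legendreSym ℓ (-1) : ℝ) * (ℓ : ℝ) ^ 5 - 1) * ((ℓ : ℝ) - 1)) /
        (((ℓ : ℝ) ^ 5 - 1) * ((legendreSym ℓ (-1) : ℝ) * (ℓ : ℝ) - 1)) := by
  have hp1 : (1 : ℝ) < ℓ := by exact_mod_cast (Fact.out : ℓ.Prime).one_lt
  have hχ : (legendreSym ℓ (-1) : ℝ) = 1 ∨ (legendreSym ℓ (-1) : ℝ) = -1 := by
    have h0 : ((-1 : ℤ) : ZMod ℓ) ≠ 0 := by simp
    rcases legendreSym.eq_one_or_neg_one ℓ h0 with h | h <;> simp [h]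
  have ht : |(legendreSym ℓ (-1) : ℝ)| = 1 := by
    rcases hχ with h | h <;> simp [h]
  have hval : Measurable (Subtype.val : Sym4 ℓ → Matrix (Fin 4) (Fin 4) ℤ_[ℓ]) :=
    measurable_subtype_coe
  have hf : chiValDet ℓ = fun B => SymDet.tval (legendreSym ℓ (-1) : ℝ) B.1.det := rfl
  -- The pattern `rows ∅` is no condition, so `supp` is here the set of all symmetric matrices.
  have hHaar : SymDet.IsHaar Finset.univ (SymDet.rows ∅) (μ.map Subtype.val) := by
    refine ⟨Measure.isProbabilityMeasure_map hval.aemeasurable, ?_, fun D hD => ?_⟩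
    · refine (ae_map_iff (p := fun A => A ∈ SymDet.supp ℓ Finset.univ (SymDet.rows ∅))
        hval.aemeasurable (SymDet.measurableSet_supp _ _)).2 (Filter.Eventually.of_forall fun B => ?_)
      exact ⟨B.2, fun i _ h => absurd (Finset.mem_univ i) h,
        fun k _ l _ h => by simp [SymDet.rows] at h⟩
    · have hadd : Measurable
          (fun A : Sym4 ℓ => (⟨A.1 + D, A.2.add hD.1⟩ : Sym4 ℓ)) :=
        ((SymDet.measurable_add_right D).comp hval).subtype_mk
      conv_rhs => rw [← hinv ⟨D, hD.1⟩]
      rw [Measure.map_map (SymDet.measurable_add_right D) hval, Measure.map_map hval hadd]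
      rfl
  have hmean : ∀ w, SymDet.SizeVal ℓ (legendreSym ℓ (-1) : ℝ) 4 0 w →
      ∫ B, chiValDet ℓ B ∂μ = w := by
    intro w hw
    rw [hf, ← hw Finset.univ rfl ∅ (Finset.empty_subset _) rfl _ hHaar,
      integral_map hval.aemeasurable (SymDet.measurable_tval_det _).aestronglyMeasurable]
  refine ⟨hf ▸ SymDet.integrable_tval μ ht hval.aemeasurable, ?_⟩
  have h5 : (ℓ : ℝ) ^ 5 - 1 ≠ 0 := (sub_pos.2 (one_lt_pow₀ hp1 (by norm_num))).ne'
  have h1 : (ℓ : ℝ) - 1 ≠ 0 := (sub_pos.2 hp1).ne'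
  rcases hχ with h | h
  · rw [hmean 1 (by rw [h]; exact SymDet.sizeVal_four_one), h, one_mul, one_mul]
    field_simp
  · rw [hmean _ (by rw [h]; exact SymDet.sizeVal_four_neg_one), h]
    have h2 : (ℓ : ℝ) + 1 ≠ 0 := by positivity
    have h3 : -1 * (ℓ : ℝ) - 1 ≠ 0 := by
      intro h; apply h2; linarith
    rw [div_eq_div_iff (mul_ne_zero h5 h2) (mul_ne_zero h5 h3)]
    ring
end

section
/- Let R be a commutative ring, J₄ = [[0, 1₂], [−1₂, 0]] the standard 4×4 symplectic matrix, 𝔴₆ the 6×6 antidiagonal permutation matrix, and Φ : M₄(R) → M₆(R) the second exterior power map in the ordered basis (e₁∧e₂, e₁∧e₄, e₁∧e₃, −e₂∧e₄, e₂∧e₃, e₃∧e₄). Let ε ∈ M₆(R) be the negative of the block-diagonal matrix diag(1₂, m₂, 1₂), where m₂ = [[0,1],[1,0]]. Then: (1) ε² = 1₆, det(ε) = −1, and ε·𝔴₆ = 𝔴₆·ε; (2) Φ(J₄) = −ε·𝔴₆; (3) for every g ∈ GL₄(R), Φ(J₄ g^{−T} J₄^{−1}) = det(g)^{−1} · ε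 · Φ(g) · ε. In particular, the involution g ↦ J₄g^{−T}J₄^{−1} of GL₄ descends, up to the similitude factor, to conjugation by ε on the image of Φ. -/
/-!
In the given basis the wedge pairing `Λ²R⁴ × Λ²R⁴ → Λ⁴R⁴ = R` has Gram matrix `𝔴₆`, so
`Φ(g)ᵀ 𝔴₆ Φ(g) = det(g) 𝔴₆` (`Phi_transpose_mul_w6_mul`). Together with functoriality of `Φ`
(`Phi_mul`, the Cauchy–Binet formula) and `Φ(gᵀ) = Φ(g)ᵀ`, this gives
`Φ(g⁻ᵀ) = det(g)⁻¹ 𝔴₆ Φ(g) 𝔴₆` for invertible `g`. Since `J₄⁻¹ = -J₄` and `Φ` is even,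
`Φ(J₄⁻¹) = Φ(J₄) = -ε 𝔴₆`, and the factors `𝔴₆` cancel because `𝔴₆² = 1` and `𝔴₆` commutes
with `ε`.
-/

open Matrix

def pairIdx : Fin 6 → Fin 4 × Fin 4
  | 0 => (0, 1)
  | 1 => (0, 3)
  | 2 => (0, 2)
  | 3 => (1, 3)
  | 4 => (1, 2)
  | 5 => (2, 3)

def pairSign : Fin 6 → ℤ := fun α => if α = 3 then -1 else 1

/-- The matrix of the second exterior power `Λ²g` in the ordered basis
`(e₁∧e₂, e₁∧e₄, e₁∧e₃, −e₂∧e₄, e₂∧e₃, e₃∧e₄)`: its entries are signed `2×2` minors of `g`. -/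
def Phi {R : Type*} [CommRing R] (g : Matrix (Fin 4) (Fin 4) R) :
    Matrix (Fin 6) (Fin 6) R :=
  Matrix.of fun α β =>
    ((pairSign α * pairSign β : ℤ) : R) *
      (g (pairIdx α).1 (pairIdx β).1 * g (pairIdx α).2 (pairIdx β).2 -
        g (pairIdx α).1 (pairIdx β).2 * g (pairIdx α).2 (pairIdx β).1)

/-- The `6×6` antidiagonal permutation matrix. -/
def w6 (R : Type*) [CommRing R] : Matrix (Fin 6) (Fin 6) R :=
  Matrix.of fun i j => if (i : ℕ) + (j : ℕ) = 5 then 1 else 0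

/-- The standard `4×4` symplectic matrix `J₄ = [[0, 1₂], [−1₂, 0]]`. -/
def J4 (R : Type*) [CommRing R] : Matrix (Fin 4) (Fin 4) R :=
  !![0, 0, 1, 0; 0, 0, 0, 1; -1, 0, 0, 0; 0, -1, 0, 0]

/-- `ε = −diag(1₂, m₂, 1₂)` where `m₂ = [[0,1],[1,0]]`. -/
def epsMat (R : Type*) [CommRing R] : Matrix (Fin 6) (Fin 6) R :=
  - Matrix.of fun i j =>
      if (i = (2 : Fin 6) ∧ j = 3) ∨ (i = 3 ∧ j = 2) ∨ (i = j ∧ i ≠ 2 ∧ i ≠ 3) then 1 else 0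

section

variable {R : Type*} [CommRing R]

/-- A form of `ε` in which products and minors can be computed entry by entry. -/
lemma epsMat_eq : epsMat R =
    !![-1, 0, 0, 0, 0, 0; 0, -1, 0, 0, 0, 0; 0, 0, 0, -1, 0, 0;
       0, 0, -1, 0, 0, 0; 0, 0, 0, 0, -1, 0; 0, 0, 0, 0, 0, -1] := by
  ext i j
  fin_cases i <;> fin_cases j <;> simp [epsMat]

lemma w6_eq : w6 R =
    !![0, 0, 0, 0, 0, 1; 0, 0, 0, 0, 1, 0; 0, 0, 0, 1, 0, 0;
       0, 0, 1, 0, 0, 0; 0, 1, 0, 0, 0, 0; 1, 0, 0, 0, 0, 0] := by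
  ext i j
  fin_cases i <;> fin_cases j <;> simp [w6]

lemma epsMat_mul_self : epsMat R * epsMat R = 1 := by
  rw [epsMat_eq]
  ext i j
  fin_cases i <;> fin_cases j <;> simp [Matrix.mul_apply, Fin.sum_univ_succ]

lemma w6_mul_self : w6 R * w6 R = 1 := by
  rw [w6_eq]
  ext i j
  fin_cases i <;> fin_cases j <;> simp [Matrix.mul_apply, Fin.sum_univ_succ]

lemma epsMat_mul_w6 : epsMat R * w6 R = w6 R * epsMat R := by
  rw [w6_eq, epsMat_eq]
  ext i j
  fin_cases i <;> fin_cases j <;> simp [Matrix.mul_apply, Fin.sum_univ_succ]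

lemma det_epsMat : (epsMat R).det = -1 := by
  -- `-ε` is the permutation matrix of the transposition `(2 3)`.
  have h : epsMat R = -(Equiv.swap (2 : Fin 6) 3).permMatrix R := by
    rw [epsMat_eq]
    ext i j
    fin_cases i <;> fin_cases j <;>
      simp [Equiv.Perm.permMatrix, PEquiv.toMatrix_apply, Equiv.swap_apply_def]
  rw [h, Matrix.det_neg, Matrix.det_permutation, Equiv.Perm.sign_swap (by decide)]
  norm_num

lemma Phi_J4 : Phi (J4 R) = -(epsMat R * w6 R) := by
  rw [w6_eq, epsMat_eq]
  ext i j
  fin_cases i <;> fin_cases j <;>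
    simp [Phi, J4, pairIdx, pairSign]

lemma Phi_one : Phi (1 : Matrix (Fin 4) (Fin 4) R) = 1 := by
  ext i j
  fin_cases i <;> fin_cases j <;> simp [Phi, pairIdx, pairSign, Matrix.one_apply]

lemma Phi_neg (g : Matrix (Fin 4) (Fin 4) R) : Phi (-g) = Phi g := by
  ext i j
  simp [Phi]

lemma Phi_transpose (g : Matrix (Fin 4) (Fin 4) R) : Phi gᵀ = (Phi g)ᵀ := by
  ext i j
  simp only [Phi, Matrix.of_apply, Matrix.transpose_apply]
  push_cast
  ring

/-- The Cauchy–Binet formula for `2 × 2` minors of `4 × 4` matrices. -/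
lemma Phi_mul (g h : Matrix (Fin 4) (Fin 4) R) : Phi (g * h) = Phi g * Phi h := by
  ext α β
  simp only [Phi, Matrix.of_apply, Matrix.mul_apply, Fin.sum_univ_six, Fin.sum_univ_four]
  push_cast
  -- The identity holds for arbitrary rows of `g`, columns of `h` and signs, so only the summation
  -- index has to be made explicit.
  generalize (pairSign α : R) = s
  generalize (pairSign β : R) = t
  generalize (pairIdx α).1 = a
  generalize (pairIdx α).2 = b
  generalize (pairIdx β).1 = c
  generalize (pairIdx β).2 = d
  simp [pairIdx, pairSign]
  ring

/-- `Λ²g` scales the wedge pairing by `det g`. -/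
lemma Phi_transpose_mul_w6_mul (g : Matrix (Fin 4) (Fin 4) R) :
    (Phi g)ᵀ * w6 R * Phi g = g.det • w6 R := by
  have hw : ∀ (A B : Matrix (Fin 6) (Fin 6) R) (i j : Fin 6), (A * w6 R * B) i j =
      A i 0 * B 5 j + A i 1 * B 4 j + A i 2 * B 3 j + A i 3 * B 2 j + A i 4 * B 1 j
        + A i 5 * B 0 j := by
    intro A B i j
    rw [w6_eq]
    simp [Matrix.mul_apply, Fin.sum_univ_six]
    ring
  ext i j
  rw [hw, Matrix.smul_apply, w6_eq, Matrix.det_succ_row_zero]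
  simp only [Fin.sum_univ_four, Matrix.det_fin_three, Matrix.submatrix_apply]
  fin_cases i <;> fin_cases j <;>
    simp [Phi, pairIdx, pairSign, Fin.succAbove] <;> ring

lemma J4_inv : (J4 R)⁻¹ = -J4 R := by
  apply Matrix.inv_eq_right_inv
  ext i j
  fin_cases i <;> fin_cases j <;> simp [J4, Matrix.mul_apply, Fin.sum_univ_four]

/-- The contragredient of `Λ²` is its twist by `det⁻¹`, through the wedge pairing. -/
lemma Phi_inv_transpose (g : Matrix (Fin 4) (Fin 4) R) (hg : IsUnit g.det) :
    Phi (g⁻¹)ᵀ = Ring.inverse g.det • (w6 R * Phi g * w6 R) := by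
  have h1 : Phi (g⁻¹)ᵀ * (Phi g)ᵀ = 1 := by
    rw [← Phi_transpose, ← Phi_mul, ← Matrix.transpose_mul, Matrix.mul_nonsing_inv g hg,
      Matrix.transpose_one, Phi_one]
  have h2 : w6 R * Phi g = g.det • (Phi (g⁻¹)ᵀ * w6 R) := by
    rw [← Matrix.mul_smul, ← Phi_transpose_mul_w6_mul, ← Matrix.mul_assoc, ← Matrix.mul_assoc,
      h1, Matrix.one_mul]
  rw [h2, Matrix.smul_mul, Matrix.mul_assoc, w6_mul_self, Matrix.mul_one, smul_smul,
    Ring.inverse_mul_cancel _ hg, one_smul]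

end

theorem stmt_13 {R : Type*} [CommRing R] :
    -- (1)
    (epsMat R * epsMat R = 1 ∧ (epsMat R).det = -1 ∧
      epsMat R * w6 R = w6 R * epsMat R) ∧
    -- (2)
    (Phi (J4 R) = -(epsMat R * w6 R)) ∧
    -- (3)
    (∀ g : Matrix (Fin 4) (Fin 4) R, IsUnit g.det →
      Phi (J4 R * (g⁻¹)ᵀ * (J4 R)⁻¹) =
        Ring.inverse g.det • (epsMat R * Phi g * epsMat R)) := by
  refine ⟨⟨epsMat_mul_self, det_epsMat, epsMat_mul_w6⟩, Phi_J4, fun g hg => ?_⟩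
  rw [Phi_mul, Phi_mul, J4_inv, Phi_neg, Phi_J4, Phi_inv_transpose g hg, Matrix.mul_smul,
    Matrix.smul_mul]
  congr 1
  calc -(epsMat R * w6 R) * (w6 R * Phi g * w6 R) * -(epsMat R * w6 R)
      = epsMat R * (w6 R * w6 R) * Phi g * (w6 R * (epsMat R * w6 R)) := by noncomm_ring
    _ = epsMat R * Phi g * epsMat R := by
      rw [epsMat_mul_w6, ← Matrix.mul_assoc (w6 R) (w6 R) (epsMat R), w6_mul_self,
        Matrix.mul_one, Matrix.one_mul]
end

section
/- Let R be a commutative ring and J₄ = [[0, 1₂], [−1₂, 0]]. Define 𝒢₄(R) = (GL₄(R) × R^×) ⋊ {1, j} where j acts by j(g, μ)j^{−1} = (μ·g^{−T}, μ), and 𝒢₄'(R) = (GL₄(R) × R^×) ⋊ {1, c} where c acts by c(g, μ)c^{−1} = (μ·J₄ g^{−T} J₄^{−1}, μ). Then: (1) both of these conjugation rules define automorphisms of GL₄(R) × R^× whose squares are the identity, so the two semidirect products are well-defined groups; (2) the map 𝒢₄'(R) → 𝒢₄(R) given by (g, μ, 1) ↦ (g, μ, 1) and (g, μ, c) ↦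 (g·J₄, −μ, j) is a group isomorphism. -/
/-!
In `𝒢₄(R)` put `s = (J₄, −1)`. Then the two conjugation rules differ by the inner automorphism
of `s`, namely `cF x = s * jF x * s⁻¹` (`cF_eq`), and `s * jF s = 1` (`twist_mul_jF`) because
`J₄^{−T} = J₄` and `J₄² = −1`. Hence `(s, j)` has square one and acts on `GL₄(R) × R^×` as `c` does,
so it can play the role of `c`. Equivalently, `1 ↦ 1, c ↦ s` is a 1-cocycle `t` for the `j`-action
whose twist of that action is the `c`-action, and `(a, u) ↦ (a * t u, u)` is the isomorphism.
-/

open Matrix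

/-- `J₄` as a unit of the matrix ring (its inverse is `−J₄`). -/
def J4U (R : Type*) [CommRing R] : (Matrix (Fin 4) (Fin 4) R)ˣ where
  val := J4 R
  inv := -(J4 R)
  val_inv := by
    ext i j
    fin_cases i <;> fin_cases j <;>
      simp [J4, Matrix.mul_apply, Fin.sum_univ_four, Matrix.vecHead, Matrix.vecTail,
        Matrix.one_apply]
  inv_val := by
    ext i j
    fin_cases i <;> fin_cases j <;>
      simp [J4, Matrix.mul_apply, Fin.sum_univ_four, Matrix.vecHead, Matrix.vecTail,
        Matrix.one_apply]

/-- The inverse transpose `g^{-T}` of an invertible matrix, as a unit. -/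
def invTransposeUnit {R : Type*} [CommRing R] (g : (Matrix (Fin 4) (Fin 4) R)ˣ) :
    (Matrix (Fin 4) (Fin 4) R)ˣ where
  val := ((g⁻¹ : (Matrix (Fin 4) (Fin 4) R)ˣ) : Matrix (Fin 4) (Fin 4) R)ᵀ
  inv := ((g : Matrix (Fin 4) (Fin 4) R))ᵀ
  val_inv := by rw [← Matrix.transpose_mul, Units.mul_inv, Matrix.transpose_one]
  inv_val := by rw [← Matrix.transpose_mul, Units.inv_mul, Matrix.transpose_one]

/-- The group `GL₄(R) × R^×`. -/
abbrev PGrp (R : Type*) [CommRing R] := (Matrix (Fin 4) (Fin 4) R)ˣ × Rˣ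

/-- The conjugation rule `j(g, μ)j⁻¹ = (μ·g^{−T}, μ)`. -/
noncomputable def jF {R : Type*} [CommRing R] (x : PGrp R) : PGrp R :=
  (x.2 • invTransposeUnit x.1, x.2)

/-- The conjugation rule `c(g, μ)c⁻¹ = (μ·J₄ g^{−T} J₄^{−1}, μ)`. -/
noncomputable def cF {R : Type*} [CommRing R] (x : PGrp R) : PGrp R :=
  (x.2 • (J4U R * invTransposeUnit x.1 * (J4U R)⁻¹), x.2)

section Lemmas

variable {R : Type*} [CommRing R]

lemma J4_transpose : (J4 R)ᵀ = -(J4 R) := by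
  ext i j
  fin_cases i <;> fin_cases j <;> simp [J4, Matrix.vecHead, Matrix.vecTail]

lemma invTransposeUnit_J4U : invTransposeUnit (J4U R) = J4U R := by
  apply Units.ext
  show ((-(J4 R) : Matrix (Fin 4) (Fin 4) R))ᵀ = J4 R
  rw [Matrix.transpose_neg, J4_transpose, neg_neg]

lemma invTransposeUnit_inv (u : (Matrix (Fin 4) (Fin 4) R)ˣ) :
    invTransposeUnit u⁻¹ = (invTransposeUnit u)⁻¹ := by
  apply Units.ext
  rfl

lemma J4U_sq : J4U R * J4U R = -1 := by
  apply Units.ext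
  show J4 R * J4 R = -1
  ext i j
  fin_cases i <;> fin_cases j <;>
    simp [J4, Matrix.mul_apply, Fin.sum_univ_four, Matrix.vecHead, Matrix.vecTail,
      Matrix.one_apply]

lemma invTransposeUnit_mul (x y : (Matrix (Fin 4) (Fin 4) R)ˣ) :
    invTransposeUnit (x * y) = invTransposeUnit x * invTransposeUnit y := by
  apply Units.ext
  show (((x * y)⁻¹ : (Matrix (Fin 4) (Fin 4) R)ˣ) : Matrix (Fin 4) (Fin 4) R)ᵀ = _
  rw [_root_.mul_inv_rev, Units.val_mul, Matrix.transpose_mul]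
  rfl

lemma invTransposeUnit_smul (μ : Rˣ) (u : (Matrix (Fin 4) (Fin 4) R)ˣ) :
    invTransposeUnit (μ • u) = μ⁻¹ • invTransposeUnit u := by
  apply Units.ext
  rfl

lemma invTransposeUnit_invol (x : (Matrix (Fin 4) (Fin 4) R)ˣ) :
    invTransposeUnit (invTransposeUnit x) = x := by
  apply Units.ext
  rfl

lemma smul_unit_mul (μ ν : Rˣ) (a b : (Matrix (Fin 4) (Fin 4) R)ˣ) :
    (μ • a) * (ν • b) = (μ * ν) • (a * b) := by
  apply Units.ext
  show ((μ : R) • (a : Matrix (Fin 4) (Fin 4) R)) * ((ν : R) • (b : Matrix (Fin 4) (Fin 4) R)) = _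
  rw [smul_mul_smul_comm]
  rfl

lemma unit_mul_smul (μ : Rˣ) (a b : (Matrix (Fin 4) (Fin 4) R)ˣ) :
    a * (μ • b) = μ • (a * b) := by
  apply Units.ext
  show (a : Matrix (Fin 4) (Fin 4) R) * ((μ : R) • (b : Matrix (Fin 4) (Fin 4) R)) = _
  rw [mul_smul_comm]
  rfl

lemma smul_unit_mul' (μ : Rˣ) (a b : (Matrix (Fin 4) (Fin 4) R)ˣ) :
    (μ • a) * b = μ • (a * b) := by
  apply Units.ext
  show ((μ : R) • (a : Matrix (Fin 4) (Fin 4) R)) * (b : Matrix (Fin 4) (Fin 4) R) = _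
  rw [smul_mul_assoc]
  rfl

lemma jF_jF (x : PGrp R) : jF (jF x) = x := by
  show (x.2 • invTransposeUnit (x.2 • invTransposeUnit x.1), x.2) = x
  rw [invTransposeUnit_smul, invTransposeUnit_invol, smul_inv_smul]

lemma jF_mul (x y : PGrp R) : jF (x * y) = jF x * jF y := by
  show ((x.2 * y.2) • invTransposeUnit (x.1 * y.1), x.2 * y.2) =
    ((x.2 • invTransposeUnit x.1) * (y.2 • invTransposeUnit y.1), x.2 * y.2)
  rw [invTransposeUnit_mul, smul_unit_mul]

lemma cF_cF (x : PGrp R) : cF (cF x) = x := by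
  show (x.2 • (J4U R * invTransposeUnit (x.2 • (J4U R * invTransposeUnit x.1 * (J4U R)⁻¹)) *
      (J4U R)⁻¹), x.2) = x
  rw [invTransposeUnit_smul, invTransposeUnit_mul, invTransposeUnit_mul,
    invTransposeUnit_invol, invTransposeUnit_J4U, invTransposeUnit_inv, invTransposeUnit_J4U,
    unit_mul_smul, smul_unit_mul', smul_inv_smul]
  have h : J4U R * (J4U R * x.1 * (J4U R)⁻¹) * (J4U R)⁻¹ =
      (J4U R * J4U R) * x.1 * (J4U R * J4U R)⁻¹ := by group
  rw [h, J4U_sq]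
  simp

lemma cF_mul (x y : PGrp R) : cF (x * y) = cF x * cF y := by
  show ((x.2 * y.2) • (J4U R * invTransposeUnit (x.1 * y.1) * (J4U R)⁻¹), x.2 * y.2) =
    ((x.2 • (J4U R * invTransposeUnit x.1 * (J4U R)⁻¹)) *
      (y.2 • (J4U R * invTransposeUnit y.1 * (J4U R)⁻¹)), x.2 * y.2)
  rw [smul_unit_mul, invTransposeUnit_mul]
  have h : J4U R * (invTransposeUnit x.1 * invTransposeUnit y.1) * (J4U R)⁻¹ =
      (J4U R * invTransposeUnit x.1 * (J4U R)⁻¹) *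
        (J4U R * invTransposeUnit y.1 * (J4U R)⁻¹) := by group
  rw [h]

end Lemmas

/-- The rule `jF` as an automorphism of `GL₄(R) × R^×`. -/
noncomputable def jAut (R : Type*) [CommRing R] : MulAut (PGrp R) where
  toFun := jF
  invFun := jF
  left_inv := jF_jF
  right_inv := jF_jF
  map_mul' := jF_mul

/-- The rule `cF` as an automorphism of `GL₄(R) × R^×`. -/
noncomputable def cAut (R : Type*) [CommRing R] : MulAut (PGrp R) where
  toFun := cF
  invFun := cF
  left_inv := cF_cF
  right_inv := cF_cF
  map_mul' := cF_mul

lemma jAut_sq (R : Type*) [CommRing R] : jAut R * jAut R = 1 :=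
  MulEquiv.ext fun a => jF_jF a

lemma cAut_sq (R : Type*) [CommRing R] : cAut R * cAut R = 1 :=
  MulEquiv.ext fun a => cF_cF a

/-- The action of the order-2 group `{1, j}` on `GL₄(R) × R^×` defining `𝒢₄(R)`. -/
noncomputable def phiJ (R : Type*) [CommRing R] :
    Multiplicative (ZMod 2) →* MulAut (PGrp R) where
  toFun x := if x.toAdd = 0 then 1 else jAut R
  map_one' := by simp
  map_mul' := fun x y => by
    have h01 : ∀ u : ZMod 2, u = 0 ∨ u = 1 := by decide
    have h11 : (1 + 1 : ZMod 2) = 0 := by decide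
    have h10 : (1 : ZMod 2) ≠ 0 := by decide
    rcases h01 x.toAdd with hx | hx <;> rcases h01 y.toAdd with hy | hy <;>
      simp [toAdd_mul, hx, hy, h11, h10, jAut_sq R]

/-- The action of the order-2 group `{1, c}` on `GL₄(R) × R^×` defining `𝒢₄'(R)`. -/
noncomputable def phiC (R : Type*) [CommRing R] :
    Multiplicative (ZMod 2) →* MulAut (PGrp R) where
  toFun x := if x.toAdd = 0 then 1 else cAut R
  map_one' := by simp
  map_mul' := fun x y => by
    have h01 : ∀ u : ZMod 2, u = 0 ∨ u = 1 := by decide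
    have h11 : (1 + 1 : ZMod 2) = 0 := by decide
    have h10 : (1 : ZMod 2) ≠ 0 := by decide
    rcases h01 x.toAdd with hx | hx <;> rcases h01 y.toAdd with hy | hy <;>
      simp [toAdd_mul, hx, hy, h11, h10, cAut_sq R]

/-- The element `(J₄, −1)` of `GL₄(R) × R^×`, by which the rules for `j` and `c` differ. -/
def twist (R : Type*) [CommRing R] : PGrp R := (J4U R, -1)

lemma twist_mul_jF {R : Type*} [CommRing R] : twist R * jF (twist R) = 1 := by
  refine Prod.ext ?_ (by simp [twist, jF])
  show J4U R * ((-1 : Rˣ) • invTransposeUnit (J4U R)) = 1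
  rw [invTransposeUnit_J4U, unit_mul_smul, J4U_sq]
  apply Units.ext
  simp [Units.smul_def]

lemma cF_eq {R : Type*} [CommRing R] (x : PGrp R) :
    cF x = twist R * jF x * (twist R)⁻¹ := by
  refine Prod.ext ?_ ?_
  · show x.2 • (J4U R * invTransposeUnit x.1 * (J4U R)⁻¹) =
      J4U R * (x.2 • invTransposeUnit x.1) * (J4U R)⁻¹
    rw [unit_mul_smul, smul_unit_mul']
  · simp [twist, cF, jF]

/-- The 1-cocycle `1 ↦ 1`, `c ↦ (J₄, −1)` for the action `phiJ`. -/
def twistCocycle (R : Type*) [CommRing R] (u : Multiplicative (ZMod 2)) : PGrp R :=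
  if u.toAdd = 0 then 1 else twist R

lemma zmod_two_cases (u : Multiplicative (ZMod 2)) :
    u = 1 ∨ u = Multiplicative.ofAdd (1 : ZMod 2) := by
  revert u
  decide

@[simp] lemma twistCocycle_one {R : Type*} [CommRing R] : twistCocycle R 1 = 1 := by
  simp [twistCocycle]

@[simp] lemma twistCocycle_ofAdd {R : Type*} [CommRing R] :
    twistCocycle R (Multiplicative.ofAdd (1 : ZMod 2)) = twist R := by
  simp [twistCocycle]

lemma phiJ_ofAdd {R : Type*} [CommRing R] (x : PGrp R) :
    phiJ R (Multiplicative.ofAdd (1 : ZMod 2)) x = jF x := by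
  simp [phiJ, jAut]

lemma phiC_ofAdd {R : Type*} [CommRing R] (x : PGrp R) :
    phiC R (Multiplicative.ofAdd (1 : ZMod 2)) x = cF x := by
  simp [phiC, cAut]

lemma phiC_eq {R : Type*} [CommRing R] (u : Multiplicative (ZMod 2)) (x : PGrp R) :
    phiC R u x = twistCocycle R u * phiJ R u x * (twistCocycle R u)⁻¹ := by
  rcases zmod_two_cases u with rfl | rfl
  · simp
  · rw [phiC_ofAdd, phiJ_ofAdd, twistCocycle_ofAdd, cF_eq]

lemma twistCocycle_mul {R : Type*} [CommRing R] (u v : Multiplicative (ZMod 2)) :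
    twistCocycle R (u * v) = twistCocycle R u * phiJ R u (twistCocycle R v) := by
  rcases zmod_two_cases u with rfl | rfl
  · simp
  rcases zmod_two_cases v with rfl | rfl
  · simp
  · have h : Multiplicative.ofAdd (1 : ZMod 2) * Multiplicative.ofAdd (1 : ZMod 2) = 1 := by
      decide
    rw [h, phiJ_ofAdd, twistCocycle_ofAdd, twist_mul_jF, twistCocycle_one]

/-- The isomorphism `𝒢₄'(R) ≃ 𝒢₄(R)`, `(a, u) ↦ (a * t u, u)`, with `t` the cocycle
`twistCocycle`. -/
noncomputable def twistEquiv (R : Type*) [CommRing R] :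
    (PGrp R ⋊[phiC R] Multiplicative (ZMod 2)) ≃*
      (PGrp R ⋊[phiJ R] Multiplicative (ZMod 2)) where
  toFun x := ⟨x.left * twistCocycle R x.right, x.right⟩
  invFun y := ⟨y.left * (twistCocycle R y.right)⁻¹, y.right⟩
  left_inv x := SemidirectProduct.ext (mul_inv_cancel_right _ _) rfl
  right_inv y := SemidirectProduct.ext (inv_mul_cancel_right _ _) rfl
  map_mul' x y := by
    refine SemidirectProduct.ext ?_ rfl
    show x.left * phiC R x.right y.left * twistCocycle R (x.right * y.right) =
      x.left * twistCocycle R x.right * phiJ R x.right (y.left * twistCocycle R y.right)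
    rw [phiC_eq, twistCocycle_mul, map_mul]
    group

theorem stmt_15 {R : Type*} [CommRing R] :
    -- (1) both conjugation rules are automorphisms of `GL₄(R) × R^×` squaring to the identity
    ((∀ x y : PGrp R, jF (x * y) = jF x * jF y) ∧ Function.Bijective (jF (R := R)) ∧
      (∀ x : PGrp R, jF (jF x) = x)) ∧
    ((∀ x y : PGrp R, cF (x * y) = cF x * cF y) ∧ Function.Bijective (cF (R := R)) ∧
      (∀ x : PGrp R, cF (cF x) = x)) ∧
    -- (2) the map `(g, μ, 1) ↦ (g, μ, 1)`, `(g, μ, c) ↦ (g·J₄, −μ, j)` is a group isomorphism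
    ∃ Ψ : (PGrp R ⋊[phiC R] Multiplicative (ZMod 2)) ≃*
        (PGrp R ⋊[phiJ R] Multiplicative (ZMod 2)),
      (∀ a : PGrp R, Ψ ⟨a, 1⟩ = ⟨a, 1⟩) ∧
      (∀ a : PGrp R, Ψ ⟨a, Multiplicative.ofAdd (1 : ZMod 2)⟩ =
        ⟨(a.1 * J4U R, -a.2), Multiplicative.ofAdd (1 : ZMod 2)⟩) := by
  refine ⟨⟨jF_mul, Function.Involutive.bijective jF_jF, jF_jF⟩,
    ⟨cF_mul, Function.Involutive.bijective cF_cF, cF_cF⟩, twistEquiv R, fun a => ?_, fun a => ?_⟩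
  · exact SemidirectProduct.ext (by simp [twistEquiv]) rfl
  · refine SemidirectProduct.ext ?_ rfl
    show a * twistCocycle R (Multiplicative.ofAdd (1 : ZMod 2)) = (a.1 * J4U R, -a.2)
    rw [twistCocycle_ofAdd]
    exact Prod.ext rfl (mul_neg_one a.2)
end
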